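/- arXiv:2401.05372 — 4 statements merged into one kernel-verified Lean document; each statement's English description precedes it below -/
import Mathlib

section
/- Let τ = (1+√5)/2 and let W_a, W_b be nonempty compact subsets of ℝ satisfying W_a = τ⁻²·W_a ∪ τ⁻²·(W_a − τ) ∪ τ⁻²·(W_b + τ²) and W_b = τ⁻²·(W_a − 2τ) ∪ τ⁻²·W_b. Then both W_a and W_b have positive Lebesgue measure. -/
open MeasureTheory

/-!
Iterating `ρ̃` on one letter gives a patch of tiles in physical space whose left endpoints lie in
`ℤ[φ]`, and the conjugates of these endpoints, translated by a small vector, all lie in the windows.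
If the patch has total length `L`, there are at least `L / φ` endpoints, and since a nonzero
element of `ℤ[φ]` has norm at least `1` in absolute value, their conjugates are `1 / L`-separated.
Hence the `1 / (2 L)`-neighbourhood of the windows has measure at least `1 / φ`. Letting `L → ∞`,
compactness gives the union of the windows measure at least `1 / φ`, and each window contains an
affine copy of the other.
-/

section MeasureLowerBounds

open Filter Topology Metric

lemma sum_measure_ball_le_measure_cthickening {X : Type*} [PseudoMetricSpace X]
    [MeasurableSpace X] [OpensMeasurableSpace X] {μ : Measure X} {K : Set X} {ι : Type*}
    {s : Finset ι} {x : ι → X} {δ : ℝ} (hK : ∀ i ∈ s, x i ∈ K)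
    (hsep : (s : Set ι).Pairwise fun i j ↦ δ ≤ dist (x i) (x j)) :
    ∑ i ∈ s, μ (ball (x i) (δ / 2)) ≤ μ (cthickening (δ / 2) K) := by
  have hdisj : (s : Set ι).PairwiseDisjoint fun i ↦ ball (x i) (δ / 2) :=
    fun i hi j hj hij ↦ ball_disjoint_ball (by linarith [hsep hi hj hij])
  rw [← measure_biUnion_finset hdisj fun _ _ ↦ measurableSet_ball]
  exact measure_mono <| Set.iUnion₂_subset fun i hi y hy ↦
    mem_cthickening_of_dist_le y _ _ K (hK i hi) (mem_ball.1 hy).le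

lemma le_measure_of_isCompact_of_pairwise_le_dist {X : Type*} [MetricSpace X] [ProperSpace X]
    [MeasurableSpace X] [OpensMeasurableSpace X] {μ : Measure X} [IsFiniteMeasureOnCompacts μ]
    {K : Set X} (hK : IsCompact K) {κ ι : Type*} {l : Filter κ} [l.NeBot] {δ : κ → ℝ}
    (hδ : Tendsto δ l (𝓝 0)) {s : κ → Finset ι} {x : κ → ι → X} (hx : ∀ n, ∀ i ∈ s n, x n i ∈ K)
    (hsep : ∀ n, (s n : Set ι).Pairwise fun i j ↦ δ n ≤ dist (x n i) (x n j))
    {c : ENNReal} (hc : ∀ n, c ≤ ∑ i ∈ s n, μ (ball (x n i) (δ n / 2))) : c ≤ μ K := by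
  have hδ' : Tendsto (fun n ↦ δ n / 2) l (𝓝 0) := by simpa using hδ.div_const 2
  exact ge_of_tendsto' ((tendsto_measure_cthickening_of_isCompact hK).comp hδ') fun n ↦
    (hc n).trans (sum_measure_ball_le_measure_cthickening (hx n) (hsep n))

lemma volume_pos_of_mapsTo_mul_add {r t : ℝ} (hr : r ≠ 0) {A B : Set ℝ}
    (h : Set.MapsTo (fun x ↦ r * x + t) A B) (hA : 0 < volume A) : 0 < volume B := by
  have himage : volume ((fun x ↦ r * x + t) '' A) = ENNReal.ofReal |r| * volume A := by
    rw [← Set.image_image (· + t) (r * ·), Set.image_add_right, measure_preimage_add_right]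
    exact (Measure.addHaar_smul volume r A).trans (by simp)
  calc 0 < ENNReal.ofReal |r| * volume A :=
        ENNReal.mul_pos (ENNReal.ofReal_pos.2 (abs_pos.2 hr)).ne' hA.ne'
    _ ≤ volume B := himage ▸ measure_mono h.image_subset

end MeasureLowerBounds

section Substitutions

variable {α : Type*} {ρ : α → List α}

lemma exists_append_cons_of_flatMap_eq_append_cons {u v w : List α} {d : α}
    (h : u.flatMap ρ = v ++ d :: w) :
    ∃ v' c w' p s, u = v' ++ c :: w' ∧ v = v'.flatMap ρ ++ p ∧ ρ c = p ++ d :: s := by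
  induction u generalizing v with
  | nil => simp at h
  | cons c u ih =>
    rw [List.flatMap_cons, List.append_eq_append_iff] at h
    obtain ⟨q, rfl, hq⟩ | ⟨q, hq, hqw⟩ := h
    · obtain ⟨v', c', w', p, s, rfl, rfl, hs⟩ := ih hq
      exact ⟨c :: v', c', w', p, s, by simp, by simp, hs⟩
    · cases q with
      | nil =>
        obtain ⟨v', c', w', p, s, rfl, hp, hs⟩ := ih (v := []) hqw.symm
        exact ⟨c :: v', c', w', p, s, by simp, by simp_all, hs⟩
      | cons e q =>
        obtain ⟨rfl, -⟩ := List.cons_eq_cons.1 hqw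
        exact ⟨[], c, u, v, q, by simp, by simp, hq⟩

variable {A : Type*} [Semiring A] {ℓ : α → A} {β : A}

/-- The tile lengths `ℓ` are inflated by `β` under the substitution `ρ`, that is, they form a left
eigenvector of its incidence matrix. -/
def IsInflation (ρ : α → List α) (ℓ : α → A) (β : A) : Prop :=
  ∀ c, ((ρ c).map ℓ).sum = β * ℓ c

/-- The family of sets `W` is mapped into itself by the graph-directed iterated function system of
the substitution `ρ`: each occurrence of `d` in `ρ c`, after a prefix `p`, contributes a map from
`W c` to `W d`, namely multiplication by `β` followed by translation by the length of `p`. -/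
def IsInvariantFamily (ρ : α → List α) (ℓ : α → A) (β : A) (W : α → Set A) : Prop :=
  ∀ ⦃c p d s⦄, ρ c = p ++ d :: s → Set.MapsTo (fun x ↦ β * x + (p.map ℓ).sum) (W c) (W d)

lemma IsInflation.map {B : Type*} [Semiring B] (h : IsInflation ρ ℓ β) (f : A →+* B) :
    IsInflation ρ (f ∘ ℓ) (f β) := fun c ↦ by
  simpa [map_list_sum] using congrArg f (h c)

lemma IsInflation.sum_map_flatMap (h : IsInflation ρ ℓ β) (u : List α) :
    ((u.flatMap ρ).map ℓ).sum = β * (u.map ℓ).sum := by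
  induction u with
  | nil => simp
  | cons c u ih => simp [h c, ih, mul_add]

lemma IsInflation.sum_map_iterate (h : IsInflation ρ ℓ β) (u : List α) (n : ℕ) :
    (((List.flatMap ρ)^[n] u).map ℓ).sum = β ^ n * (u.map ℓ).sum := by
  induction n with
  | zero => simp
  | succ n ih => rw [Function.iterate_succ_apply', h.sum_map_flatMap, ih, pow_succ', mul_assoc]

lemma IsInvariantFamily.mem_of_iterate_eq_append_cons {W : α → Set A}
    (hW : IsInvariantFamily ρ ℓ β W) (h : IsInflation ρ ℓ β) {c : α} {x : A} (hx : x ∈ W c) (n : ℕ)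
    {v w : List α} {d : α} (hu : (List.flatMap ρ)^[n] [c] = v ++ d :: w) :
    β ^ n * x + (v.map ℓ).sum ∈ W d := by
  induction n generalizing v w d with
  | zero =>
    obtain ⟨rfl, rfl⟩ : v = [] ∧ d = c := by simp_all [List.singleton_eq_append_iff]
    simpa using hx
  | succ n ih =>
    rw [Function.iterate_succ_apply'] at hu
    obtain ⟨v', c', w', p, s, hu', rfl, hρ⟩ := exists_append_cons_of_flatMap_eq_append_cons hu
    rw [List.map_append, List.sum_append, h.sum_map_flatMap, ← add_assoc, pow_succ', mul_assoc,
      ← mul_add]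
    exact hW hρ (ih hu')

end Substitutions

section TileEndpoints

variable {α : Type*}

/-- The left endpoint of the `k`-th tile, counted from `0`, when tiles of lengths `ℓ` are laid out
from the origin in the order of the word `u`. -/
def tileEndpoint {M : Type*} [AddMonoid M] (ℓ : α → M) (u : List α) (k : ℕ) : M :=
  ((u.take k).map ℓ).sum

lemma map_tileEndpoint {M N F : Type*} [AddMonoid M] [AddMonoid N] [FunLike F M N]
    [AddMonoidHomClass F M N] (f : F) (ℓ : α → M) (u : List α) (k : ℕ) :
    f (tileEndpoint ℓ u k) = tileEndpoint (f ∘ ℓ) u k := by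
  simp [tileEndpoint, map_list_sum]

lemma tileEndpoint_length {M : Type*} [AddMonoid M] (ℓ : α → M) (u : List α) :
    tileEndpoint ℓ u u.length = (u.map ℓ).sum := by
  simp [tileEndpoint]

lemma tileEndpoint_nonneg {M : Type*} [AddMonoid M] [Preorder M] [AddLeftMono M] {ℓ : α → M}
    (hℓ : ∀ c, 0 ≤ ℓ c) (u : List α) (k : ℕ) : 0 ≤ tileEndpoint ℓ u k :=
  List.sum_nonneg (List.forall_mem_map.2 fun c _ ↦ hℓ c)

lemma tileEndpoint_lt_tileEndpoint {M : Type*} [AddCommMonoid M] [PartialOrder M]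
    [IsOrderedCancelAddMonoid M] {ℓ : α → M} (hℓ : ∀ c, 0 < ℓ c) {u : List α} {j k : ℕ}
    (hjk : j < k) (hk : k ≤ u.length) : tileEndpoint ℓ u j < tileEndpoint ℓ u k := by
  have hpos : 0 < (((u.take k).drop j).map ℓ).sum :=
    List.sum_pos _ (List.forall_mem_map.2 fun c _ ↦ hℓ c) (by simp; lia)
  have hsplit : u.take j ++ (u.take k).drop j = u.take k := by
    simpa [List.take_take, hjk.le] using List.take_append_drop j (u.take k)
  rw [tileEndpoint, tileEndpoint, ← hsplit, List.map_append, List.sum_append]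
  exact lt_add_of_pos_right _ hpos

variable {R : Type*} [CommRing R] {phys conj : R →+* ℝ} {ℓ : α → R}

lemma one_le_sum_mul_abs_conj_tileEndpoint_sub (hnorm : ∀ z ≠ 0, 1 ≤ |phys z| * |conj z|)
    (hℓ : ∀ c, 0 < phys (ℓ c)) {u : List α} {j k : ℕ} (hjk : j < k) (hk : k < u.length) :
    1 ≤ phys (u.map ℓ).sum * |conj (tileEndpoint ℓ u j) - conj (tileEndpoint ℓ u k)| := by
  have hnonneg : 0 ≤ phys (tileEndpoint ℓ u j) := by
    rw [map_tileEndpoint]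
    exact tileEndpoint_nonneg (fun c ↦ (hℓ c).le) u j
  have hlt : phys (tileEndpoint ℓ u j) < phys (tileEndpoint ℓ u k) := by
    rw [map_tileEndpoint, map_tileEndpoint]
    exact tileEndpoint_lt_tileEndpoint hℓ hjk hk.le
  have hlt_sum : phys (tileEndpoint ℓ u k) < phys (u.map ℓ).sum := by
    rw [← tileEndpoint_length, map_tileEndpoint, map_tileEndpoint]
    exact tileEndpoint_lt_tileEndpoint hℓ hk le_rfl
  have hdist : |phys (tileEndpoint ℓ u j - tileEndpoint ℓ u k)| ≤ phys (u.map ℓ).sum := by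
    rw [map_sub, abs_le]
    constructor <;> linarith
  have hne : tileEndpoint ℓ u j - tileEndpoint ℓ u k ≠ 0 :=
    sub_ne_zero.2 fun h ↦ hlt.ne (congrArg phys h)
  rw [← map_sub]
  exact (hnorm _ hne).trans (mul_le_mul_of_nonneg_right hdist (abs_nonneg _))

lemma pairwise_inv_le_dist_tileEndpoint (hnorm : ∀ z ≠ 0, 1 ≤ |phys z| * |conj z|)
    (hℓ : ∀ c, 0 < phys (ℓ c)) {u : List α} (hu : 0 < phys (u.map ℓ).sum) (t : ℝ) :
    (Finset.range u.length : Set ℕ).Pairwise fun j k ↦ (phys (u.map ℓ).sum)⁻¹ ≤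
      dist (t + conj (tileEndpoint ℓ u j)) (t + conj (tileEndpoint ℓ u k)) := by
  intro j hj k hk hjk
  rw [dist_add_left, Real.dist_eq, inv_le_iff_one_le_mul₀' hu]
  obtain h | h := lt_or_gt_of_ne hjk
  · exact one_le_sum_mul_abs_conj_tileEndpoint_sub hnorm hℓ h (by simpa using hk)
  · rw [abs_sub_comm]
    exact one_le_sum_mul_abs_conj_tileEndpoint_sub hnorm hℓ h (by simpa using hj)

end TileEndpoints

section Windows

open Filter Topology

variable {α R : Type*} [CommRing R] {phys conj : R →+* ℝ} {ρ : α → List α} {ℓ : α → R} {β : R}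
  {W : α → Set ℝ}

lemma IsInvariantFamily.add_conj_tileEndpoint_mem_iUnion
    (hW : IsInvariantFamily ρ (conj ∘ ℓ) (conj β) W) (hρ : IsInflation ρ ℓ β)
    {c : α} {x : ℝ} (hx : x ∈ W c) {n k : ℕ}
    (hk : k < ((List.flatMap ρ)^[n] [c]).length) :
    conj β ^ n * x + conj (tileEndpoint ℓ ((List.flatMap ρ)^[n] [c]) k) ∈ ⋃ d, W d := by
  set u := (List.flatMap ρ)^[n] [c] with hu
  have hsplit : u = u.take k ++ u[k] :: u.drop (k + 1) := by simp
  have hmem := hW.mem_of_iterate_eq_append_cons (hρ.map conj) hx n (hu.symm.trans hsplit)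
  rw [map_tileEndpoint]
  exact Set.mem_iUnion_of_mem _ hmem

theorem IsInvariantFamily.ofReal_inv_le_volume_iUnion (hnorm : ∀ z ≠ 0, 1 ≤ |phys z| * |conj z|)
    (hρ : IsInflation ρ ℓ β) (hβ : 1 < phys β) (hℓ : ∀ c, 0 < phys (ℓ c))
    {m : ℝ} (hm : ∀ c, phys (ℓ c) ≤ m)
    (hW : IsInvariantFamily ρ (conj ∘ ℓ) (conj β) W) (hcompact : IsCompact (⋃ c, W c))
    (hne : (⋃ c, W c).Nonempty) : ENNReal.ofReal m⁻¹ ≤ volume (⋃ c, W c) := by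
  obtain ⟨x, hx⟩ := hne
  obtain ⟨c, hx⟩ := Set.mem_iUnion.1 hx
  have hm0 : 0 < m := (hℓ c).trans_le (hm c)
  set u : ℕ → List α := fun n ↦ (List.flatMap ρ)^[n] [c]
  have hlength (n) : phys ((u n).map ℓ).sum = phys β ^ n * phys (ℓ c) := by
    simp [u, hρ.sum_map_iterate]
  have hpos (n) : 0 < phys ((u n).map ℓ).sum := by
    rw [hlength]
    have := hℓ c
    positivity
  have hcard (n) : phys ((u n).map ℓ).sum ≤ (u n).length * m := by
    simpa [map_list_sum] using
      List.sum_le_card_nsmul ((u n).map (phys ∘ ℓ)) m (by simp [hm])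
  have hlim : Tendsto (fun n ↦ (phys ((u n).map ℓ).sum)⁻¹) atTop (𝓝 0) := by
    simp only [hlength]
    exact tendsto_inv_atTop_zero.comp
      ((tendsto_pow_atTop_atTop_of_one_lt hβ).atTop_mul_const (hℓ c))
  refine le_measure_of_isCompact_of_pairwise_le_dist hcompact hlim
    (x := fun n k ↦ conj β ^ n * x + conj (tileEndpoint ℓ (u n) k))
    (fun n k hk ↦ hW.add_conj_tileEndpoint_mem_iUnion hρ hx (Finset.mem_range.1 hk))
    (fun n ↦ pairwise_inv_le_dist_tileEndpoint hnorm hℓ (hpos n) _) fun n ↦ ?_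
  simp only [Real.volume_ball, mul_div_cancel₀ _ (two_ne_zero' ℝ), Finset.sum_const,
    Finset.card_range, ← ENNReal.ofReal_nsmul]
  apply ENNReal.ofReal_le_ofReal
  rw [nsmul_eq_mul, ← div_eq_mul_inv, le_div_iff₀ (hpos n), inv_mul_le_iff₀ hm0, mul_comm m]
  exact hcard n

theorem IsInvariantFamily.volume_pos [Finite α] (hnorm : ∀ z ≠ 0, 1 ≤ |phys z| * |conj z|)
    (hρ : IsInflation ρ ℓ β) (hβ : 1 < phys β) (hℓ : ∀ c, 0 < phys (ℓ c))
    (hmem : ∀ c d, d ∈ ρ c) (hW : IsInvariantFamily ρ (conj ∘ ℓ) (conj β) W)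
    (hcompact : ∀ c, IsCompact (W c)) (hne : (⋃ c, W c).Nonempty) (c : α) :
    0 < volume (W c) := by
  obtain ⟨m, hm⟩ := (Set.finite_range fun c ↦ phys (ℓ c)).bddAbove
  replace hm (c) : phys (ℓ c) ≤ m := hm (Set.mem_range_self c)
  have hunion : volume (⋃ c, W c) ≠ 0 := ne_of_gt <| lt_of_lt_of_le
    (ENNReal.ofReal_pos.2 (inv_pos.2 ((hℓ c).trans_le (hm c))))
    (hW.ofReal_inv_le_volume_iUnion hnorm hρ hβ hℓ hm (isCompact_iUnion hcompact) hne)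
  obtain ⟨d, hd⟩ : ∃ d, 0 < volume (W d) := by
    simpa [measure_iUnion_null_iff, pos_iff_ne_zero] using hunion
  have hconj : conj β ≠ 0 := fun h ↦ by
    have hβ0 : β ≠ 0 := by rintro rfl; norm_num at hβ
    have := hnorm β hβ0
    norm_num [h] at this
  obtain ⟨p, s, hps⟩ := List.append_of_mem (hmem d c)
  exact volume_pos_of_mapsTo_mul_add hconj (hW hps) hd

end Windows

section GoldenIntegers

open scoped goldenRatio
open QuadraticAlgebra (omega)

lemma intCast_add_intCast_mul_irrational_ne_zero {x : ℝ} (hx : Irrational x) {m n : ℤ}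
    (h : m ≠ 0 ∨ n ≠ 0) : (m : ℝ) + n * x ≠ 0 := by
  obtain rfl | hn := eq_or_ne n 0
  · simpa using h
  · exact ((hx.intCast_mul hn).intCast_add m).ne_zero

/-- The ring `ℤ[φ]` of golden integers, with `omega` in the role of the golden ratio. -/
abbrev GoldenInteger : Type := QuadraticAlgebra ℤ 1 1

namespace GoldenInteger

/-- The embedding of `ℤ[φ]` in physical space, sending `omega` to `φ`. -/
noncomputable def phys : GoldenInteger →ₐ[ℤ] ℝ :=
  QuadraticAlgebra.lift ⟨φ, by linear_combination Real.goldenRatio_sq⟩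

/-- The conjugate embedding of `ℤ[φ]` in internal space, sending `omega` to `ψ`. -/
noncomputable def conj : GoldenInteger →ₐ[ℤ] ℝ :=
  QuadraticAlgebra.lift ⟨ψ, by linear_combination Real.goldenConj_sq⟩

lemma phys_apply (z : GoldenInteger) : phys z = z.re + z.im * φ := by simp [phys]

lemma conj_apply (z : GoldenInteger) : conj z = z.re + z.im * ψ := by simp [conj]

@[simp] lemma phys_omega : phys omega = φ := by simp [phys_apply]

@[simp] lemma conj_omega : conj omega = ψ := by simp [conj_apply]

lemma omega_sq : (omega : GoldenInteger) ^ 2 = omega + 1 := by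
  rw [sq, QuadraticAlgebra.omega_mul_omega_eq_add, one_smul, one_smul, add_comm]

lemma phys_mul_conj (z : GoldenInteger) : phys z * conj z = z.norm := by
  rw [phys_apply, conj_apply, QuadraticAlgebra.norm_def]
  push_cast
  linear_combination (z.re * z.im : ℝ) * Real.goldenRatio_add_goldenConj +
    (z.im : ℝ) ^ 2 * Real.goldenRatio_mul_goldenConj

lemma one_le_abs_phys_mul_abs_conj {z : GoldenInteger} (hz : z ≠ 0) :
    1 ≤ |phys z| * |conj z| := by
  have hcoord : z.re ≠ 0 ∨ z.im ≠ 0 := by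
    contrapose! hz
    exact QuadraticAlgebra.ext hz.1 hz.2
  have hprod : phys z * conj z ≠ 0 := by
    rw [phys_apply, conj_apply]
    exact mul_ne_zero
      (intCast_add_intCast_mul_irrational_ne_zero Real.goldenRatio_irrational hcoord)
      (intCast_add_intCast_mul_irrational_ne_zero Real.goldenConj_irrational hcoord)
  rw [← abs_mul]
  rw [phys_mul_conj] at hprod ⊢
  exact_mod_cast Int.one_le_abs (Int.cast_ne_zero.1 hprod)

end GoldenInteger

end GoldenIntegers

section RhoTilde

open scoped goldenRatio
open QuadraticAlgebra (omega)

/-- The alphabet of the substitution `ρ̃`. -/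
inductive Letter
  | a
  | b

instance : Finite Letter :=
  .of_surjective (fun x : Bool ↦ cond x Letter.a .b) (by rintro (_ | _) <;> simp)

/-- The substitution `ρ̃`, given by `a ↦ aab` and `b ↦ ba`. -/
def rhoTilde : Letter → List Letter
  | .a => [.a, .a, .b]
  | .b => [.b, .a]

/-- The natural tile lengths of `ρ̃`, namely `φ` for `a` and `1` for `b`. -/
def rhoTildeLength : Letter → GoldenInteger
  | .a => omega
  | .b => 1

/-- The pair `(Wa, Wb)` as a family indexed by the letters. -/
def windowFamily (Wa Wb : Set ℝ) : Letter → Set ℝ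
  | .a => Wa
  | .b => Wb

lemma mem_rhoTilde (c d : Letter) : d ∈ rhoTilde c := by
  cases c <;> cases d <;> simp [rhoTilde]

lemma isInflation_rhoTilde : IsInflation rhoTilde rhoTildeLength (omega ^ 2) := by
  rintro (_ | _) <;>
    simp only [rhoTilde, rhoTildeLength, List.map_cons, List.map_nil, List.sum_cons, List.sum_nil]
  · linear_combination -(omega + 1) * GoldenInteger.omega_sq
  · linear_combination -GoldenInteger.omega_sq

lemma phys_rhoTildeLength_pos (c : Letter) : 0 < GoldenInteger.phys (rhoTildeLength c) := by
  cases c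
  · rw [rhoTildeLength, GoldenInteger.phys_omega]
    exact Real.goldenRatio_pos
  · simp [rhoTildeLength]

lemma isInvariantFamily_rhoTilde {A : Type*} [Semiring A] {ℓ : Letter → A} {β : A}
    {W : Letter → Set A} (haa₀ : Set.MapsTo (fun x ↦ β * x) (W .a) (W .a))
    (haa₁ : Set.MapsTo (fun x ↦ β * x + ℓ .a) (W .a) (W .a))
    (hab : Set.MapsTo (fun x ↦ β * x + 2 * ℓ .a) (W .a) (W .b))
    (hba : Set.MapsTo (fun x ↦ β * x + ℓ .b) (W .b) (W .a))
    (hbb : Set.MapsTo (fun x ↦ β * x) (W .b) (W .b)) : IsInvariantFamily rhoTilde ℓ β W := by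
  rintro (_ | _) p d s hps
  · obtain ⟨rfl, rfl⟩ | ⟨rfl, rfl⟩ | ⟨rfl, rfl⟩ :
        p = [] ∧ d = .a ∨ p = [.a] ∧ d = .a ∨ p = [.a, .a] ∧ d = .b := by
      simp only [rhoTilde, List.cons_eq_append_iff] at hps
      aesop
    · simpa using haa₀
    · simpa using haa₁
    · simpa [two_mul] using hab
  · obtain ⟨rfl, rfl⟩ | ⟨rfl, rfl⟩ : p = [] ∧ d = .b ∨ p = [.b] ∧ d = .a := by
      simp only [rhoTilde, List.cons_eq_append_iff] at hps
      aesop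
    · simpa using hbb
    · simpa using hba

lemma isInvariantFamily_windowFamily {Wa Wb : Set ℝ}
    (ha : (fun x : ℝ ↦ (φ ^ 2)⁻¹ * x) '' Wa ∪ (fun x : ℝ ↦ (φ ^ 2)⁻¹ * (x - φ)) '' Wa ∪
      (fun x : ℝ ↦ (φ ^ 2)⁻¹ * (x + φ ^ 2)) '' Wb ⊆ Wa)
    (hb : (fun x : ℝ ↦ (φ ^ 2)⁻¹ * (x - 2 * φ)) '' Wa ∪
      (fun x : ℝ ↦ (φ ^ 2)⁻¹ * x) '' Wb ⊆ Wb) :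
    IsInvariantFamily rhoTilde (GoldenInteger.conj ∘ rhoTildeLength)
      (GoldenInteger.conj (omega ^ 2)) (windowFamily Wa Wb) := by
  have hmul : φ * ψ = -1 := Real.goldenRatio_mul_goldenConj
  have hinv : (φ ^ 2)⁻¹ = ψ ^ 2 := by rw [← inv_pow, Real.inv_goldenRatio, neg_sq]
  have hβ : GoldenInteger.conj (omega ^ 2) = ψ ^ 2 := by rw [map_pow, GoldenInteger.conj_omega]
  have hℓa : (GoldenInteger.conj ∘ rhoTildeLength) .a = ψ := GoldenInteger.conj_omega
  have hℓb : (GoldenInteger.conj ∘ rhoTildeLength) .b = 1 := map_one _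
  simp only [Set.union_subset_iff, ← Set.mapsTo_iff_image_subset, hinv] at ha hb
  obtain ⟨⟨haa₀, haa₁⟩, hba⟩ := ha
  obtain ⟨hab, hbb⟩ := hb
  apply isInvariantFamily_rhoTilde <;> simp only [hβ, hℓa, hℓb]
  · exact haa₀
  · exact haa₁.congr fun x _ ↦ by linear_combination -ψ * hmul
  · exact hab.congr fun x _ ↦ by linear_combination -2 * ψ * hmul
  · exact hba.congr fun x _ ↦ by linear_combination (φ * ψ - 1) * hmul
  · exact hbb

theorem rho_tilde_windows_pos_measure_general (τ : ℝ) (hτ : τ = (1 + Real.sqrt 5) / 2)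
    (Wa Wb : Set ℝ) (hWa : Wa.Nonempty) (hca : IsCompact Wa) (hcb : IsCompact Wb)
    (h1 : (fun x : ℝ => (τ ^ 2)⁻¹ * x) '' Wa ∪
      (fun x : ℝ => (τ ^ 2)⁻¹ * (x - τ)) '' Wa ∪
      (fun x : ℝ => (τ ^ 2)⁻¹ * (x + τ ^ 2)) '' Wb ⊆ Wa)
    (h2 : (fun x : ℝ => (τ ^ 2)⁻¹ * (x - 2 * τ)) '' Wa ∪
      (fun x : ℝ => (τ ^ 2)⁻¹ * x) '' Wb ⊆ Wb) :
    0 < volume Wa ∧ 0 < volume Wb := by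
  obtain rfl : τ = φ := hτ
  have hβ : 1 < GoldenInteger.phys (omega ^ 2) := by
    rw [map_pow, GoldenInteger.phys_omega]
    exact one_lt_pow₀ Real.one_lt_goldenRatio two_ne_zero
  have hpos := (isInvariantFamily_windowFamily h1 h2).volume_pos
    (phys := GoldenInteger.phys) (conj := GoldenInteger.conj)
    (fun z ↦ GoldenInteger.one_le_abs_phys_mul_abs_conj)
    isInflation_rhoTilde hβ phys_rhoTildeLength_pos mem_rhoTilde
    (by rintro (_ | _) <;> assumption)
    (hWa.mono (Set.subset_iUnion (windowFamily Wa Wb) .a))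
  exact ⟨hpos .a, hpos .b⟩

end RhoTilde

/-- The windows of the substitution ρ̃ = (a ↦ aab, b ↦ ba) have positive
Lebesgue measure. -/
theorem rho_tilde_windows_pos_measure (τ : ℝ) (hτ : τ = (1 + Real.sqrt 5) / 2)
    (Wa Wb : Set ℝ) (hWa : Wa.Nonempty) (hWb : Wb.Nonempty)
    (hca : IsCompact Wa) (hcb : IsCompact Wb)
    (h1 : Wa = (fun x : ℝ => (τ ^ 2)⁻¹ * x) '' Wa ∪
               (fun x : ℝ => (τ ^ 2)⁻¹ * (x - τ)) '' Wa ∪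
               (fun x : ℝ => (τ ^ 2)⁻¹ * (x + τ ^ 2)) '' Wb)
    (h2 : Wb = (fun x : ℝ => (τ ^ 2)⁻¹ * (x - 2 * τ)) '' Wa ∪
               (fun x : ℝ => (τ ^ 2)⁻¹ * x) '' Wb) :
    0 < volume Wa ∧ 0 < volume Wb := by
  exact rho_tilde_windows_pos_measure_general τ hτ Wa Wb hWa hca hcb
    h1.superset h2.superset
end

section
/- Let τ = (1+√5)/2 and let W_a, W_b be nonempty compact subsets of ℝ satisfying W_a = τ⁻²·W_a ∪ τ⁻²·(W_a − τ) ∪ τ⁻²·(W_b + τ²) and W_b = τ⁻²·(W_a − 2τ) ∪ τ⁻²·W_b. Then the topological boundaries ∂W_a and ∂W_b have Lebesgue measure zero. -/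
open MeasureTheory

/-!
Let `c` be the expansion and `d` the dimension. The inflated frontier of a window is covered by
translated frontiers of windows. The vector `(τ, 1)` is a positive left eigenvector of the
substitution matrix for the eigenvalue `τ ^ 2 = c ^ d`, which forces these tiles to overlap in null
sets. Hence the magnification of a frontier by `c ^ n` meets a ball of radius `1` in a number of
tiles of positive measure bounded independently of `n`. The tiles are translates of finitely many
compact sets with empty interior, so every such ball contains a hole of fixed size: the frontiers
are porous at all scales `c ^ (-n)` and have no Lebesgue density point.
-/

section Porosity

open Filter Metric Topology
open scoped Finset Matrix Pointwise

section Topology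

lemma frontier_biUnion_finset_subset {X κ : Type*} [TopologicalSpace X] (s : Finset κ)
    (S : κ → Set X) : frontier (⋃ k ∈ s, S k) ⊆ ⋃ k ∈ s, frontier (S k) := by
  classical
  induction s using Finset.induction_on with
  | empty => simp
  | insert k s _ ih =>
    simp only [Finset.set_biUnion_insert]
    exact (frontier_union_subset _ _).trans <|
      Set.union_subset_union Set.inter_subset_left (Set.inter_subset_right.trans ih)

lemma frontier_vadd_set {X E : Type*} [TopologicalSpace X] [AddGroup E] [AddAction E X]
    [ContinuousConstVAdd E X] (t : E) (S : Set X) : frontier (t +ᵥ S) = t +ᵥ frontier S :=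
  ((Homeomorph.vadd t).image_frontier S).symm

lemma frontier_smul_set₀ {X k : Type*} [TopologicalSpace X] [GroupWithZero k] [MulAction k X]
    [ContinuousConstSMul k X] {c : k} (hc : c ≠ 0) (S : Set X) :
    frontier (c • S) = c • frontier S :=
  ((Homeomorph.smulOfNeZero c hc).image_frontier S).symm

end Topology

section UniformlyNowhereDense

variable {X κ : Type*} [PseudoMetricSpace X]

/-- A family of sets is uniformly nowhere dense if every ball of radius `r` contains a ball
avoiding a given member of the family, of any small enough radius, the bound depending neither on
the member nor on the centre. -/
def UniformlyNowhereDense (S : κ → Set X) : Prop :=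
  ∀ r > 0, ∀ᶠ s in 𝓝[>] 0, ∀ k x, ∃ y, ball y s ⊆ ball x r \ S k

lemma uniformlyNowhereDense_of_isCompact [Finite κ] {K : κ → Set X} (hK : ∀ k, IsCompact (K k))
    (hKc : ∀ k, IsClosed (K k)) (hKi : ∀ k, interior (K k) = ∅) : UniformlyNowhereDense K := by
  refine fun r hr ↦ eventually_all.2 fun k ↦ ?_
  have holes_near : ∀ᶠ s in 𝓝 (0 : ℝ), ∀ x ∈ K k, ∃ y, ball y s ⊆ ball x (r / 2) \ K k := by
    refine (hK k).eventually_forall_of_forall_eventually fun z _ ↦ ?_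
    obtain ⟨y, hyK, hy⟩ := (interior_eq_empty_iff_dense_compl.1 (hKi k)).exists_mem_open
      (isOpen_ball (x := z) (ε := r / 4)) ⟨z, mem_ball_self (by positivity)⟩
    obtain ⟨s, hs, hsub⟩ := isOpen_iff.1 (isOpen_ball.sdiff (hKc k)) y ⟨hy, hyK⟩
    filter_upwards [prod_mem_nhds (gt_mem_nhds hs) (ball_mem_nhds z (by positivity : 0 < r / 4))]
      with w hw
    refine ⟨y, (ball_subset_ball hw.1.le).trans (hsub.trans (Set.sdiff_subset_sdiff_left ?_))⟩
    exact ball_subset_ball' (by linarith [mem_ball'.1 hw.2])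
  filter_upwards [holes_near.filter_mono nhdsWithin_le_nhds,
    Ioo_mem_nhdsGT (by positivity : 0 < r / 2)] with s hs hsr x
  by_cases hx : Disjoint (ball x (r / 2)) (K k)
  · exact ⟨x, Set.subset_sdiff.2 ⟨ball_subset_ball (by linarith [hsr.2]),
      hx.mono_left (ball_subset_ball hsr.2.le)⟩⟩
  · obtain ⟨z, hzx, hzK⟩ := Set.not_disjoint_iff.1 hx
    obtain ⟨y, hy⟩ := hs z hzK
    exact ⟨y, hy.trans (Set.sdiff_subset_sdiff_left (ball_subset_ball' (by
      linarith [mem_ball.1 hzx])))⟩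

namespace UniformlyNowhereDense

lemma vadd {E : Type*} [AddGroup E] [AddAction E X] [IsIsometricVAdd E X] {S : κ → Set X}
    (hS : UniformlyNowhereDense S) : UniformlyNowhereDense fun p : κ × E ↦ p.2 +ᵥ S p.1 := by
  intro r hr
  filter_upwards [hS r hr] with s hs p x
  obtain ⟨y, hy⟩ := hs p.1 (-p.2 +ᵥ x)
  refine ⟨p.2 +ᵥ y, ?_⟩
  simpa only [vadd_ball, Set.vadd_set_sdiff, vadd_neg_vadd] using Set.vadd_set_mono (a := p.2) hy

lemma biUnion_finset {S : κ → Set X} (hS : UniformlyNowhereDense S) (N : ℕ) :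
    UniformlyNowhereDense fun F : {F : Finset κ // #F ≤ N} ↦ ⋃ k ∈ F.1, S k := by
  classical
  induction N with
  | zero =>
    intro r hr
    filter_upwards [Ioo_mem_nhdsGT hr] with s hsr F x
    exact ⟨x, by simpa [Finset.card_eq_zero.1 (Nat.le_zero.1 F.2)] using ball_subset_ball hsr.2.le⟩
  | succ N ih =>
    intro r hr
    obtain ⟨s₁, hs₁, hs₁_pos⟩ := ((hS r hr).and self_mem_nhdsWithin).exists
    filter_upwards [ih s₁ hs₁_pos, ih r hr] with s hs hsr F x
    obtain hF | ⟨k, hk⟩ := F.1.eq_empty_or_nonempty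
    · exact hsr ⟨F.1, by simp [hF]⟩ x
    · obtain ⟨z, hz⟩ := hs₁ k x
      obtain ⟨y, hy⟩ := hs ⟨F.1.erase k, by have := F.2; grind⟩ z
      refine ⟨y, fun w hw ↦ ⟨(hz (hy hw).1).1, ?_⟩⟩
      rw [← Finset.insert_erase hk, Finset.set_biUnion_insert]
      exact fun h ↦ h.elim (hz (hy hw).1).2 (hy hw).2

end UniformlyNowhereDense

end UniformlyNowhereDense

section Measure

lemma sum_measureReal_inter_le {α κ : Type*} [MeasurableSpace α] {μ : Measure α} {s : Finset κ}
    {P : κ → Set α} {S J : Set α} (hP : ∀ k ∈ s, μ (P k) ≠ ⊤) (hS : S ⊆ ⋃ k ∈ s, P k)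
    (hsum : ∑ k ∈ s, μ.real (P k) ≤ μ.real S) (hJ : MeasurableSet J) :
    ∑ k ∈ s, μ.real (P k ∩ J) ≤ μ.real (S ∩ J) := by
  have hfin : μ (⋃ k ∈ s, P k) ≠ ⊤ :=
    (measure_biUnion_lt_top s.finite_toSet fun k hk ↦ (hP k hk).lt_top).ne
  have split_pieces : ∑ k ∈ s, μ.real (P k ∩ J) + ∑ k ∈ s, μ.real (P k \ J)
      = ∑ k ∈ s, μ.real (P k) := by
    rw [← Finset.sum_add_distrib]
    exact Finset.sum_congr rfl fun k hk ↦ measureReal_inter_add_sdiff hJ (hP k hk)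
  have split_union : μ.real (S ∩ J) + μ.real (S \ J) = μ.real S :=
    measureReal_inter_add_sdiff hJ (measure_ne_top_of_subset hS hfin)
  have outside : μ.real (S \ J) ≤ ∑ k ∈ s, μ.real (P k \ J) := by
    refine (measureReal_mono ?_ ?_).trans (measureReal_biUnion_finset_le s fun k ↦ P k \ J)
    · simpa only [Set.iUnion_sdiff] using Set.sdiff_subset_sdiff_left (t := J) hS
    · exact measure_ne_top_of_subset (Set.iUnion₂_mono fun k _ ↦ Set.sdiff_subset) hfin
  linarith

variable {E : Type*} [NormedAddCommGroup E] [NormedSpace ℝ E] [FiniteDimensional ℝ E]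
  [MeasurableSpace E] [BorelSpace E] (μ : Measure E) [μ.IsAddHaarMeasure]

lemma addHaar_real_smul_of_nonneg {c : ℝ} (hc : 0 ≤ c) (S : Set E) :
    μ.real (c • S) = c ^ Module.finrank ℝ E * μ.real S := by
  rw [measureReal_def, Measure.addHaar_smul_of_nonneg μ hc, ENNReal.toReal_mul,
    ENNReal.toReal_ofReal (by positivity), measureReal_def]

lemma addHaar_eq_zero_of_porous {S : Set E} {r : ℕ → ℝ} (hr : Tendsto r atTop (𝓝[>] 0)) {s : ℝ}
    (hs : 0 < s)
    (hS : ∀ n x, ∃ y, ball y (r n * s) ⊆ closedBall x (r n) ∧ μ (S ∩ ball y (r n * s)) = 0) :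
    μ S = 0 := by
  by_contra h
  have : (ae (μ.restrict S)).NeBot := ae_neBot.2 (Measure.restrict_eq_zero.not.2 h)
  obtain ⟨x, hx⟩ := (Besicovitch.ae_tendsto_measure_inter_div μ S).exists
  set θ := μ (ball 0 s) / μ (closedBall 0 1)
  have ratio_le : ∀ᶠ n in atTop,
      μ (S ∩ closedBall x (r n)) / μ (closedBall x (r n)) + θ ≤ 1 := by
    filter_upwards [hr self_mem_nhdsWithin] with n hn
    obtain ⟨y, hyx, hyS⟩ := hS n x
    have hole_ratio : θ = μ (ball y (r n * s)) / μ (closedBall x (r n)) := by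
      have hball := Measure.addHaar_closedBall_mul_of_pos μ x hn 1
      rw [mul_one] at hball
      rw [Measure.addHaar_ball_mul_of_pos μ y hn, hball,
        ENNReal.mul_div_mul_left _ _ (by simpa using pow_pos hn _) ENNReal.ofReal_ne_top]
    rw [hole_ratio, ENNReal.div_add_div_same]
    refine ENNReal.div_le_of_le_mul ?_
    rw [one_mul, ← measure_sdiff_add_inter (closedBall x (r n)) measurableSet_ball,
      Set.inter_eq_right.2 hyx]
    gcongr ?_ + _
    rw [← measure_sdiff_add_inter (S ∩ _) (measurableSet_ball (x := y) (ε := r n * s)),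
      measure_mono_null (Set.inter_subset_inter_left _ Set.inter_subset_left) hyS, add_zero]
    gcongr
    exact Set.inter_subset_right
  have hθ : 0 < θ := ENNReal.div_pos (measure_ball_pos μ 0 hs).ne' measure_closedBall_lt_top.ne
  exact (ENNReal.lt_add_right ENNReal.one_ne_top hθ.ne').not_ge
    (le_of_tendsto ((hx.comp hr).add_const θ) ratio_le)

lemma exists_forall_card_le_of_sum_measureReal_inter_le {ι : Type*} [Finite ι] {A : ι → Set E}
    (hA : ∀ i, Bornology.IsBounded (A i)) (R : ℝ) :
    ∃ N : ℕ, ∀ s : Finset (ι × E),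
      (∀ x r, ∑ p ∈ s, μ.real ((p.2 +ᵥ A p.1) ∩ closedBall x r) ≤ μ.real (closedBall x r)) →
      ∀ x, #{p ∈ s | μ ((p.2 +ᵥ A p.1) ∩ ball x R) ≠ 0} ≤ N := by
  obtain ⟨m, hm, hm_pos⟩ : ∃ m, (∀ i, μ (A i) ≠ 0 → m ≤ μ.real (A i)) ∧ 0 < m := by
    refine Eventually.exists (f := 𝓝[>] (0 : ℝ)) (.and ?_ self_mem_nhdsWithin)
    refine eventually_all.2 fun i ↦ eventually_imp_distrib_left.2 fun hi ↦ ?_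
    exact (ge_mem_nhds (ENNReal.toReal_pos hi (hA i).measure_lt_top.ne)).filter_mono
      nhdsWithin_le_nhds
  obtain ⟨D, hD⟩ := (Bornology.isBounded_iUnion.2 hA).subset_closedBall 0
  set ρ := R + 2 * D
  obtain ⟨N, hN⟩ := exists_nat_ge (μ.real (closedBall (0 : E) ρ) / m)
  refine ⟨N, fun s hs x ↦ ?_⟩
  set F := {p ∈ s | μ ((p.2 +ᵥ A p.1) ∩ ball x R) ≠ 0}
  have le_tile (p : ι × E) (hp : p ∈ F) : m ≤ μ.real ((p.2 +ᵥ A p.1) ∩ closedBall x ρ) := by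
    have hpR := (Finset.mem_filter.1 hp).2
    have tile_subset : p.2 +ᵥ A p.1 ⊆ closedBall x ρ := by
      obtain ⟨_, ⟨a, ha, rfl⟩, hax : dist (p.2 +ᵥ a) x < R⟩ := nonempty_of_measure_ne_zero hpR
      rintro _ ⟨b, hb, rfl⟩
      have ha₀ : dist a 0 ≤ D := hD (Set.mem_iUnion_of_mem _ ha)
      have hb₀ : dist b 0 ≤ D := hD (Set.mem_iUnion_of_mem _ hb)
      have hba : dist (p.2 +ᵥ b) (p.2 +ᵥ a) = dist b a := dist_vadd_cancel_left p.2 b a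
      change dist (p.2 +ᵥ b) x ≤ ρ
      linarith [dist_triangle (p.2 +ᵥ b) (p.2 +ᵥ a) x, dist_triangle_right b a 0]
    rw [Set.inter_eq_left.2 tile_subset, measureReal_def, measure_vadd]
    refine hm p.1 fun h ↦ hpR (measure_mono_null Set.inter_subset_left ?_)
    rwa [measure_vadd]
  have card_mul_le : #F * m ≤ N * m := calc
    #F * m ≤ ∑ p ∈ F, μ.real ((p.2 +ᵥ A p.1) ∩ closedBall x ρ) := by
      simpa using F.card_nsmul_le_sum _ m le_tile
    _ ≤ ∑ p ∈ s, μ.real ((p.2 +ᵥ A p.1) ∩ closedBall x ρ) :=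
      Finset.sum_le_sum_of_subset_of_nonneg (Finset.filter_subset _ _)
        fun _ _ _ ↦ measureReal_nonneg
    _ ≤ μ.real (closedBall x ρ) := hs x ρ
    _ = μ.real (closedBall 0 ρ) := Measure.addHaar_real_closedBall_center μ x ρ
    _ ≤ N * m := (div_le_iff₀ hm_pos).1 hN
  exact_mod_cast le_of_mul_le_mul_right card_mul_le hm_pos

end Measure

section Perron

lemma mulVec_eq_smul_of_smul_le_mulVec {ι : Type*} [Fintype ι] {M : Matrix ι ι ℝ} {v m : ι → ℝ}
    {r : ℝ} (hv : ∀ i, 0 < v i) (hvM : v ᵥ* M ≤ r • v) (hm : 0 ≤ m) (hMm : r • m ≤ M *ᵥ m) :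
    M *ᵥ m = r • m := by
  have hle : ∀ i ∈ Finset.univ, v i * (r • m) i ≤ v i * (M *ᵥ m) i := fun i _ ↦
    mul_le_mul_of_nonneg_left (hMm i) (hv i).le
  have hge : v ⬝ᵥ M *ᵥ m ≤ v ⬝ᵥ r • m := calc
    v ⬝ᵥ M *ᵥ m = v ᵥ* M ⬝ᵥ m := Matrix.dotProduct_mulVec v M m
    _ ≤ r • v ⬝ᵥ m := dotProduct_le_dotProduct_of_nonneg_right hvM hm
    _ = v ⬝ᵥ r • m := by rw [smul_dotProduct, dotProduct_smul]
  have heq := (Finset.sum_eq_sum_iff_of_le hle).1 ((Finset.sum_le_sum hle).antisymm hge)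
  exact funext fun i ↦ (mul_left_cancel₀ (hv i).ne' (heq i (Finset.mem_univ i))).symm

end Perron

/-- A finite directed graph whose edges carry translations: `(j, t) ∈ G i` says that the inflated
tile of type `i` contains the tile of type `j` translated by `t`. The edges form a finite set, so
coinciding tiles are counted once. -/
abbrev TranslationGraph (ι E : Type*) := ι → Finset (ι × E)

namespace TranslationGraph

section Incidence

variable {ι E : Type*} [DecidableEq ι]

/-- The incidence (substitution) matrix: its `(i, j)` entry is the number of edges from `i`
to `j`. -/
def incMatrix (G : TranslationGraph ι E) : Matrix ι ι ℝ := .of fun i j ↦ #{p ∈ G i | p.1 = j}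

lemma incMatrix_mulVec [Fintype ι] (G : TranslationGraph ι E) (f : ι → ℝ) (i : ι) :
    (G.incMatrix *ᵥ f) i = ∑ p ∈ G i, f p.1 := by
  rw [← Finset.sum_fiberwise (G i) Prod.fst]
  refine Finset.sum_congr rfl fun j _ ↦ ?_
  rw [Finset.sum_congr rfl fun p hp ↦ by rw [(Finset.mem_filter.1 hp).2], Finset.sum_const,
    nsmul_eq_mul]
  rfl

end Incidence

variable {ι E : Type*}

section Module

variable [AddCommGroup E] [Module ℝ E]

/-- A family of sets is subinvariant under inflation by `c` if each inflated set is covered by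
the translated sets that the graph prescribes. -/
def IsSubinvariant (G : TranslationGraph ι E) (c : ℝ) (A : ι → Set E) : Prop :=
  ∀ i, c • A i ⊆ ⋃ p ∈ G i, p.2 +ᵥ A p.1

/-- The fixed-point equation of the graph-directed iterated function system that attaches the
contraction `x ↦ c⁻¹ • (t + x)` to each edge `(j, t) ∈ G i`. -/
def IsAttractor (G : TranslationGraph ι E) (c : ℝ) (K : ι → Set E) : Prop :=
  ∀ i, K i = ⋃ p ∈ G i, c⁻¹ • (p.2 +ᵥ K p.1)

open scoped Classical in
/-- The tiles, given by type and position, that the graph prescribes for `n` successive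
inflations by `c` of the tile of type `i` at the origin. -/
noncomputable def tiles (G : TranslationGraph ι E) (c : ℝ) : ℕ → TranslationGraph ι E
  | 0, i => {(i, 0)}
  | n + 1, i => ((G.tiles c n i).sigma fun p ↦ G p.1).image fun e ↦ (e.2.1, c • e.1.2 + e.2.2)

variable {G : TranslationGraph ι E} {c : ℝ} {A : ι → Set E}

lemma sum_tiles_le {f : ι → ℝ} (hf : 0 ≤ f) {r : ℝ} (hr : 0 ≤ r)
    (hG : ∀ i, ∑ p ∈ G i, f p.1 ≤ r * f i) (n : ℕ) (i : ι) :
    ∑ p ∈ G.tiles c n i, f p.1 ≤ r ^ n * f i := by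
  classical
  induction n with
  | zero => simp [tiles]
  | succ n ih => calc
      ∑ p ∈ G.tiles c (n + 1) i, f p.1
        ≤ ∑ e ∈ (G.tiles c n i).sigma fun p ↦ G p.1, f e.2.1 :=
          Finset.sum_image_le_of_nonneg (f := fun q : ι × E ↦ f q.1) fun q _ ↦ hf q.1
      _ = ∑ p ∈ G.tiles c n i, ∑ q ∈ G p.1, f q.1 := Finset.sum_sigma ..
      _ ≤ ∑ p ∈ G.tiles c n i, r * f p.1 := Finset.sum_le_sum fun p _ ↦ hG p.1
      _ = r * ∑ p ∈ G.tiles c n i, f p.1 := (Finset.mul_sum ..).symm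
      _ ≤ r * (r ^ n * f i) := mul_le_mul_of_nonneg_left ih hr
      _ = r ^ (n + 1) * f i := by ring

lemma IsAttractor.isSubinvariant_frontier [TopologicalSpace E] [IsTopologicalAddGroup E]
    [ContinuousConstSMul ℝ E] (hA : G.IsAttractor c A) (hc : c ≠ 0) :
    G.IsSubinvariant c fun i ↦ frontier (A i) := fun i ↦ calc
  c • frontier (A i) = frontier (⋃ p ∈ G i, p.2 +ᵥ A p.1) := by
    rw [← frontier_smul_set₀ hc, hA i]
    simp only [Set.smul_set_iUnion₂, smul_inv_smul₀ hc]
  _ ⊆ ⋃ p ∈ G i, p.2 +ᵥ frontier (A p.1) := by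
    simpa only [frontier_vadd_set] using
      frontier_biUnion_finset_subset (G i) fun p ↦ p.2 +ᵥ A p.1

lemma IsSubinvariant.tiles (hA : G.IsSubinvariant c A) (n : ℕ) :
    (G.tiles c n).IsSubinvariant (c ^ n) A := by
  classical
  intro i
  induction n with
  | zero => simp [TranslationGraph.tiles]
  | succ n ih =>
    rw [pow_succ', mul_smul]
    refine (Set.smul_set_mono ih).trans ?_
    simp only [Set.smul_set_iUnion₂]
    refine Set.iUnion₂_subset fun p hp ↦ ?_
    have smul_tile : c • (p.2 +ᵥ A p.1) = c • p.2 +ᵥ c • A p.1 := by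
      simp only [← Set.image_smul, ← Set.image_vadd, Set.image_image, vadd_eq_add, smul_add]
    rw [smul_tile]
    refine (Set.vadd_set_mono (hA p.1)).trans ?_
    simp only [Set.vadd_set_iUnion₂, vadd_vadd]
    refine Set.iUnion₂_subset fun q hq ↦ ?_
    have hpq : (q.1, c • p.2 + q.2) ∈ G.tiles c (n + 1) i :=
      Finset.mem_image.2 ⟨⟨p, q⟩, Finset.mem_sigma.2 ⟨hp, hq⟩, rfl⟩
    exact Set.subset_iUnion₂ (s := fun p _ ↦ p.2 +ᵥ A p.1) _ hpq

end Module

section Measure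

variable [NormedAddCommGroup E] [NormedSpace ℝ E] [FiniteDimensional ℝ E] [MeasurableSpace E]
  [BorelSpace E] (μ : Measure E) [μ.IsAddHaarMeasure] {G : TranslationGraph ι E} {c : ℝ}
  {A : ι → Set E}

namespace IsSubinvariant

lemma pow_mul_measureReal_le (hA : G.IsSubinvariant c A) (hc : 0 ≤ c) (hfin : ∀ i, μ (A i) ≠ ⊤)
    (i : ι) : c ^ Module.finrank ℝ E * μ.real (A i) ≤ ∑ p ∈ G i, μ.real (A p.1) := by
  have htile (p : ι × E) : μ (p.2 +ᵥ A p.1) ≠ ⊤ := by rw [measure_vadd]; exact hfin p.1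
  rw [← addHaar_real_smul_of_nonneg μ hc]
  refine (measureReal_mono (hA i) ?_).trans ((measureReal_biUnion_finset_le _ _).trans_eq ?_)
  · exact (measure_biUnion_lt_top (G i).finite_toSet fun p _ ↦ (htile p).lt_top).ne
  · simp only [measureReal_def, measure_vadd]

variable [Fintype ι] [DecidableEq ι] {v : ι → ℝ}

lemma sum_measureReal_eq (hA : G.IsSubinvariant c A) (hc : 0 ≤ c) (hfin : ∀ i, μ (A i) ≠ ⊤)
    (hv : ∀ i, 0 < v i) (hvG : v ᵥ* G.incMatrix ≤ c ^ Module.finrank ℝ E • v) (i : ι) :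
    ∑ p ∈ G i, μ.real (A p.1) = c ^ Module.finrank ℝ E * μ.real (A i) := by
  rw [← G.incMatrix_mulVec fun i ↦ μ.real (A i)]
  refine congrFun (mulVec_eq_smul_of_smul_le_mulVec hv hvG (fun _ ↦ measureReal_nonneg) ?_) i
  intro j
  rw [incMatrix_mulVec]
  exact hA.pow_mul_measureReal_le μ hc hfin j

lemma sum_tiles_measureReal_inter_le (hA : G.IsSubinvariant c A) (hc : 0 ≤ c)
    (hfin : ∀ i, μ (A i) ≠ ⊤) (hv : ∀ i, 0 < v i)
    (hvG : v ᵥ* G.incMatrix ≤ c ^ Module.finrank ℝ E • v) (n : ℕ) (i : ι) {J : Set E}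
    (hJ : MeasurableSet J) :
    ∑ p ∈ G.tiles c n i, μ.real ((p.2 +ᵥ A p.1) ∩ J) ≤ μ.real (c ^ n • A i ∩ J) := by
  refine sum_measureReal_inter_le (fun p _ ↦ ?_) (hA.tiles n i) ?_ hJ
  · rw [measure_vadd]
    exact hfin p.1
  · have hsum := sum_tiles_le (f := fun i ↦ μ.real (A i)) (c := c) (fun _ ↦ measureReal_nonneg)
      (pow_nonneg hc _) (fun i ↦ (hA.sum_measureReal_eq μ hc hfin hv hvG i).le) n i
    rw [addHaar_real_smul_of_nonneg μ (pow_nonneg hc n), pow_right_comm]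
    simpa only [measureReal_def, measure_vadd] using hsum

lemma exists_null_ball (hA : G.IsSubinvariant c A) (hc : 0 ≤ c) (hv : ∀ i, 0 < v i)
    (hvG : v ᵥ* G.incMatrix ≤ c ^ Module.finrank ℝ E • v) (hK : ∀ i, IsCompact (A i))
    (hint : ∀ i, interior (A i) = ∅) (i : ι) :
    ∃ s > 0, ∀ (n : ℕ) (x : E), ∃ y, ball y s ⊆ ball x 1 ∧ μ (c ^ n • A i ∩ ball y s) = 0 := by
  have hfin (j : ι) : μ (A j) ≠ ⊤ := (hK j).measure_lt_top.ne
  have hpacking (n : ℕ) (x : E) (r : ℝ) :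
      ∑ p ∈ G.tiles c n i, μ.real ((p.2 +ᵥ A p.1) ∩ closedBall x r) ≤ μ.real (closedBall x r) :=
    (hA.sum_tiles_measureReal_inter_le μ hc hfin hv hvG n i measurableSet_closedBall).trans
      (measureReal_mono Set.inter_subset_right measure_closedBall_lt_top.ne)
  obtain ⟨N, hN⟩ := exists_forall_card_le_of_sum_measureReal_inter_le μ
    (fun j ↦ (hK j).isBounded) 1
  obtain ⟨s, hole, hs⟩ := (((uniformlyNowhereDense_of_isCompact hK (fun j ↦ (hK j).isClosed)
    hint).vadd (E := E)).biUnion_finset N 1 one_pos |>.and self_mem_nhdsWithin).exists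
  refine ⟨s, hs, fun n x ↦ ?_⟩
  obtain ⟨y, hy⟩ := hole ⟨_, hN _ (hpacking n) x⟩ x
  obtain ⟨hyx, hy_disjoint⟩ := Set.subset_sdiff.1 hy
  refine ⟨y, hyx, measure_mono_null (Set.inter_subset_inter_left _ (hA.tiles n i)) ?_⟩
  rw [Set.iUnion₂_inter]
  refine (measure_biUnion_null_iff (Finset.countable_toSet _)).2 fun p hp ↦ ?_
  by_contra hpy
  have hpx : μ ((p.2 +ᵥ A p.1) ∩ ball x 1) ≠ 0 := fun h ↦
    hpy (measure_mono_null (Set.inter_subset_inter_right _ hyx) h)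
  obtain ⟨z, hzp, hzy⟩ := nonempty_of_measure_ne_zero hpy
  exact Set.disjoint_left.1 hy_disjoint hzy
    (Set.mem_biUnion (Finset.mem_filter.2 ⟨hp, hpx⟩) hzp)

theorem measure_eq_zero (hA : G.IsSubinvariant c A) (hc : 1 < c) (hv : ∀ i, 0 < v i)
    (hvG : v ᵥ* G.incMatrix ≤ c ^ Module.finrank ℝ E • v) (hK : ∀ i, IsCompact (A i))
    (hint : ∀ i, interior (A i) = ∅) (i : ι) : μ (A i) = 0 := by
  have hc₀ : 0 < c := one_pos.trans hc
  obtain ⟨s, hs, hole⟩ := hA.exists_null_ball μ hc₀.le hv hvG hK hint i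
  have hlim : Tendsto (fun n ↦ c⁻¹ ^ n) atTop (𝓝[>] 0) :=
    tendsto_nhdsWithin_iff.2 ⟨tendsto_pow_atTop_nhds_zero_of_lt_one (by positivity)
      (inv_lt_one_of_one_lt₀ hc), .of_forall fun n ↦ pow_pos (inv_pos.2 hc₀) n⟩
  refine addHaar_eq_zero_of_porous μ hlim hs fun n x ↦ ?_
  obtain ⟨y, hyx, hy⟩ := hole n (c ^ n • x)
  have hcn : c⁻¹ ^ n ≠ 0 := by positivity
  have cancel : c⁻¹ ^ n * c ^ n = 1 := by rw [← mul_pow, inv_mul_cancel₀ hc₀.ne', one_pow]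
  have smul_ball_eq (z : E) (r : ℝ) : c⁻¹ ^ n • ball z r = ball (c⁻¹ ^ n • z) (c⁻¹ ^ n * r) := by
    rw [_root_.smul_ball hcn, Real.norm_of_nonneg (by positivity)]
  refine ⟨c⁻¹ ^ n • y, ?_, ?_⟩
  · rw [← smul_ball_eq]
    refine (Set.smul_set_mono hyx).trans ?_
    rw [smul_ball_eq, smul_smul, cancel, one_smul, mul_one]
    exact ball_subset_closedBall
  · rw [← smul_ball_eq, ← one_smul ℝ (A i), ← cancel, mul_smul, ← Set.smul_set_inter₀ hcn,
      Measure.addHaar_smul, hy, mul_zero]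

end IsSubinvariant

theorem IsAttractor.measure_frontier_eq_zero [Fintype ι] [DecidableEq ι] {v : ι → ℝ}
    (hA : G.IsAttractor c A) (hc : 1 < c) (hv : ∀ i, 0 < v i)
    (hvG : v ᵥ* G.incMatrix ≤ c ^ Module.finrank ℝ E • v) (hK : ∀ i, IsCompact (A i)) (i : ι) :
    μ (frontier (A i)) = 0 :=
  (hA.isSubinvariant_frontier (one_pos.trans hc).ne').measure_eq_zero μ hc hv hvG
    (fun j ↦ (hK j).of_isClosed_subset isClosed_frontier (hK j).isClosed.frontier_subset)
    (fun j ↦ interior_frontier (hK j).isClosed) i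

end Measure

end TranslationGraph

section GoldenRatio

variable {E : Type*}

open scoped Classical in
/-- The graph of the substitution ρ̃ = (a ↦ aab, b ↦ ba) acting on windows, with `a` encoded as
`true` and `b` as `false`, and with arbitrary translations. -/
noncomputable def rhoTildeGraph (t₁ t₂ t₃ t₄ t₅ : E) : TranslationGraph Bool E
  | true => {(true, t₁), (true, t₂), (false, t₃)}
  | false => {(true, t₄), (false, t₅)}

lemma goldenRatio_vecMul_incMatrix_rhoTildeGraph_le (t₁ t₂ t₃ t₄ t₅ : E) :
    (fun i ↦ cond i Real.goldenRatio 1) ᵥ* (rhoTildeGraph t₁ t₂ t₃ t₄ t₅).incMatrix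
      ≤ Real.goldenRatio ^ 2 • fun i ↦ cond i Real.goldenRatio 1 := by
  classical
  set M := (rhoTildeGraph t₁ t₂ t₃ t₄ t₅).incMatrix with hM
  have hMaa : M true true ≤ 2 := by
    simpa [hM, TranslationGraph.incMatrix, rhoTildeGraph, Finset.filter_insert,
      Finset.filter_singleton] using Finset.card_le_two (a := (true, t₁)) (b := (true, t₂))
  have hMab : M true false = 1 := by
    simp [hM, TranslationGraph.incMatrix, rhoTildeGraph, Finset.filter_insert,
      Finset.filter_singleton]
  have hMb (i : Bool) : M false i = 1 := by
    cases i <;> simp [hM, TranslationGraph.incMatrix, rhoTildeGraph, Finset.filter_insert,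
      Finset.filter_singleton]
  rintro (_ | _)
  · simp [Matrix.vecMul, dotProduct, hMab, hMb]
  · have hφ : Real.goldenRatio ^ 2 * Real.goldenRatio = 2 * Real.goldenRatio + 1 := by
      linear_combination (Real.goldenRatio + 1) * Real.goldenRatio_sq
    simp only [Matrix.vecMul, dotProduct, Fintype.sum_bool, hMb, Pi.smul_apply, smul_eq_mul,
      cond_true, cond_false]
    linarith [mul_le_mul_of_nonneg_left hMaa Real.goldenRatio_pos.le]

theorem rho_tilde_windows_boundary_null_general [NormedAddCommGroup E] [NormedSpace ℝ E]
    [FiniteDimensional ℝ E] [MeasurableSpace E] [BorelSpace E] (μ : Measure E)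
    [μ.IsAddHaarMeasure] {c : ℝ} (hc₀ : 0 ≤ c)
    (hcφ : Real.goldenRatio ^ 2 ≤ c ^ Module.finrank ℝ E) (t₁ t₂ t₃ t₄ t₅ : E) {Wa Wb : Set E}
    (hca : IsCompact Wa) (hcb : IsCompact Wb)
    (h₁ : Wa = c⁻¹ • (t₁ +ᵥ Wa) ∪ c⁻¹ • (t₂ +ᵥ Wa) ∪ c⁻¹ • (t₃ +ᵥ Wb))
    (h₂ : Wb = c⁻¹ • (t₄ +ᵥ Wa) ∪ c⁻¹ • (t₅ +ᵥ Wb)) :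
    μ (frontier Wa) = 0 ∧ μ (frontier Wb) = 0 := by
  let v : Bool → ℝ := fun i ↦ cond i Real.goldenRatio 1
  let W : Bool → Set E := fun i ↦ cond i Wa Wb
  have hc : 1 < c := lt_of_not_ge fun h ↦ (hcφ.trans (pow_le_one₀ hc₀ h)).not_gt
    (one_lt_pow₀ Real.one_lt_goldenRatio two_ne_zero)
  have hW_attractor : (rhoTildeGraph t₁ t₂ t₃ t₄ t₅).IsAttractor c W := by
    rintro (_ | _)
    · simpa [rhoTildeGraph, W] using h₂
    · simpa [rhoTildeGraph, W, Set.union_assoc] using h₁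
  have hW_compact : ∀ i, IsCompact (W i) := by
    rintro (_ | _)
    exacts [hcb, hca]
  have hv : ∀ i, 0 < v i := by
    rintro (_ | _)
    exacts [one_pos, Real.goldenRatio_pos]
  have hv_sub : v ᵥ* (rhoTildeGraph t₁ t₂ t₃ t₄ t₅).incMatrix ≤ c ^ Module.finrank ℝ E • v :=
    (goldenRatio_vecMul_incMatrix_rhoTildeGraph_le t₁ t₂ t₃ t₄ t₅).trans
      (smul_le_smul_of_nonneg_right hcφ fun i ↦ (hv i).le)
  have hnull := hW_attractor.measure_frontier_eq_zero μ hc hv hv_sub hW_compact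
  exact ⟨hnull true, hnull false⟩

end GoldenRatio

end Porosity

/-- The boundaries of the windows of the substitution ρ̃ = (a ↦ aab, b ↦ ba)
have Lebesgue measure zero. -/
theorem rho_tilde_windows_boundary_null (τ : ℝ) (hτ : τ = (1 + Real.sqrt 5) / 2)
    (Wa Wb : Set ℝ) (hWa : Wa.Nonempty) (hWb : Wb.Nonempty)
    (hca : IsCompact Wa) (hcb : IsCompact Wb)
    (h1 : Wa = (fun x : ℝ => (τ ^ 2)⁻¹ * x) '' Wa ∪
               (fun x : ℝ => (τ ^ 2)⁻¹ * (x - τ)) '' Wa ∪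
               (fun x : ℝ => (τ ^ 2)⁻¹ * (x + τ ^ 2)) '' Wb)
    (h2 : Wb = (fun x : ℝ => (τ ^ 2)⁻¹ * (x - 2 * τ)) '' Wa ∪
               (fun x : ℝ => (τ ^ 2)⁻¹ * x) '' Wb) :
    volume (frontier Wa) = 0 ∧ volume (frontier Wb) = 0 := by
  have hτ_golden : τ = Real.goldenRatio := hτ
  refine rho_tilde_windows_boundary_null_general volume (sq_nonneg τ) (by simp [hτ_golden])
    0 (-τ) (τ ^ 2) (-(2 * τ)) 0 hca hcb ?_ ?_
  · simpa only [← Set.image_smul, ← Set.image_vadd, Set.image_image, smul_eq_mul, vadd_eq_add,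
      zero_add, neg_add_eq_sub, add_comm _ (τ ^ 2)] using h1
  · simpa only [← Set.image_smul, ← Set.image_vadd, Set.image_image, smul_eq_mul, vadd_eq_add,
      zero_add, neg_add_eq_sub] using h2
end

section
/- Let τ = (1+√5)/2, let W_a, W_b be nonempty compact subsets of ℝ satisfying W_a = τ⁻²·W_a ∪ τ⁻²·(W_a − τ) ∪ τ⁻²·(W_b + τ²) and W_b = τ⁻²·(W_a − 2τ) ∪ τ⁻²·W_b, and set W = W_a ∪ W_b. Then W is a Cantorval: W is compact, W equals the closure of its interior, and no connected component of W is isolated, i.e., for every x ∈ W the connected component of x in W is not an open subset of W in the subspace topology. -/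
/-!
Write `φ` and `ψ` for the golden ratio and its conjugate. As `τ = φ` and `φψ = -1`, the windows
are the attractor of the graph-directed system with ratio `ψ²` whose shifts are the conjugates
`ψ`, `1` of the tile lengths of `a`, `b`, summed over the prefixes of `aab` and `ba`.

*Regularity.* The words `ρ̃ⁿ(a)` describe arbitrarily long walks with steps `ψ ≡ 1` and `1` modulo
`φ` that stay in `W`. Hence `W` contains every natural number modulo the irrational `φ`, so its
translates by `ℤφ` cover `ℝ`, and by Baire's theorem a window has interior. The closures of the
interiors are forward invariant, so they contain the attractor.

*No isolated component.* Each window has the gap points `M - c ψ²ᵏ` below its maximum `M`. If the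
points of `W` just above `r ∈ W` are missing, then every sufficiently small copy of a window that
contains `r` has `r` as its maximum; all these copies share the gap points `r - c ψ²ᵏ`, which
therefore lie outside `W` for large `k`. The right end of an isolated component is such an `r`, so
the component is a point, which is impossible in a regular closed set.
-/

open Set Filter Topology
open scoped goldenRatio

/-- A Cantorval: a compact subset of the line that is the closure of its interior and none of
whose connected components is open in the subspace topology. -/
def IsCantorval (W : Set ℝ) : Prop :=
  IsCompact W ∧ closure (interior W) = W ∧
    ∀ x ∈ W, ¬ IsOpen (Subtype.val ⁻¹' connectedComponentIn W x : Set W)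

section Components

variable {α : Type*} [TopologicalSpace α] {K : Set α}

theorem isClosed_connectedComponentIn (hK : IsClosed K) (x : α) :
    IsClosed (connectedComponentIn K x) := by
  by_cases hx : x ∈ K
  · rw [connectedComponentIn_eq_image hx]
    exact hK.isClosedMap_subtype_val _ isClosed_connectedComponent
  · rw [connectedComponentIn_eq_empty hx]
    exact isClosed_empty

variable [LinearOrder α] [OrderTopology α]

theorem eq_of_isGreatest_of_frequently_notMem {C : Set α} (hC : IsPreconnected C) (hCK : C ⊆ K)
    {r x : α} (hr : IsGreatest C r) (hgap : ∃ᶠ y in 𝓝[<] r, y ∉ K) (hx : x ∈ C) : x = r := by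
  by_contra hne
  have hxr : x < r := lt_of_le_of_ne (hr.2 hx) hne
  obtain ⟨y, hyK, hy⟩ := (hgap.and_eventually (Ioo_mem_nhdsLT hxr)).exists
  exact hyK (hCK (hC.ordConnected.out hx hr.1 (Ioo_subset_Icc_self hy)))

theorem not_isOpen_connectedComponentIn_of_gaps (hK : IsCompact K) (hperf : Preperfect K)
    (hgap : ∀ r ∈ K, (∀ᶠ y in 𝓝[>] r, y ∉ K) → ∃ᶠ y in 𝓝[<] r, y ∉ K) {x : α} (hx : x ∈ K) :
    ¬ IsOpen (Subtype.val ⁻¹' connectedComponentIn K x : Set K) := by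
  intro hopen
  set C := connectedComponentIn K x
  have hCK : C ⊆ K := connectedComponentIn_subset K x
  have hCcompact : IsCompact C :=
    hK.of_isClosed_subset (isClosed_connectedComponentIn hK.isClosed x) hCK
  obtain ⟨r, hr⟩ := hCcompact.exists_isGreatest ⟨x, mem_connectedComponentIn hx⟩
  obtain ⟨U, hU, hUC⟩ := isOpen_induced_iff.1 hopen
  have hUC' : ∀ y ∈ K, (y ∈ U ↔ y ∈ C) := fun y hy => Set.ext_iff.1 hUC ⟨y, hy⟩
  have hUr : U ∈ 𝓝 r := hU.mem_nhds ((hUC' r (hCK hr.1)).2 hr.1)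
  have hright : ∀ᶠ y in 𝓝[>] r, y ∉ K := by
    filter_upwards [self_mem_nhdsWithin, mem_nhdsWithin_of_mem_nhds hUr] with y hry hyU hyK
    exact hry.not_ge (hr.2 ((hUC' y hyK).1 hyU))
  obtain ⟨y, ⟨hyU, hyK⟩, hyr⟩ := preperfect_iff_nhds.1 hperf r (hCK hr.1) U hUr
  exact hyr (eq_of_isGreatest_of_frequently_notMem isPreconnected_connectedComponentIn hCK hr
    (hgap r (hCK hr.1) hright) ((hUC' y hyK).1 hyU))

end Components

/-- `K` is the family of nonempty compact sets generated by the graph-directed iterated function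
system whose edges from `j` to `i` are the maps `x ↦ q x + d` with `d ∈ D i j`. -/
structure IsGraphAttractor {ι E : Type*} [NormedAddCommGroup E] [NormedSpace ℝ E]
    (q : ℝ) (D : ι → ι → Set E) (K : ι → Set E) : Prop where
  isCompact : ∀ i, IsCompact (K i)
  nonempty : ∀ i, (K i).Nonempty
  eq_iUnion : ∀ i, K i = ⋃ j, ⋃ d ∈ D i j, (fun x => q • x + d) '' K j

namespace IsGraphAttractor

section NormedSpace

variable {ι E : Type*} [NormedAddCommGroup E] [NormedSpace ℝ E] {q : ℝ} {D : ι → ι → Set E}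
  {K L : ι → Set E}

theorem mem_iff (h : IsGraphAttractor q D K) {i : ι} {x : E} :
    x ∈ K i ↔ ∃ j, ∃ d ∈ D i j, ∃ y ∈ K j, q • y + d = x := by
  conv_lhs => rw [h.eq_iUnion i]
  simp only [mem_iUnion, mem_image, exists_prop]

theorem mapsTo (h : IsGraphAttractor q D K) {i j : ι} {d : E} (hd : d ∈ D i j) :
    MapsTo (fun x => q • x + d) (K j) (K i) :=
  fun y hy => h.mem_iff.2 ⟨j, d, hd, y, hy, rfl⟩

theorem exists_dist_le [Finite ι] (h : IsGraphAttractor q D K) (hL : ∀ i, (L i).Nonempty)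
    (hmaps : ∀ i j, ∀ d ∈ D i j, MapsTo (fun x => q • x + d) (L j) (L i)) :
    ∃ C : ℝ, ∀ (n : ℕ) (i : ι), ∀ x ∈ K i, ∃ y ∈ L i, dist x y ≤ |q| ^ n * C := by
  choose l hl using hL
  have hbdd : Bornology.IsBounded (⋃ i, insert (l i) (K i)) :=
    Bornology.isBounded_iUnion.2 fun i => (h.isCompact i).isBounded.insert (l i)
  obtain ⟨C, hC⟩ := Metric.isBounded_iff.1 hbdd
  refine ⟨C, fun n => ?_⟩
  induction n with
  | zero =>
    intro i x hx
    refine ⟨l i, hl i, ?_⟩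
    rw [pow_zero, one_mul]
    exact hC (mem_iUnion_of_mem i (mem_insert_of_mem _ hx)) (mem_iUnion_of_mem i (mem_insert _ _))
  | succ n ih =>
    intro i x hx
    obtain ⟨j, d, hd, x', hx', rfl⟩ := h.mem_iff.1 hx
    obtain ⟨y, hy, hxy⟩ := ih j x' hx'
    refine ⟨q • y + d, hmaps i j d hd hy, ?_⟩
    calc dist (q • x' + d) (q • y + d) = |q| * dist x' y := by
          rw [dist_add_right, dist_smul₀, Real.norm_eq_abs]
      _ ≤ |q| * (|q| ^ n * C) := by gcongr
      _ = |q| ^ (n + 1) * C := by ring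

theorem subset_closure_of_mapsTo [Finite ι] (h : IsGraphAttractor q D K) (hq : |q| < 1)
    (hL : ∀ i, (L i).Nonempty)
    (hmaps : ∀ i j, ∀ d ∈ D i j, MapsTo (fun x => q • x + d) (L j) (L i)) (i : ι) :
    K i ⊆ closure (L i) := by
  intro x hx
  obtain ⟨C, hC⟩ := h.exists_dist_le hL hmaps
  have hlim : Tendsto (fun n : ℕ => |q| ^ n * C) atTop (𝓝 0) := by
    simpa only [zero_mul] using
      (tendsto_pow_atTop_nhds_zero_of_lt_one (abs_nonneg q) hq).mul_const C
  refine Metric.mem_closure_iff.2 fun ε hε => ?_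
  obtain ⟨n, hn⟩ := (hlim.eventually_lt_const hε).exists
  obtain ⟨y, hy, hxy⟩ := hC n i x hx
  exact ⟨y, hy, hxy.trans_lt hn⟩

theorem zero_mem (h : IsGraphAttractor q D K) (hq : |q| < 1) {i : ι} (h0 : (0 : E) ∈ D i i) :
    (0 : E) ∈ K i := by
  obtain ⟨y, hy⟩ := h.nonempty i
  have horbit : ∀ n : ℕ, q ^ n • y ∈ K i := by
    intro n
    induction n with
    | zero => simpa only [pow_zero, one_smul] using hy
    | succ n ih => simpa only [add_zero, smul_smul, ← pow_succ'] using h.mapsTo h0 ih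
  have hlim : Tendsto (fun n : ℕ => q ^ n • y) atTop (𝓝 0) := by
    simpa only [zero_smul] using (tendsto_pow_atTop_nhds_zero_of_abs_lt_one hq).smul_const y
  exact (h.isCompact i).isClosed.mem_of_tendsto hlim (Eventually.of_forall horbit)

theorem mapsTo_interior (h : IsGraphAttractor q D K) (hq : q ≠ 0) {i j : ι} {d : E}
    (hd : d ∈ D i j) : MapsTo (fun x => q • x + d) (interior (K j)) (interior (K i)) := by
  have hopen : IsOpenMap fun x : E => q • x + d :=
    ((Homeomorph.smulOfNeZero q hq).trans (Homeomorph.addRight d)).isOpenMap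
  exact hopen.mapsTo_interior (h.mapsTo hd)

theorem closure_interior_eq [Finite ι] (h : IsGraphAttractor q D K) (hq₀ : q ≠ 0) (hq₁ : |q| < 1)
    (hD : ∀ i j, (D i j).Nonempty) (hint : ∃ i, (interior (K i)).Nonempty) (i : ι) :
    closure (interior (K i)) = K i := by
  obtain ⟨j, x, hx⟩ := hint
  have hne : ∀ i, (interior (K i)).Nonempty := fun i =>
    (hD i j).elim fun d hd => ⟨_, h.mapsTo_interior hq₀ hd hx⟩
  exact (closure_minimal interior_subset (h.isCompact i).isClosed).antisymm
    (h.subset_closure_of_mapsTo hq₁ hne (fun i j d hd => h.mapsTo_interior hq₀ hd) i)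

end NormedSpace

end IsGraphAttractor

theorem closure_interior_iUnion_eq {ι α : Type*} [TopologicalSpace α] {K : ι → Set α}
    (hclosed : IsClosed (⋃ i, K i)) (hK : ∀ i, closure (interior (K i)) = K i) :
    closure (interior (⋃ i, K i)) = ⋃ i, K i := by
  refine (closure_minimal interior_subset hclosed).antisymm (iUnion_subset fun i => ?_)
  calc K i = closure (interior (K i)) := (hK i).symm
    _ ⊆ closure (interior (⋃ i, K i)) := closure_mono (interior_mono (subset_iUnion K i))

/-- The points `r - c qᵏ`, which approach `r` from the left when `0 < c` and `0 < q < 1`,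
eventually avoid `S`. Sharing the parameters `c` and `q` among all sets and all points makes the
notion stable under finite unions and under the maps `x ↦ q x + d`. -/
def HasGapsAt (c q r : ℝ) (S : Set ℝ) : Prop :=
  ∀ᶠ k : ℕ in atTop, r - c * q ^ k ∉ S

section Gaps

variable {ι : Type*} {c q r : ℝ}

theorem tendsto_sub_mul_pow (hq : |q| < 1) :
    Tendsto (fun k : ℕ => r - c * q ^ k) atTop (𝓝 r) := by
  simpa only [mul_zero, sub_zero] using
    ((tendsto_pow_atTop_nhds_zero_of_abs_lt_one hq).const_mul c).const_sub r

theorem hasGapsAt_of_notMem {S : Set ℝ} (hS : IsClosed S) (hq : |q| < 1) (hr : r ∉ S) :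
    HasGapsAt c q r S :=
  (tendsto_sub_mul_pow hq).eventually (hS.isOpen_compl.mem_nhds hr)

theorem HasGapsAt.frequently_notMem {S : Set ℝ} (h : HasGapsAt c q r S) (hc : 0 < c)
    (hq₀ : 0 < q) (hq₁ : q < 1) : ∃ᶠ y in 𝓝[<] r, y ∉ S := by
  have hlim : Tendsto (fun k : ℕ => r - c * q ^ k) atTop (𝓝[<] r) :=
    tendsto_nhdsWithin_iff.2 ⟨tendsto_sub_mul_pow (abs_lt.2 ⟨by linarith, hq₁⟩),
      Eventually.of_forall fun k => sub_lt_self r (by positivity)⟩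
  exact hlim.frequently h.frequently

variable {D : ι → ι → Set ℝ} {K : ι → Set ℝ}

namespace IsGraphAttractor

theorem hasGapsAt_of_preimages [Finite ι] (h : IsGraphAttractor q D K) (hq : q ≠ 0)
    (hD : ∀ i j, (D i j).Finite) {i : ι}
    (hgap : ∀ j, ∀ d ∈ D i j, HasGapsAt c q ((r - d) / q) (K j)) : HasGapsAt c q r (K i) := by
  have hall : ∀ᶠ k : ℕ in atTop, ∀ j, ∀ d ∈ D i j, (r - d) / q - c * q ^ k ∉ K j :=
    eventually_all.2 fun j => (eventually_all_finite (hD i j)).2 (hgap j)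
  rw [HasGapsAt, ← map_add_atTop_eq_nat 1, eventually_map]
  filter_upwards [hall] with k hk hmem
  obtain ⟨j, d, hd, y, hy, hyk⟩ := h.mem_iff.1 hmem
  have hy_eq : (r - d) / q - c * q ^ k = y := by
    rw [smul_eq_mul] at hyk
    field_simp
    linear_combination -hyk
  exact hk j d hd (hy_eq ▸ hy)

theorem hasGapsAt_of_forall_le_or_le [Finite ι] (h : IsGraphAttractor q D K) (hq₀ : 0 < q)
    (hq₁ : q < 1) (hD : ∀ i j, (D i j).Finite)
    (hmax : ∀ i M, IsGreatest (K i) M → HasGapsAt c q M (K i)) {i : ι} {δ : ℝ} (hδ : 0 < δ)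
    (hright : ∀ x ∈ K i, x ≤ r ∨ r + δ ≤ x) : HasGapsAt c q r (K i) := by
  obtain ⟨C, hC⟩ := Metric.isBounded_iff.1
    (Bornology.isBounded_iUnion.2 fun i => (h.isCompact i).isBounded)
  have hq : |q| < 1 := abs_lt.2 ⟨by linarith, hq₁⟩
  have hscale : ∀ (n : ℕ) (i : ι) (r : ℝ), (∀ x ∈ K i, x ≤ r ∨ r + q ^ n * (C + 1) ≤ x) →
      HasGapsAt c q r (K i) := by
    intro n
    induction n with
    | zero =>
      intro i r hr
      by_cases hrK : r ∈ K i
      · refine hmax i r ⟨hrK, fun x hx => (hr x hx).resolve_right fun hle => ?_⟩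
        have hdist := hC (mem_iUnion_of_mem i hx) (mem_iUnion_of_mem i hrK)
        have := (le_abs_self (x - r)).trans hdist
        linarith
      · exact hasGapsAt_of_notMem (h.isCompact i).isClosed hq hrK
    | succ n ih =>
      intro i r hr
      refine h.hasGapsAt_of_preimages hq₀.ne' hD fun j d hd => ih j _ fun y hy => ?_
      refine (hr (q * y + d) (h.mapsTo hd hy)).imp (fun hle => ?_) fun hle => ?_
      · rw [le_div_iff₀ hq₀]
        linarith
      · rw [← le_sub_iff_add_le, div_le_iff₀ hq₀]
        rw [pow_succ] at hle
        linarith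
  have hlim : Tendsto (fun n : ℕ => q ^ n * (C + 1)) atTop (𝓝 0) := by
    simpa only [zero_mul] using
      (tendsto_pow_atTop_nhds_zero_of_lt_one hq₀.le hq₁).mul_const (C + 1)
  obtain ⟨n, hn⟩ := (hlim.eventually_lt_const hδ).exists
  exact hscale n i r fun x hx => (hright x hx).imp_right fun hle => by linarith

theorem isCantorval [Finite ι] (h : IsGraphAttractor q D K) (hq₀ : 0 < q) (hq₁ : q < 1)
    (hc : 0 < c) (hDfin : ∀ i j, (D i j).Finite) (hDne : ∀ i j, (D i j).Nonempty)
    (hmax : ∀ i M, IsGreatest (K i) M → HasGapsAt c q M (K i))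
    (hint : ∃ i, (interior (K i)).Nonempty) : IsCantorval (⋃ i, K i) := by
  have hcompact : IsCompact (⋃ i, K i) := isCompact_iUnion h.isCompact
  have hregular : closure (interior (⋃ i, K i)) = ⋃ i, K i :=
    closure_interior_iUnion_eq hcompact.isClosed
      (h.closure_interior_eq hq₀.ne' (abs_lt.2 ⟨by linarith, hq₁⟩) hDne hint)
  have hperfect : Preperfect (⋃ i, K i) := by
    rw [← hregular]
    exact isOpen_interior.perfect_closure.acc
  refine ⟨hcompact, hregular, fun x hx =>
    not_isOpen_connectedComponentIn_of_gaps hcompact hperfect (fun r _ hright => ?_) hx⟩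
  obtain ⟨u, hu, hru⟩ := mem_nhdsGT_iff_exists_Ioo_subset.1 hright
  have hleft : HasGapsAt c q r (⋃ i, K i) := by
    have hpieces : ∀ i, HasGapsAt c q r (K i) := fun i =>
      h.hasGapsAt_of_forall_le_or_le hq₀ hq₁ hDfin hmax (sub_pos.2 hu) fun x hx => by
        by_contra! hxu
        exact hru ⟨hxu.1, by linarith⟩ (mem_iUnion_of_mem i hx)
    filter_upwards [eventually_all.2 hpieces] with k hk
    simpa only [mem_iUnion, not_exists] using hk
  exact hleft.frequently_notMem hc hq₀ hq₁

end IsGraphAttractor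

end Gaps

section Substitution

variable {ι E : Type*}

/-- The shifts of the graph-directed system of a substitution `σ` whose letters have (internal
space) lengths `ℓ`: every occurrence `σ j = u i v` contributes the length of its prefix `u`. -/
def prefixShifts [AddMonoid E] (σ : ι → List ι) (ℓ : ι → E) (i j : ι) : Set E :=
  {d | ∃ u v, σ j = u ++ i :: v ∧ (u.map ℓ).sum = d}

theorem finite_prefixShifts [AddMonoid E] (σ : ι → List ι) (ℓ : ι → E) (i j : ι) :
    (prefixShifts σ ℓ i j).Finite := by
  refine ((σ j).inits.finite_toSet.image fun u => (u.map ℓ).sum).subset ?_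
  rintro _ ⟨u, v, huv, rfl⟩
  exact ⟨u, (List.mem_inits u (σ j)).2 ⟨i :: v, huv.symm⟩, rfl⟩

/-- The walk that starts at a point and takes the steps `ℓ c` for the letters `c` of a word is in
`K c` whenever it is about to take a step `ℓ c`. -/
def WalkStaysIn [Add E] (ℓ : ι → E) (K : ι → Set E) : E → List ι → Prop
  | _, [] => True
  | y, c :: w => y ∈ K c ∧ WalkStaysIn ℓ K (y + ℓ c) w

namespace WalkStaysIn

theorem append [AddMonoid E] {ℓ : ι → E} {K : ι → Set E} {u v : List ι} {y : E}
    (hu : WalkStaysIn ℓ K y u) (hv : WalkStaysIn ℓ K (y + (u.map ℓ).sum) v) :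
    WalkStaysIn ℓ K y (u ++ v) := by
  induction u generalizing y with
  | nil => simpa using hv
  | cons c u ih =>
    rw [List.map_cons, List.sum_cons, ← add_assoc] at hv
    exact ⟨hu.1, ih hu.2 hv⟩

theorem exists_map_eq {G : Type*} [AddMonoid E] [AddMonoid G] {ℓ : ι → E} {K : ι → Set E}
    (f : E →+ G) {s : G} (hf : ∀ c, f (ℓ c) = s) {w : List ι} {y : E}
    (h : WalkStaysIn ℓ K y w) {n : ℕ} (hn : n < w.length) :
    ∃ x ∈ ⋃ c, K c, f x = f y + n • s := by
  induction w generalizing y n with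
  | nil => exact absurd hn n.not_lt_zero
  | cons c w ih =>
    cases n with
    | zero => exact ⟨y, mem_iUnion_of_mem c h.1, by rw [zero_nsmul, add_zero]⟩
    | succ n =>
      obtain ⟨x, hx, hfx⟩ := ih h.2 (Nat.lt_of_succ_lt_succ hn)
      exact ⟨x, hx, by rw [hfx, map_add, hf, succ_nsmul', add_assoc]⟩

end WalkStaysIn

variable [NormedAddCommGroup E] [NormedSpace ℝ E] {q : ℝ} {σ : ι → List ι} {ℓ : ι → E}
  {K : ι → Set E}

namespace IsGraphAttractor

theorem walkStaysIn_image (h : IsGraphAttractor q (prefixShifts σ ℓ) K) {j : ι} {y : E}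
    (hy : y ∈ K j) : WalkStaysIn ℓ K (q • y) (σ j) := by
  suffices hsuffix : ∀ v u, σ j = u ++ v → WalkStaysIn ℓ K (q • y + (u.map ℓ).sum) v by
    simpa using hsuffix (σ j) [] rfl
  intro v
  induction v with
  | nil => exact fun _ _ => trivial
  | cons c v ih =>
    intro u huv
    refine ⟨h.mapsTo ⟨u, v, huv, rfl⟩ hy, ?_⟩
    simpa [add_assoc] using ih (u ++ [c]) (by simpa using huv)

theorem walkStaysIn_flatMap (h : IsGraphAttractor q (prefixShifts σ ℓ) K)
    (hℓ : ∀ j, ((σ j).map ℓ).sum = q • ℓ j) {w : List ι} {y : E} (hw : WalkStaysIn ℓ K y w) :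
    WalkStaysIn ℓ K (q • y) (w.flatMap σ) := by
  induction w generalizing y with
  | nil => trivial
  | cons c w ih =>
    refine (h.walkStaysIn_image hw.1).append ?_
    rw [hℓ, ← smul_add]
    exact ih hw.2

theorem exists_walkStaysIn_of_two_le_length (h : IsGraphAttractor q (prefixShifts σ ℓ) K)
    (hℓ : ∀ j, ((σ j).map ℓ).sum = q • ℓ j) (hσ : ∀ j, 2 ≤ (σ j).length) {c : ι}
    (hc : (0 : E) ∈ K c) (n : ℕ) : ∃ w : List ι, n < w.length ∧ WalkStaysIn ℓ K 0 w := by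
  induction n with
  | zero => exact ⟨[c], Nat.one_pos, hc, trivial⟩
  | succ n ih =>
    obtain ⟨w, hn, hw⟩ := ih
    refine ⟨w.flatMap σ, ?_, by simpa only [smul_zero] using h.walkStaysIn_flatMap hℓ hw⟩
    have hdouble : w.length * 2 ≤ (w.flatMap σ).length := by
      rw [List.length_flatMap, ← List.length_map (f := fun j => (σ j).length), ← smul_eq_mul]
      exact List.card_nsmul_le_sum _ 2 (by simpa using fun j _ => hσ j)
    omega

end IsGraphAttractor

end Substitution

section AddCircle

variable {T : ℝ}

theorem image_coe_addCircle_eq_univ [Fact (0 < T)] {s : ℝ} (hs : Irrational (s / T)) {W : Set ℝ}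
    (hW : IsCompact W) (hmem : ∀ n : ℕ, ∃ x ∈ W, (x : AddCircle T) = n • (s : AddCircle T)) :
    (fun x : ℝ => (x : AddCircle T)) '' W = univ := by
  have hdense : DenseRange fun n : ℕ => n • (s : AddCircle T) :=
    denseRange_zsmul_iff_nsmul.1 (AddCircle.denseRange_zsmul_coe_iff.2 hs)
  have hclosed : IsClosed ((fun x : ℝ => (x : AddCircle T)) '' W) :=
    (hW.image (AddCircle.continuous_mk' T)).isClosed
  rw [← univ_subset_iff, ← hdense.closure_range]
  exact closure_minimal (range_subset_iff.2 hmem) hclosed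

theorem exists_nonempty_interior_of_image_coe_addCircle {ι : Type*} [Countable ι]
    {K : ι → Set ℝ} (hK : ∀ i, IsClosed (K i))
    (huniv : (fun x : ℝ => (x : AddCircle T)) '' (⋃ i, K i) = univ) :
    ∃ i, (interior (K i)).Nonempty := by
  have hcover : ⋃ p : ι × ℤ, Homeomorph.addRight (p.2 • T) ⁻¹' K p.1 = univ := by
    refine eq_univ_of_forall fun x => ?_
    obtain ⟨z, hz, hzx⟩ := huniv.ge (mem_univ (x : AddCircle T))
    obtain ⟨i, hi⟩ := mem_iUnion.1 hz
    obtain ⟨n, hn⟩ := (AddCircle.coe_eq_zero_iff T).1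
      (show ((z - x : ℝ) : AddCircle T) = 0 by rw [AddCircle.coe_sub]; exact sub_eq_zero.2 hzx)
    refine mem_iUnion.2 ⟨(i, n), ?_⟩
    simpa only [mem_preimage, Homeomorph.coe_addRight, hn, add_sub_cancel] using hi
  obtain ⟨p, x, hx⟩ := nonempty_interior_of_iUnion_of_closed
    (fun p : ι × ℤ => (hK p.1).preimage (Homeomorph.continuous _)) hcover
  rw [← Homeomorph.preimage_interior] at hx
  exact ⟨p.1, _, hx⟩

end AddCircle

theorem mapsTo_mul_add_Icc {q d u v u' v' : ℝ} (hq : 0 ≤ q) (hu : u' ≤ q * u + d)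
    (hv : q * v + d ≤ v') : MapsTo (fun x => q • x + d) (Icc u v) (Icc u' v') := by
  intro x hx
  have hleft : q * u ≤ q * x := mul_le_mul_of_nonneg_left hx.1 hq
  have hright : q * x ≤ q * v := mul_le_mul_of_nonneg_left hx.2 hq
  simp only [smul_eq_mul, mem_Icc]
  exact ⟨by linarith, by linarith⟩

/-- The alphabet of the substitution ρ̃. -/
inductive Letter_s10
  | a
  | b

namespace Letter_s10

instance : Finite Letter_s10 :=
  Finite.of_surjective (fun c : Bool => if c then a else b) fun
    | a => ⟨true, rfl⟩
    | b => ⟨false, rfl⟩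

/-- The substitution ρ̃. -/
def rhoTilde : Letter_s10 → List Letter_s10
  | a => [a, a, b]
  | b => [b, a]

/-- The Galois conjugates of the tile lengths `φ` of `a` and `1` of `b`. -/
noncomputable def conjLength : Letter_s10 → ℝ
  | a => ψ
  | b => 1

end Letter_s10

/-- The defining system of the windows of ρ̃ in internal space, where the inflation factor `φ²` acts
as its conjugate `ψ²`. -/
abbrev IsRhoTildeAttractor (K : Letter_s10 → Set ℝ) : Prop :=
  IsGraphAttractor (ψ ^ 2) (prefixShifts Letter_s10.rhoTilde Letter_s10.conjLength) K

namespace Letter_s10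

/-- The pair of windows as a family indexed by the letters. -/
def windows (Wa Wb : Set ℝ) : Letter_s10 → Set ℝ
  | a => Wa
  | b => Wb

theorem iUnion_letter {α : Type*} (s : Letter_s10 → Set α) : ⋃ c, s c = s a ∪ s b := by
  ext x
  simp only [mem_iUnion, mem_union]
  exact ⟨fun | ⟨a, hx⟩ => Or.inl hx | ⟨b, hx⟩ => Or.inr hx,
    fun | .inl hx => ⟨a, hx⟩ | .inr hx => ⟨b, hx⟩⟩

theorem prefixShifts_a_a : prefixShifts rhoTilde conjLength a a = {0, ψ} := by
  ext d
  simp [prefixShifts, rhoTilde, conjLength, List.cons_eq_append_iff, or_and_right, exists_or,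
    @eq_comm _ d]

theorem prefixShifts_a_b : prefixShifts rhoTilde conjLength a b = {1} := by
  ext d
  simp [prefixShifts, rhoTilde, conjLength, List.cons_eq_append_iff, @eq_comm _ d]

theorem prefixShifts_b_a : prefixShifts rhoTilde conjLength b a = {2 * ψ} := by
  ext d
  simp [prefixShifts, rhoTilde, conjLength, List.cons_eq_append_iff, @eq_comm _ d, two_mul]

theorem prefixShifts_b_b : prefixShifts rhoTilde conjLength b b = {0} := by
  ext d
  simp [prefixShifts, rhoTilde, List.cons_eq_append_iff, @eq_comm _ d]

theorem nonempty_prefixShifts (i j : Letter_s10) : (prefixShifts rhoTilde conjLength i j).Nonempty := by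
  cases i <;> cases j <;>
    simp only [prefixShifts_a_a, prefixShifts_a_b, prefixShifts_b_a, prefixShifts_b_b,
      insert_nonempty, singleton_nonempty]

theorem sum_conjLength_rhoTilde (c : Letter_s10) :
    ((rhoTilde c).map conjLength).sum = ψ ^ 2 • conjLength c := by
  cases c <;> simp only [rhoTilde, conjLength, List.map_cons, List.map_nil, List.sum_cons,
    List.sum_nil, smul_eq_mul, Real.goldenConj_sq]
  · linear_combination -Real.goldenConj_sq
  · ring

theorem two_le_length_rhoTilde (c : Letter_s10) : 2 ≤ (rhoTilde c).length := by
  cases c <;> simp only [rhoTilde, List.length_cons, List.length_nil] <;> norm_num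

theorem coe_conjLength (c : Letter_s10) : (conjLength c : AddCircle φ) = (1 : ℝ) := by
  cases c
  · rw [conjLength, ← Real.one_sub_goldenConj, AddCircle.coe_sub, AddCircle.coe_period, sub_zero]
  · rfl

theorem isRhoTildeAttractor_windows {Wa Wb : Set ℝ} (hWa : Wa.Nonempty) (hWb : Wb.Nonempty)
    (hca : IsCompact Wa) (hcb : IsCompact Wb)
    (ha : Wa = (fun x => ψ ^ 2 * x) '' Wa ∪ (fun x => ψ ^ 2 * x + ψ) '' Wa ∪
      (fun x => ψ ^ 2 * x + 1) '' Wb)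
    (hb : Wb = (fun x => ψ ^ 2 * x + 2 * ψ) '' Wa ∪ (fun x => ψ ^ 2 * x) '' Wb) :
    IsRhoTildeAttractor (windows Wa Wb) where
  isCompact := fun | a => hca | b => hcb
  nonempty := fun | a => hWa | b => hWb
  eq_iUnion c := by
    cases c <;> simpa only [iUnion_letter, prefixShifts_a_a, prefixShifts_a_b, prefixShifts_b_a,
      prefixShifts_b_b, biUnion_insert, biUnion_singleton, smul_eq_mul, add_zero, windows]

theorem neg_two_thirds_lt_goldenConj : -(2 / 3) < ψ := by
  nlinarith [Real.goldenConj_sq, Real.goldenConj_neg]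

theorem goldenConj_lt_neg_three_fifths : ψ < -(3 / 5) := by
  nlinarith [Real.goldenConj_sq, Real.goldenConj_neg]

theorem goldenConj_sq_pos : 0 < ψ ^ 2 :=
  sq_pos_of_neg Real.goldenConj_neg

theorem goldenConj_sq_lt_one : ψ ^ 2 < 1 := by
  linarith [Real.goldenConj_sq, Real.goldenConj_neg]

theorem abs_goldenConj_sq_lt_one : |ψ ^ 2| < 1 := by
  rw [abs_of_pos goldenConj_sq_pos]
  exact goldenConj_sq_lt_one

theorem goldenConj_sq_mul_sub_one : ψ ^ 2 * (ψ - 1) = ψ := by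
  linear_combination ψ * Real.goldenConj_sq

theorem mapsTo_windows_Icc (i j : Letter_s10) {d : ℝ} (hd : d ∈ prefixShifts rhoTilde conjLength i j) :
    MapsTo (fun x => ψ ^ 2 • x + d) (windows (Icc (-1) 1) (Icc (ψ - 1) 0) j)
      (windows (Icc (-1) 1) (Icc (ψ - 1) 0) i) := by
  have hlo := Real.neg_one_lt_goldenConj
  have hhi := goldenConj_lt_neg_three_fifths
  have hψ := Real.goldenConj_sq
  have hψ' := goldenConj_sq_mul_sub_one
  cases i <;> cases j <;>
    simp only [prefixShifts_a_a, prefixShifts_a_b, prefixShifts_b_a, prefixShifts_b_b,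
      mem_insert_iff, mem_singleton_iff] at hd
  case a.a =>
    rcases hd with rfl | rfl <;>
      exact mapsTo_mul_add_Icc goldenConj_sq_pos.le (by linarith) (by linarith)
  all_goals
    subst hd
    exact mapsTo_mul_add_Icc goldenConj_sq_pos.le (by linarith) (by linarith)

end Letter_s10

namespace IsRhoTildeAttractor

open Letter_s10

variable {K : Letter_s10 → Set ℝ} (h : IsRhoTildeAttractor K)
include h

theorem subset_windows_Icc (c : Letter_s10) : K c ⊆ windows (Icc (-1) 1) (Icc (ψ - 1) 0) c := by
  have hclosed : IsClosed (windows (Icc (-1) 1) (Icc (ψ - 1) 0) c) := by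
    cases c <;> exact isClosed_Icc
  have hne : ∀ c, (windows (Icc (-1) 1) (Icc (ψ - 1) 0) c).Nonempty := fun
    | a => nonempty_Icc.2 (by norm_num)
    | b => nonempty_Icc.2 (by linarith [Real.goldenConj_neg])
  rw [← hclosed.closure_eq]
  exact h.subset_closure_of_mapsTo abs_goldenConj_sq_lt_one hne
    (fun i j _ hd => mapsTo_windows_Icc i j hd) c

theorem zero_mem (c : Letter_s10) : (0 : ℝ) ∈ K c := by
  refine IsGraphAttractor.zero_mem h abs_goldenConj_sq_lt_one ?_
  cases c
  · simp only [prefixShifts_a_a, mem_insert_iff, true_or]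
  · simp only [prefixShifts_b_b, mem_singleton_iff]

theorem isGreatest_a : IsGreatest (K a) 1 := by
  refine ⟨h.mem_iff.2 ⟨b, 1, ?_, 0, h.zero_mem b, ?_⟩, fun x hx => (h.subset_windows_Icc a hx).2⟩
  · rw [prefixShifts_a_b, mem_singleton_iff]
  · rw [smul_zero, zero_add]

theorem isGreatest_b : IsGreatest (K b) 0 :=
  ⟨h.zero_mem b, fun _ hx => (h.subset_windows_Icc b hx).2⟩

-- The maximum of `ψ² K a + 2ψ` is below `-3 / 4`, which is below the lower bound `ψ` of `ψ² K b`.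
theorem exists_mul_eq_of_neg_three_fourths_le {x : ℝ} (hx : x ∈ K b) (hle : -(3 / 4) ≤ x) :
    ∃ y ∈ K b, ψ ^ 2 * y = x := by
  obtain ⟨c, d, hd, y, hy, rfl⟩ := h.mem_iff.1 hx
  cases c
  · rw [prefixShifts_b_a, mem_singleton_iff] at hd
    have hmul : ψ ^ 2 * y ≤ ψ ^ 2 :=
      mul_le_of_le_one_right goldenConj_sq_pos.le (h.isGreatest_a.2 hy)
    rw [smul_eq_mul, hd] at hle
    linarith [goldenConj_lt_neg_three_fifths, Real.goldenConj_sq]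
  · rw [prefixShifts_b_b, mem_singleton_iff] at hd
    exact ⟨y, hy, by rw [smul_eq_mul, hd, add_zero]⟩

theorem neg_mul_pow_notMem_b (k : ℕ) : 0 - 3 / 4 * (ψ ^ 2) ^ k ∉ K b := by
  have himage : ∀ k : ℕ, 0 - 3 / 4 * (ψ ^ 2) ^ k ∈ K b →
      ∃ y ∈ K b, ψ ^ 2 * y = 0 - 3 / 4 * (ψ ^ 2) ^ k := fun k hx =>
    have hpow : (ψ ^ 2) ^ k ≤ 1 := pow_le_one₀ goldenConj_sq_pos.le goldenConj_sq_lt_one.le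
    h.exists_mul_eq_of_neg_three_fourths_le hx (by linarith)
  induction k with
  | zero =>
    intro hx
    obtain ⟨y, hy, hyx⟩ := himage 0 hx
    have hmul : ψ ^ 2 * (ψ - 1) ≤ ψ ^ 2 * y :=
      mul_le_mul_of_nonneg_left (h.subset_windows_Icc b hy).1 goldenConj_sq_pos.le
    rw [pow_zero] at hyx
    linarith [goldenConj_sq_mul_sub_one, neg_two_thirds_lt_goldenConj]
  | succ k ih =>
    intro hx
    obtain ⟨y, hy, hyx⟩ := himage (k + 1) hx
    have hy_eq : y = 0 - 3 / 4 * (ψ ^ 2) ^ k :=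
      mul_left_cancel₀ goldenConj_sq_pos.ne' (hyx.trans (by ring))
    exact ih (hy_eq ▸ hy)

theorem hasGapsAt_b : HasGapsAt (3 / 4) (ψ ^ 2) 0 (K b) :=
  Eventually.of_forall h.neg_mul_pow_notMem_b

theorem hasGapsAt_a : HasGapsAt (3 / 4) (ψ ^ 2) 1 (K a) := by
  have hpos := goldenConj_sq_pos
  have hlt := goldenConj_sq_lt_one
  have hlarge : ∀ r : ℝ, 1 ≤ r → HasGapsAt (3 / 4) (ψ ^ 2) (r / ψ ^ 2) (K a) := fun r hr =>
    hasGapsAt_of_notMem (h.isCompact a).isClosed abs_goldenConj_sq_lt_one fun hmem =>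
      ((one_lt_div hpos).2 (hlt.trans_le hr)).not_ge (h.isGreatest_a.2 hmem)
  refine h.hasGapsAt_of_preimages hpos.ne' (finite_prefixShifts _ _) fun c d hd => ?_
  cases c
  · rw [prefixShifts_a_a] at hd
    rcases hd with rfl | rfl
    · exact hlarge _ (by norm_num)
    · exact hlarge _ (by linarith [Real.goldenConj_neg])
  · rw [prefixShifts_a_b, mem_singleton_iff] at hd
    rw [hd, sub_self, zero_div]
    exact h.hasGapsAt_b

theorem hasGapsAt_of_isGreatest (c : Letter_s10) (M : ℝ) (hM : IsGreatest (K c) M) :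
    HasGapsAt (3 / 4) (ψ ^ 2) M (K c) := by
  cases c
  · rw [hM.unique h.isGreatest_a]
    exact h.hasGapsAt_a
  · rw [hM.unique h.isGreatest_b]
    exact h.hasGapsAt_b

theorem exists_nonempty_interior : ∃ c, (interior (K c)).Nonempty := by
  have : Fact (0 < φ) := ⟨Real.goldenRatio_pos⟩
  have hirr : Irrational (1 / φ) := by
    rw [one_div]
    exact Real.goldenRatio_irrational.inv
  refine exists_nonempty_interior_of_image_coe_addCircle (T := φ)
    (fun c => (h.isCompact c).isClosed)
    (image_coe_addCircle_eq_univ hirr (isCompact_iUnion h.isCompact) fun n => ?_)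
  obtain ⟨w, hn, hw⟩ := h.exists_walkStaysIn_of_two_le_length sum_conjLength_rhoTilde
    two_le_length_rhoTilde (h.zero_mem a) n
  obtain ⟨x, hx, hxn⟩ :=
    hw.exists_map_eq (QuotientAddGroup.mk' (AddSubgroup.zmultiples φ)) coe_conjLength hn
  exact ⟨x, hx, hxn.trans (by rw [map_zero, zero_add])⟩

theorem isCantorval : IsCantorval (⋃ c, K c) :=
  IsGraphAttractor.isCantorval h goldenConj_sq_pos goldenConj_sq_lt_one (by norm_num)
    (finite_prefixShifts _ _) nonempty_prefixShifts h.hasGapsAt_of_isGreatest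
    h.exists_nonempty_interior

end IsRhoTildeAttractor

/-- The union $W = W_a ∪ W_b$ of the windows of ρ̃ = (a ↦ aab, b ↦ ba) is a
Cantorval: compact, equal to the closure of its interior, and no connected
component of $W$ is open in the subspace topology of $W$. -/
theorem rho_tilde_window_is_Cantorval (τ : ℝ) (hτ : τ = (1 + Real.sqrt 5) / 2)
    (Wa Wb : Set ℝ) (hWa : Wa.Nonempty) (hWb : Wb.Nonempty)
    (hca : IsCompact Wa) (hcb : IsCompact Wb)
    (h1 : Wa = (fun x : ℝ => (τ ^ 2)⁻¹ * x) '' Wa ∪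
               (fun x : ℝ => (τ ^ 2)⁻¹ * (x - τ)) '' Wa ∪
               (fun x : ℝ => (τ ^ 2)⁻¹ * (x + τ ^ 2)) '' Wb)
    (h2 : Wb = (fun x : ℝ => (τ ^ 2)⁻¹ * (x - 2 * τ)) '' Wa ∪
               (fun x : ℝ => (τ ^ 2)⁻¹ * x) '' Wb) :
    IsCompact (Wa ∪ Wb) ∧
    closure (interior (Wa ∪ Wb)) = Wa ∪ Wb ∧
    ∀ x ∈ Wa ∪ Wb,
      ¬ IsOpen (Subtype.val ⁻¹' connectedComponentIn (Wa ∪ Wb) x :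
          Set (Wa ∪ Wb : Set ℝ)) := by
  have hinv : (φ ^ 2)⁻¹ = ψ ^ 2 := by rw [← inv_pow, Real.inv_goldenRatio, neg_sq]
  have hshift_φ (x : ℝ) : ψ ^ 2 * (x - φ) = ψ ^ 2 * x + ψ := by
    linear_combination -ψ * Real.goldenRatio_mul_goldenConj
  have hshift_two_mul_φ (x : ℝ) : ψ ^ 2 * (x - 2 * φ) = ψ ^ 2 * x + 2 * ψ := by
    linear_combination -2 * ψ * Real.goldenRatio_mul_goldenConj
  have hshift_φ_sq (x : ℝ) : ψ ^ 2 * (x + φ ^ 2) = ψ ^ 2 * x + 1 := by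
    linear_combination (φ * ψ - 1) * Real.goldenRatio_mul_goldenConj
  obtain rfl : τ = φ := hτ
  simp only [hinv, hshift_φ, hshift_two_mul_φ, hshift_φ_sq] at h1 h2
  have h : IsRhoTildeAttractor (Letter_s10.windows Wa Wb) :=
    Letter_s10.isRhoTildeAttractor_windows hWa hWb hca hcb h1 h2
  exact Letter_s10.iUnion_letter (Letter_s10.windows Wa Wb) ▸ h.isCantorval
end

section
/- Let τ = (1+√5)/2, let W_a, W_b be nonempty compact subsets of ℝ satisfying W_a = τ⁻²·W_a ∪ τ⁻²·(W_a − τ) ∪ τ⁻²·(W_b + τ²) and W_b = τ⁻²·(W_a − 2τ) ∪ τ⁻²·W_b, and set W = W_a ∪ W_b. Then the Hausdorff dimension of the topological boundary of W equals log(1+√2)/(2·log τ), and the boundaries ∂W_a and ∂W_b have this same Hausdorff dimension. -/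
/-!
In internal space the windows form a graph-directed self-similar system of ratio `φ⁻²`. It tiles
without overlap: the measures satisfy the Perron-Frobenius inequality of the substitution matrix,
hence with equality, and they are positive because the exchange of pieces makes the `φℤ`-translates
of `W` invariant under `ℤ + φℤ`, so that they cover `ℝ`. A boundary point then lies in two of the
tiles `W_a`, `W_b` and their neighbouring `φℤ`-translates. Subdividing such an overlap produces,
besides the point `1`, only four types of overlap, which form a self-similar system whose incidence
matrix has Perron eigenvalue `1 + √2`, whence the dimension. The upper bound comes from the
cylinder covers. For the lower bound, a cylinder of the overlap system is a pair of cylinders of the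
tiling, so by comparing volumes a short interval meets boundedly many of them, and counting the
cylinders met by a finite cover bounds its Hausdorff sums below.
-/

open MeasureTheory Set Filter Topology Metric
open scoped ENNReal NNReal Pointwise goldenRatio

/-! ### Hausdorff measures -/

section HausdorffPre

variable {X : Type*} [EMetricSpace X] {d : ℝ} {r : ℝ≥0∞} {s : Set X}

/-- The size-`r` premeasure of the `d`-dimensional Hausdorff measure: the infimum of
`∑ ediam ^ d` over the countable covers by sets of diameter at most `r`. -/
noncomputable def hausdorffPre (d : ℝ) (r : ℝ≥0∞) : OuterMeasure X :=
  OuterMeasure.mkMetric'.pre (fun s ↦ ediam s ^ d) r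

theorem hausdorffPre_le_ediam (hs : ediam s ≤ r) : hausdorffPre d r s ≤ ediam s ^ d :=
  OuterMeasure.mkMetric'.pre_le hs

theorem hausdorffPre_preimage_le {Y : Type*} [EMetricSpace Y] {f : X → Y} {c : ℝ≥0}
    (hf : AntilipschitzWith c f) (hc : c ≠ 0) (hd : 0 ≤ d) (s : Set Y) :
    hausdorffPre d (c * r) (f ⁻¹' s) ≤ c ^ d * hausdorffPre d r s := by
  have hc0 : (c : ℝ≥0∞) ^ d ≠ 0 := by simp [hc]
  have hct : (c : ℝ≥0∞) ^ d ≠ ⊤ := ENNReal.rpow_ne_top_of_nonneg hd ENNReal.coe_ne_top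
  have hle : ((c : ℝ≥0∞) ^ d)⁻¹ • OuterMeasure.map f (hausdorffPre d (c * r)) ≤
      hausdorffPre d r := by
    refine OuterMeasure.mkMetric'.le_pre.2 fun s hs ↦ ?_
    have hdiam : ediam (f ⁻¹' s) ≤ c * ediam s := hf.ediam_preimage_le s
    rw [smul_apply, OuterMeasure.map_apply, smul_eq_mul,
      ENNReal.inv_mul_le_iff hc0 hct, ← ENNReal.mul_rpow_of_nonneg _ _ hd]
    grw [hausdorffPre_le_ediam (by grw [hdiam, hs]), hdiam]
  rw [← ENNReal.inv_mul_le_iff hc0 hct]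
  exact hle s

variable [MeasurableSpace X] [BorelSpace X]

theorem tendsto_hausdorffPre (d : ℝ) (s : Set X) :
    Tendsto (fun r ↦ hausdorffPre d r s) (𝓝[>] 0) (𝓝 (μH[d] s)) := by
  rw [Measure.hausdorffMeasure, ← OuterMeasure.coe_mkMetric]
  exact OuterMeasure.mkMetric'.tendsto_pre _ s

theorem hausdorffPre_le_hausdorffMeasure (hr : 0 < r) (s : Set X) :
    hausdorffPre d r s ≤ μH[d] s := by
  rw [Measure.hausdorffMeasure, ← OuterMeasure.coe_mkMetric]
  exact le_iSup₂ (f := fun r (_ : 0 < r) ↦ hausdorffPre (X := X) d r) r hr s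

end HausdorffPre

section HausdorffCover

variable {X : Type*} [EMetricSpace X] {d : ℝ}

theorem exists_isOpen_superset_ediam_rpow_le (hd : 0 < d) (s : Set X) {δ : ℝ≥0∞} (hδ : 0 < δ) :
    ∃ U, IsOpen U ∧ s ⊆ U ∧ ediam U ^ d ≤ (⨆ _ : s.Nonempty, ediam s ^ d) + δ := by
  rcases s.eq_empty_or_nonempty with rfl | hs
  · exact ⟨∅, isOpen_empty, subset_rfl, by simp [ENNReal.zero_rpow_of_pos hd]⟩
  rw [iSup_pos hs]
  rcases eq_or_ne (ediam s) ⊤ with htop | htop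
  · exact ⟨univ, isOpen_univ, subset_univ s, by simp [htop, ENNReal.top_rpow_of_pos hd]⟩
  have hlim : Tendsto (fun ε : ℝ≥0 ↦ (ediam s + 2 * ε) ^ d) (𝓝[>] 0) (𝓝 (ediam s ^ d)) := by
    have hcont : Continuous fun ε : ℝ≥0 ↦ (ediam s + 2 * (ε : ℝ≥0∞)) ^ d :=
      ENNReal.continuous_rpow_const.comp <| continuous_const.add <|
        (ENNReal.continuous_const_mul ENNReal.ofNat_ne_top).comp ENNReal.continuous_coe
    simpa using (hcont.tendsto 0).mono_left nhdsWithin_le_nhds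
  have hlt : ediam s ^ d < ediam s ^ d + δ :=
    ENNReal.lt_add_right (ENNReal.rpow_ne_top_of_nonneg hd.le htop) hδ.ne'
  obtain ⟨ε, hε, hε0⟩ := ((hlim.eventually_lt_const hlt).and self_mem_nhdsWithin).exists
  refine ⟨thickening ε s, isOpen_thickening, self_subset_thickening (NNReal.coe_pos.2 hε0) s, ?_⟩
  grw [ediam_thickening_le, hε]

theorem le_hausdorffMeasure_of_finite_open_cover [MeasurableSpace X] [BorelSpace X] {K : Set X}
    (hK : IsCompact K) (hd : 0 < d) {ε : ℝ≥0∞}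
    (h : ∀ (F : Finset ℕ) (U : ℕ → Set X), (∀ n, IsOpen (U n)) → K ⊆ ⋃ n ∈ F, U n →
      ε ≤ ∑ n ∈ F, ediam (U n) ^ d) : ε ≤ μH[d] K := by
  rw [Measure.hausdorffMeasure_apply]
  refine le_iSup₂_of_le 1 one_pos (le_iInf₂ fun t ht ↦ le_iInf fun _ ↦ ?_)
  refine ENNReal.le_of_forall_pos_le_add fun δ hδ _ ↦ ?_
  obtain ⟨δ', hδ'pos, hδ'sum⟩ :=
    ENNReal.exists_pos_sum_of_countable (ENNReal.coe_ne_zero.2 hδ.ne') ℕ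
  choose U hUo htU hU using fun n ↦
    exists_isOpen_superset_ediam_rpow_le hd (t n) (ENNReal.coe_pos.2 (hδ'pos n))
  obtain ⟨F, hF⟩ := hK.elim_finite_subcover U hUo (ht.trans (iUnion_mono htU))
  calc ε ≤ ∑ n ∈ F, ediam (U n) ^ d := h F U hUo hF
    _ ≤ ∑' n, ediam (U n) ^ d := ENNReal.sum_le_tsum F
    _ ≤ ∑' n, ((⨆ _ : (t n).Nonempty, ediam (t n) ^ d) + δ' n) := ENNReal.tsum_le_tsum hU
    _ ≤ (∑' n, ⨆ _ : (t n).Nonempty, ediam (t n) ^ d) + δ := by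
        grw [ENNReal.tsum_add, hδ'sum]

end HausdorffCover

section AlmostDisjoint

variable {α ι : Type*} [MeasurableSpace α] {μ : Measure α} [Fintype ι] {P : ι → Set α} {S : Set α}

theorem sum_measure_inter_le (hP : ∑ i, μ (P i) ≤ μ (⋃ i, P i)) (hfin : ∑ i, μ (P i) ≠ ⊤)
    (hS : MeasurableSet S) : ∑ i, μ (P i ∩ S) ≤ μ ((⋃ i, P i) ∩ S) := by
  have hdiff : ∑ i, μ (P i \ S) ≠ ⊤ :=
    ne_top_of_le_ne_top hfin (Finset.sum_le_sum fun i _ ↦ measure_mono sdiff_subset)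
  refine (ENNReal.add_le_add_iff_right hdiff).1 ?_
  calc ∑ i, μ (P i ∩ S) + ∑ i, μ (P i \ S) = ∑ i, μ (P i) := by
        simp only [← Finset.sum_add_distrib, measure_inter_add_sdiff _ hS]
    _ ≤ μ ((⋃ i, P i) ∩ S) + μ ((⋃ i, P i) \ S) := by rwa [measure_inter_add_sdiff _ hS]
    _ ≤ μ ((⋃ i, P i) ∩ S) + ∑ i, μ (P i \ S) := by
        grw [iUnion_sdiff, measure_iUnion_fintype_le]

theorem measure_inter_eq_zero (hP : ∑ i, μ (P i) ≤ μ (⋃ i, P i)) (hfin : ∑ i, μ (P i) ≠ ⊤)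
    {i j : ι} (hj : MeasurableSet (P j)) (hij : i ≠ j) : μ (P i ∩ P j) = 0 := by
  classical
  have hjfin : μ (P j) ≠ ⊤ := (ENNReal.sum_ne_top.1 hfin) j (Finset.mem_univ j)
  have hle : μ (P i ∩ P j) + μ (P j) ≤ 0 + μ (P j) := calc
    μ (P i ∩ P j) + μ (P j) = ∑ k ∈ {i, j}, μ (P k ∩ P j) := by
      rw [Finset.sum_pair hij, inter_self]
    _ ≤ ∑ k, μ (P k ∩ P j) := Finset.sum_le_univ_sum_of_nonneg fun _ ↦ zero_le
    _ ≤ μ ((⋃ k, P k) ∩ P j) := sum_measure_inter_le hP hfin hj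
    _ ≤ 0 + μ (P j) := by grw [inter_subset_right, zero_add]
  exact le_antisymm ((ENNReal.add_le_add_iff_right hjfin).1 hle) zero_le

end AlmostDisjoint

theorem preimage_cthickening_image_subset {X Y : Type*} [PseudoEMetricSpace X]
    [PseudoEMetricSpace Y] {f : X → Y} {c : ℝ≥0} (hf : AntilipschitzWith c f) (hc : c ≠ 0) (δ : ℝ)
    (s : Set X) : f ⁻¹' cthickening δ (f '' s) ⊆ cthickening (c * δ) s := by
  intro x hx
  rw [mem_preimage, mem_cthickening_iff] at hx
  rw [mem_cthickening_iff, ENNReal.ofReal_mul c.coe_nonneg, ENNReal.ofReal_coe_nnreal]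
  grw [← hx]
  rw [mul_comm, ← ENNReal.div_le_iff (mod_cast hc) ENNReal.coe_ne_top]
  refine le_infEDist.2 (forall_mem_image.2 fun y hy ↦ ?_)
  refine ENNReal.div_le_of_le_mul' ?_
  grw [infEDist_le_edist_of_mem hy, hf x y]

/-! ### Graph-directed systems -/

/-- A graph-directed iterated function system on `ℝ`, recorded through the inverses
`x ↦ ratio * x + shift` of its contractions. All maps share one expansion ratio, and the edges
leaving the vertex `i` are numbered by `Fin (degree i)`. -/
structure ExpandingGraph (ι : Type*) where
  ratio : ℝ
  one_lt_ratio : 1 < ratio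
  degree : ι → ℕ
  target : (i : ι) → Fin (degree i) → ι
  shift : (i : ι) → Fin (degree i) → ℝ

namespace ExpandingGraph

variable {ι : Type*} (G : ExpandingGraph ι)

/-- The common contraction ratio of the system. -/
noncomputable def contraction : ℝ≥0 := G.ratio.toNNReal⁻¹

/-- The expanding affine map attached to an edge. -/
def map (i : ι) (e : Fin (G.degree i)) (x : ℝ) : ℝ := G.ratio * x + G.shift i e

/-- The Hutchinson operator: its value at `i` is the union of the contracted copies of the sets
sitting at the targets of the edges leaving `i`. -/
def hutchinson (T : ι → Set ℝ) (i : ι) : Set ℝ := ⋃ e, G.map i e ⁻¹' T (G.target i e)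

/-- A family of nonempty compact sets fixed by the Hutchinson operator. -/
structure IsAttractor (T : ι → Set ℝ) : Prop where
  isCompact : ∀ i, IsCompact (T i)
  nonempty : ∀ i, (T i).Nonempty
  eq : ∀ i, T i = G.hutchinson T i

variable {G} {T P Q : ι → Set ℝ} {i : ι} {x : ℝ}

theorem ratio_pos : 0 < G.ratio := zero_lt_one.trans G.one_lt_ratio

theorem mem_hutchinson : x ∈ G.hutchinson T i ↔ ∃ e, G.map i e x ∈ T (G.target i e) := by
  simp only [hutchinson, mem_iUnion, mem_preimage]

theorem IsAttractor.mem_iff (hT : G.IsAttractor T) :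
    x ∈ T i ↔ ∃ e, G.map i e x ∈ T (G.target i e) :=
  (Set.ext_iff.1 (hT.eq i) x).trans mem_hutchinson

theorem map_sub_map (e : Fin (G.degree i)) (x y : ℝ) :
    G.map i e x - G.map i e y = G.ratio * (x - y) := by
  simp only [map]; ring

theorem dist_map (e : Fin (G.degree i)) (x y : ℝ) :
    dist (G.map i e x) (G.map i e y) = G.ratio * dist x y := by
  rw [Real.dist_eq, map_sub_map, abs_mul, abs_of_pos ratio_pos, Real.dist_eq]

theorem map_surjective (i : ι) (e : Fin (G.degree i)) : Function.Surjective (G.map i e) := fun y ↦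
  ⟨(y - G.shift i e) / G.ratio, by
    rw [map, mul_div_cancel₀ _ ratio_pos.ne', sub_add_cancel]⟩

theorem map_injective (i : ι) (e : Fin (G.degree i)) : Function.Injective (G.map i e) :=
  (add_left_injective _).comp (mul_right_injective₀ ratio_pos.ne')

theorem isOpenMap_map (i : ι) (e : Fin (G.degree i)) : IsOpenMap (G.map i e) :=
  (isOpenMap_add_right (G.shift i e)).comp (Homeomorph.mulLeft₀ G.ratio ratio_pos.ne').isOpenMap

theorem continuous_map (i : ι) (e : Fin (G.degree i)) : Continuous (G.map i e) := by
  unfold map; fun_prop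

theorem subset_of_hutchinson [Finite ι] (hP : ∀ i, P i ⊆ G.hutchinson P i)
    (hPb : ∀ i, Bornology.IsBounded (P i)) (hQ : ∀ i, G.hutchinson Q i ⊆ Q i)
    (hQc : ∀ i, IsClosed (Q i)) (hQn : ∀ i, (Q i).Nonempty) (i : ι) : P i ⊆ Q i := by
  choose q hq using hQn
  have hbdd : Bornology.IsBounded ((⋃ i, P i) ∪ range q) :=
    (Bornology.isBounded_iUnion.2 hPb).union (finite_range q).isBounded
  have hinf : ∀ n i x, x ∈ P i →
      infDist x (Q i) ≤ Metric.diam ((⋃ i, P i) ∪ range q) / G.ratio ^ n := by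
    intro n
    induction n with
    | zero =>
      intro i x hx
      rw [pow_zero, div_one]
      exact (infDist_le_dist_of_mem (hq i)).trans <| dist_le_diam_of_mem hbdd
        (.inl <| mem_iUnion.2 ⟨i, hx⟩) (.inr <| mem_range_self i)
    | succ n ih =>
      intro i x hx
      obtain ⟨e, he⟩ := mem_hutchinson.1 (hP i hx)
      rw [pow_succ, ← div_div, le_div_iff₀' ratio_pos]
      refine le_trans ?_ (ih _ _ he)
      refine (le_infDist ⟨_, hq _⟩).2 fun y hy ↦ ?_
      obtain ⟨z, rfl⟩ := G.map_surjective i e y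
      rw [dist_map]
      gcongr
      · exact ratio_pos.le
      · exact infDist_le_dist_of_mem (hQ i (mem_hutchinson.2 ⟨e, hy⟩))
  intro x hx
  have hlim : Tendsto (fun n ↦ Metric.diam ((⋃ i, P i) ∪ range q) / G.ratio ^ n) atTop (𝓝 0) :=
    tendsto_const_nhds.div_atTop (tendsto_pow_atTop_atTop_of_one_lt G.one_lt_ratio)
  rw [(hQc i).mem_iff_infDist_zero ⟨_, hq i⟩]
  exact le_antisymm (ge_of_tendsto' hlim fun n ↦ hinf n i x hx) infDist_nonneg

theorem IsAttractor.subset (hT : G.IsAttractor T) [Finite ι] (hQ : ∀ i, G.hutchinson Q i ⊆ Q i)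
    (hQc : ∀ i, IsClosed (Q i)) (hQn : ∀ i, (Q i).Nonempty) (i : ι) : T i ⊆ Q i :=
  subset_of_hutchinson (fun i ↦ (hT.eq i).subset) (fun i ↦ (hT.isCompact i).isBounded) hQ hQc hQn i

theorem IsAttractor.unique [Finite ι] (hT : G.IsAttractor T) (hQ : G.IsAttractor Q) : T = Q :=
  funext fun i ↦ (hT.subset (fun i ↦ (hQ.eq i).superset) (fun i ↦ (hQ.isCompact i).isClosed)
    hQ.nonempty i).antisymm (hQ.subset (fun i ↦ (hT.eq i).superset)
    (fun i ↦ (hT.isCompact i).isClosed) hT.nonempty i)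

theorem coe_contraction : (G.contraction : ℝ) = G.ratio⁻¹ := by
  rw [contraction, NNReal.coe_inv, Real.coe_toNNReal _ ratio_pos.le]

theorem contraction_pos : 0 < G.contraction := inv_pos.2 (Real.toNNReal_pos.2 ratio_pos)

theorem contraction_lt_one : G.contraction < 1 :=
  inv_lt_one_of_one_lt₀ (Real.one_lt_toNNReal.2 G.one_lt_ratio)

theorem contraction_rpow {d : ℝ} {s : ℝ≥0} (hs : G.ratio ^ d = s) : G.contraction ^ d = s⁻¹ := by
  rw [← NNReal.coe_inj, NNReal.coe_rpow, coe_contraction, Real.inv_rpow ratio_pos.le, hs,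
    NNReal.coe_inv]

theorem antilipschitzWith_map (i : ι) (e : Fin (G.degree i)) :
    AntilipschitzWith G.contraction (G.map i e) :=
  AntilipschitzWith.of_le_mul_dist fun x y ↦ by
    rw [dist_map, coe_contraction, inv_mul_cancel_left₀ ratio_pos.ne']

section HausdorffUpper

variable {d : ℝ} {w : ι → ℝ≥0} {s : ℝ≥0} {R : ℝ≥0∞} {K N : ι → Set ℝ}

theorem hausdorffPre_le (hd : 0 ≤ d) (hs : G.ratio ^ d = s) (hK : ∀ i, K i ⊆ G.hutchinson K i ∪ N i)
    (hN : ∀ i, μH[d] (N i) = 0) (hR0 : 0 < R) (hR : ∀ i, ediam (K i) ≤ R) (hw : ∀ i, 1 ≤ w i)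
    (hsum : ∀ i, ∑ e, w (G.target i e) ≤ s * w i) (n : ℕ) (i : ι) :
    hausdorffPre d (G.contraction ^ n * R) (K i) ≤ R ^ d * w i := by
  have hs0 : s ≠ 0 := NNReal.coe_ne_zero.1 <| hs ▸ (Real.rpow_pos_of_pos ratio_pos d).ne'
  induction n generalizing i with
  | zero =>
    calc hausdorffPre d (_ * R) (K i) ≤ ediam (K i) ^ d := by
          rw [pow_zero, one_mul]; exact hausdorffPre_le_ediam (hR i)
      _ ≤ R ^ d * w i := by
          grw [hR i, ← hw i, ENNReal.coe_one, mul_one]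
  | succ n ih =>
    set c := G.contraction
    have hr : 0 < (c : ℝ≥0∞) ^ (n + 1) * R :=
      ENNReal.mul_pos (pow_ne_zero _ (mod_cast contraction_pos.ne')) hR0.ne'
    calc hausdorffPre d (c ^ (n + 1) * R) (K i)
      _ ≤ hausdorffPre d (c ^ (n + 1) * R) (G.hutchinson K i ∪ N i) := measure_mono (hK i)
      _ ≤ hausdorffPre d (c ^ (n + 1) * R) (G.hutchinson K i) := by
          grw [measure_union_le, hausdorffPre_le_hausdorffMeasure hr (N i), hN i, add_zero]
      _ ≤ ∑ e, hausdorffPre d (c ^ (n + 1) * R) (G.map i e ⁻¹' K (G.target i e)) :=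
          measure_iUnion_fintype_le _ _
      _ ≤ ∑ e, (c : ℝ≥0∞) ^ d * (R ^ d * w (G.target i e)) := by
          refine Finset.sum_le_sum fun e _ ↦ ?_
          rw [pow_succ', mul_assoc]
          grw [hausdorffPre_preimage_le (antilipschitzWith_map i e) contraction_pos.ne' hd, ih]
      _ = R ^ d * ((c ^ d * ∑ e, w (G.target i e) : ℝ≥0) : ℝ≥0∞) := by
          rw [← Finset.mul_sum, ← Finset.mul_sum, mul_left_comm, ENNReal.coe_mul,
            ENNReal.coe_rpow_of_nonneg _ hd, ENNReal.ofNNReal_finsetSum]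
      _ ≤ R ^ d * w i := by
          grw [hsum i]
          rw [contraction_rpow hs, inv_mul_cancel_left₀ hs0]

theorem hausdorffMeasure_ne_top [Finite ι] (hd : 0 ≤ d) (hs : G.ratio ^ d = s)
    (hK : ∀ i, K i ⊆ G.hutchinson K i ∪ N i) (hN : ∀ i, μH[d] (N i) = 0)
    (hb : ∀ i, Bornology.IsBounded (K i)) (hw : ∀ i, 1 ≤ w i)
    (hsum : ∀ i, ∑ e, w (G.target i e) ≤ s * w i) (i : ι) : μH[d] (K i) ≠ ⊤ := by
  set R := ediam (⋃ i, K i) + 1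
  have hR0 : 0 < R := by positivity
  have hRtop : R ≠ ⊤ :=
    ENNReal.add_ne_top.2 ⟨(Bornology.isBounded_iUnion.2 hb).ediam_ne_top, ENNReal.one_ne_top⟩
  have hR i : ediam (K i) ≤ R := (ediam_mono (subset_iUnion K i)).trans le_self_add
  have hscale : Tendsto (fun n : ℕ ↦ (G.contraction : ℝ≥0∞) ^ n * R) atTop (𝓝[>] 0) := by
    refine tendsto_nhdsWithin_iff.2 ⟨?_, .of_forall fun n ↦ ?_⟩
    · simpa using ENNReal.Tendsto.mul_const
        (ENNReal.tendsto_pow_atTop_nhds_zero_of_lt_one (mod_cast contraction_lt_one)) (.inr hRtop)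
    · exact ENNReal.mul_pos (pow_ne_zero n (mod_cast contraction_pos.ne')) hR0.ne'
  refine ne_top_of_le_ne_top ?_ (le_of_tendsto' ((tendsto_hausdorffPre d (K i)).comp hscale)
    fun n ↦ hausdorffPre_le hd hs hK hN hR0 hR hw hsum n i)
  exact ENNReal.mul_ne_top (ENNReal.rpow_ne_top_of_nonneg hd hRtop) ENNReal.coe_ne_top

end HausdorffUpper

section Count

open scoped Classical in
/-- The weighted number of the depth-`n` cylinders of the family `K` below `i` that meet `U`; a
cylinder ending at the vertex `j` has weight `w j`. Instead of contracting `K`, the recursion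
expands `U`. -/
noncomputable def count (G : ExpandingGraph ι) (K : ι → Set ℝ) (w : ι → ℝ≥0) :
    ℕ → ι → Set ℝ → ℝ≥0
  | 0, i, U => if (K i ∩ U).Nonempty then w i else 0
  | n + 1, i, U => ∑ e, count G K w n (G.target i e) (G.map i e '' U)

variable {K : ι → Set ℝ} {w : ι → ℝ≥0} {s : ℝ≥0} {n : ℕ} {U : Set ℝ}

theorem count_zero_le (i : ι) (U : Set ℝ) : G.count K w 0 i U ≤ w i := by
  rw [count]; split_ifs <;> simp

theorem count_empty (n : ℕ) (i : ι) : G.count K w n i ∅ = 0 := by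
  induction n generalizing i with
  | zero => simp [count]
  | succ n ih => simp [count, ih]

theorem count_succ_le (hK : ∀ i, G.hutchinson K i ⊆ K i)
    (hsum : ∀ i, ∑ e, w (G.target i e) ≤ s * w i) (n : ℕ) (i : ι) (U : Set ℝ) :
    G.count K w (n + 1) i U ≤ s * G.count K w n i U := by
  induction n generalizing i U with
  | zero =>
    simp only [count]
    split_ifs with h
    · exact (Finset.sum_le_sum fun e _ ↦ by split_ifs <;> simp).trans (hsum i)
    · refine (Finset.sum_eq_zero fun e _ ↦ if_neg ?_).trans_le zero_le
      rintro ⟨_, hxK, x, hxU, rfl⟩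
      exact h ⟨x, hK i (mem_hutchinson.2 ⟨e, hxK⟩), hxU⟩
  | succ n ih =>
    rw [count, count, Finset.mul_sum]
    exact Finset.sum_le_sum fun e _ ↦ ih _ _

theorem count_add_le (hK : ∀ i, G.hutchinson K i ⊆ K i)
    (hsum : ∀ i, ∑ e, w (G.target i e) ≤ s * w i) (m k : ℕ) (i : ι) (U : Set ℝ) :
    G.count K w (m + k) i U ≤ s ^ k * G.count K w m i U := by
  induction k with
  | zero => simp
  | succ k ih =>
    grw [← add_assoc, count_succ_le hK hsum, ih, pow_succ', mul_assoc]

theorem le_sum_count (hK : ∀ i, G.hutchinson K i ⊆ K i) (hn : ∀ i, (K i).Nonempty)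
    (hsum : ∀ i, s * w i ≤ ∑ e, w (G.target i e)) {α : Type*} {F : Finset α} {U : α → Set ℝ}
    (hU : K i ⊆ ⋃ j ∈ F, U j) (n : ℕ) : s ^ n * w i ≤ ∑ j ∈ F, G.count K w n i (U j) := by
  induction n generalizing i U with
  | zero =>
    obtain ⟨x, hx⟩ := hn i
    obtain ⟨j, hj, hxj⟩ := mem_iUnion₂.1 (hU hx)
    calc s ^ 0 * w i = G.count K w 0 i (U j) := by
          rw [pow_zero, one_mul, count, if_pos ⟨x, hx, hxj⟩]
      _ ≤ _ := Finset.single_le_sum_of_canonicallyOrdered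
          (f := fun j ↦ G.count K w 0 i (U j)) hj
  | succ n ih =>
    have hcover e : K (G.target i e) ⊆ ⋃ j ∈ F, G.map i e '' U j := by
      intro y hy
      obtain ⟨x, rfl⟩ := G.map_surjective i e y
      obtain ⟨j, hj, hxj⟩ := mem_iUnion₂.1 (hU (hK i (mem_hutchinson.2 ⟨e, hy⟩)))
      exact mem_iUnion₂.2 ⟨j, hj, mem_image_of_mem _ hxj⟩
    calc s ^ (n + 1) * w i ≤ ∑ e, s ^ n * w (G.target i e) := by
          grw [pow_succ, mul_assoc, hsum i, Finset.mul_sum]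
      _ ≤ ∑ e, ∑ j ∈ F, G.count K w n (G.target i e) (G.map i e '' U j) :=
          Finset.sum_le_sum fun e _ ↦ ih (hcover e)
      _ = _ := Finset.sum_comm

end Count

section HausdorffLower

variable {K : ι → Set ℝ} {w : ι → ℝ≥0} {d : ℝ} {s M : ℝ≥0} {U : Set ℝ}

theorem eventually_count_le (hs : G.ratio ^ d = s) (hd : 0 ≤ d)
    (hK : ∀ i, G.hutchinson K i ⊆ K i) (hsum : ∀ i, ∑ e, w (G.target i e) ≤ s * w i)
    (hwM : w i ≤ M) (hM : ∀ n U, ediam U ≤ G.contraction ^ n → G.count K w n i U ≤ M)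
    (hU : IsOpen U) :
    ∀ᶠ n in atTop, (G.count K w n i U : ℝ≥0∞) ≤ s ^ n * (M * s * ediam U ^ d) := by
  rcases U.eq_empty_or_nonempty with rfl | hne
  · simp [count_empty]
  have hs0 : s ≠ 0 := NNReal.coe_ne_zero.1 <| hs ▸ (Real.rpow_pos_of_pos ratio_pos d).ne'
  have hdiam : 0 < ediam U := by
    obtain ⟨x, hx⟩ := hne
    exact ediam_pos_iff.2 (infinite_of_mem_nhds x (hU.mem_nhds hx)).nontrivial
  have hex : ∃ m : ℕ, (G.contraction : ℝ≥0∞) ^ (m + 1) < ediam U :=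
    ((tendsto_add_atTop_iff_nat 1).2 (ENNReal.tendsto_pow_atTop_nhds_zero_of_lt_one
      (mod_cast contraction_lt_one))).eventually_lt_const hdiam |>.exists
  obtain ⟨m, hm, hmin⟩ := Nat.findX hex
  have hcount : G.count K w m i U ≤ M := by
    cases m with
    | zero => exact (count_zero_le i U).trans hwM
    | succ m => exact hM _ U (not_lt.1 (hmin m m.lt_succ_self))
  have hscale : ((s ^ (m + 1))⁻¹ : ℝ≥0) ≤ ediam U ^ d := by
    rw [← inv_pow, ← contraction_rpow hs, ← NNReal.rpow_natCast, ← NNReal.rpow_mul, mul_comm,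
      NNReal.rpow_mul, NNReal.rpow_natCast, ENNReal.coe_rpow_of_nonneg _ hd, ENNReal.coe_pow]
    gcongr
  filter_upwards [eventually_ge_atTop m] with n hn
  obtain ⟨k, rfl⟩ := Nat.exists_eq_add_of_le hn
  calc (G.count K w (m + k) i U : ℝ≥0∞) ≤ ((s ^ k * M : ℝ≥0) : ℝ≥0∞) := by
        grw [count_add_le hK hsum, hcount]
    _ = s ^ (m + k) * (M * s * ((s ^ (m + 1))⁻¹ : ℝ≥0)) := by
        norm_cast
        field_simp
        ring
    _ ≤ s ^ (m + k) * (M * s * ediam U ^ d) := by grw [hscale]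

theorem hausdorffMeasure_ne_zero (hs : G.ratio ^ d = s) (hd : 0 < d)
    (hK : ∀ i, G.hutchinson K i ⊆ K i) (hc : IsCompact (K i)) (hn : ∀ i, (K i).Nonempty)
    (hw : w i ≠ 0) (hsum : ∀ i, ∑ e, w (G.target i e) = s * w i)
    (hM : ∀ n U, ediam U ≤ G.contraction ^ n → G.count K w n i U ≤ M) : μH[d] (K i) ≠ 0 := by
  have hs0 : s ≠ 0 := NNReal.coe_ne_zero.1 <| hs ▸ (Real.rpow_pos_of_pos ratio_pos d).ne'
  set C := (M + w i) * s
  have hC : C ≠ 0 := by positivity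
  suffices ((w i / C : ℝ≥0) : ℝ≥0∞) ≤ μH[d] (K i) from
    fun h ↦ (div_ne_zero hw hC) (by simpa [h] using this)
  refine le_hausdorffMeasure_of_finite_open_cover hc hd fun F U hUo hcov ↦ ?_
  have hev : ∀ᶠ n in atTop, ∀ j ∈ F,
      (G.count K w n i (U j) : ℝ≥0∞) ≤ s ^ n * (C * ediam (U j) ^ d) := by
    refine (Finset.eventually_all F).2 fun j _ ↦ ?_
    simpa [C] using eventually_count_le hs hd.le hK (fun i ↦ (hsum i).le) le_add_self
      (fun n U h ↦ (hM n U h).trans le_self_add) (hUo j)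
  obtain ⟨n, hn'⟩ := hev.exists
  have := calc (s : ℝ≥0∞) ^ n * w i = ((s ^ n * w i : ℝ≥0) : ℝ≥0∞) := by norm_cast
    _ ≤ ((∑ j ∈ F, G.count K w n i (U j) : ℝ≥0) : ℝ≥0∞) :=
        ENNReal.coe_le_coe.2 (le_sum_count hK hn (fun i ↦ (hsum i).ge) hcov n)
    _ ≤ ∑ j ∈ F, (s : ℝ≥0∞) ^ n * (C * ediam (U j) ^ d) := by
        rw [ENNReal.ofNNReal_finsetSum]
        exact Finset.sum_le_sum hn'
    _ = s ^ n * (C * ∑ j ∈ F, ediam (U j) ^ d) := by rw [← Finset.mul_sum, ← Finset.mul_sum]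
  rw [ENNReal.coe_div hC]
  refine ENNReal.div_le_of_le_mul' ?_
  refine (ENNReal.mul_le_mul_iff_right ?_ ?_).1 this
  · exact pow_ne_zero n (by simpa using hs0)
  · finiteness

end HausdorffLower

section Tiles

variable {r : ℝ≥0} {v : ℝ≥0∞} {S : Set ℝ}

theorem ofReal_ratio_mul_volume_preimage (e : Fin (G.degree i)) (S : Set ℝ) :
    ENNReal.ofReal G.ratio * volume (G.map i e ⁻¹' S) = volume S := by
  have hcomp : G.map i e ⁻¹' S = (G.ratio * ·) ⁻¹' ((· + G.shift i e) ⁻¹' S) := rfl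
  rw [hcomp, Real.volume_preimage_mul_left ratio_pos.ne', measure_preimage_add_right, abs_inv,
    abs_of_pos ratio_pos, ← mul_assoc, ← ENNReal.ofReal_mul ratio_pos.le,
    mul_inv_cancel₀ ratio_pos.ne', ENNReal.ofReal_one, one_mul]

theorem ofReal_ratio_mul_sum_volume_preimage (T : ι → Set ℝ) (i : ι) :
    ENNReal.ofReal G.ratio * ∑ e, volume (G.map i e ⁻¹' T (G.target i e)) =
      ∑ e, volume (T (G.target i e)) := by
  simp only [Finset.mul_sum, ofReal_ratio_mul_volume_preimage]

theorem IsAttractor.ofReal_ratio_mul_volume_le (hT : G.IsAttractor T) (i : ι) :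
    ENNReal.ofReal G.ratio * volume (T i) ≤ ∑ e, volume (T (G.target i e)) := by
  grw [← ofReal_ratio_mul_sum_volume_preimage, ← measure_iUnion_fintype_le, hT.eq i, hutchinson]

theorem IsAttractor.exists_ediam_le [Finite ι] (hT : G.IsAttractor T) :
    ∃ r : ℝ≥0, ∀ i, ediam (T i) ≤ r := by
  have hb := Bornology.isBounded_iUnion.2 fun i ↦ (hT.isCompact i).isBounded
  lift ediam (⋃ i, T i) to ℝ≥0 using hb.ediam_ne_top with r hr
  exact ⟨r, fun i ↦ hr ▸ ediam_mono (subset_iUnion T i)⟩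

theorem IsAttractor.volume_ne_top (hT : G.IsAttractor T) (i : ι) : volume (T i) ≠ ⊤ :=
  (hT.isCompact i).measure_ne_top

theorem IsAttractor.measurableSet_preimage (hT : G.IsAttractor T) (e : Fin (G.degree i)) :
    MeasurableSet (G.map i e ⁻¹' T (G.target i e)) :=
  ((hT.isCompact _).isClosed.preimage (continuous_map i e)).measurableSet

theorem IsAttractor.subset_support (hT : G.IsAttractor T) [Finite ι] (hv : ∀ i, volume (T i) ≠ 0)
    (i : ι) : T i ⊆ (volume.restrict (T i)).support := by
  refine hT.subset (Q := fun i ↦ (volume.restrict (T i)).support) (fun i x hx ↦ ?_)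
    (fun i ↦ Measure.isClosed_support) (fun i ↦ Measure.nonempty_support (by simpa using hv i)) i
  obtain ⟨e, he⟩ := mem_hutchinson.1 hx
  rw [Measure.mem_support_iff_forall] at he ⊢
  intro U hU
  have hpos := he _ ((isOpenMap_map i e).image_mem_nhds hU)
  have hmeas j : MeasurableSet (T j) := (hT.isCompact j).measurableSet
  rw [Measure.restrict_apply' (hmeas _), ← ofReal_ratio_mul_volume_preimage e] at hpos
  rw [Measure.restrict_apply' (hmeas i)]
  refine (CanonicallyOrderedAdd.mul_pos.1 hpos).2.trans_le (measure_mono ?_)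
  rw [preimage_inter, preimage_image_eq _ (map_injective i e)]
  exact inter_subset_inter_right U fun y hy ↦ hT.mem_iff.2 ⟨e, hy⟩

variable (G) in
/-- An attractor without overlaps: by the volume equation, the contracted copies making up each
set have pairwise null intersections. -/
structure IsTiling (T : ι → Set ℝ) : Prop extends G.IsAttractor T where
  volume_eq : ∀ i, ENNReal.ofReal G.ratio * volume (T i) = ∑ e, volume (T (G.target i e))

namespace IsTiling

theorem sum_volume_preimage_eq (hT : G.IsTiling T) (i : ι) :
    ∑ e, volume (G.map i e ⁻¹' T (G.target i e)) = volume (T i) := by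
  have hL : ENNReal.ofReal G.ratio ≠ 0 := (ENNReal.ofReal_pos.2 ratio_pos).ne'
  rw [← ENNReal.mul_right_inj hL ENNReal.ofReal_ne_top, ofReal_ratio_mul_sum_volume_preimage,
    hT.volume_eq]

theorem sum_volume_preimage_inter_le (hT : G.IsTiling T) (i : ι) (hS : MeasurableSet S) :
    ∑ e, volume (G.map i e ⁻¹' T (G.target i e) ∩ S) ≤ volume (T i ∩ S) := by
  have hsum := hT.sum_volume_preimage_eq i
  conv_rhs => rw [hT.eq i, hutchinson]
  refine sum_measure_inter_le ?_ (hsum ▸ hT.volume_ne_top i) hS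
  exact (hsum.trans (congrArg volume (hT.eq i))).le

theorem volume_preimage_inter_eq_zero (hT : G.IsTiling T) {e e' : Fin (G.degree i)} (hne : e ≠ e') :
    volume (G.map i e ⁻¹' T (G.target i e) ∩ G.map i e' ⁻¹' T (G.target i e')) = 0 := by
  have hsum := hT.sum_volume_preimage_eq i
  exact measure_inter_eq_zero (P := fun e ↦ G.map i e ⁻¹' T (G.target i e))
    (hsum.trans (congrArg volume (hT.eq i))).le (hsum ▸ hT.volume_ne_top i)
    (hT.measurableSet_preimage e') hne

theorem count_mul_le (hT : G.IsTiling T) (hr : ∀ i, ediam (T i) ≤ r) (hv : ∀ i, v ≤ volume (T i))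
    (n : ℕ) (i : ι) (U : Set ℝ) :
    G.count T 1 n i U * v ≤
      ENNReal.ofReal G.ratio ^ n * volume (T i ∩ cthickening (G.contraction ^ n * r) U) := by
  induction n generalizing i U with
  | zero =>
    rw [count]
    split_ifs with h
    · obtain ⟨y, hyT, hyU⟩ := h
      have hsub : T i ⊆ cthickening r U := fun x hx ↦
        mem_cthickening_of_edist_le x y r U hyU <| by
          simpa using (edist_le_ediam_of_mem hx hyT).trans (hr i)
      simpa [inter_eq_left.2 hsub] using hv i
    · simp
  | succ n ih =>
    set L := ENNReal.ofReal G.ratio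
    set c := G.contraction
    have hpre e : G.map i e ⁻¹' cthickening (c ^ n * r) (G.map i e '' U) ⊆
        cthickening (c ^ (n + 1) * r) U := by
      rw [pow_succ', mul_assoc]
      exact preimage_cthickening_image_subset (antilipschitzWith_map i e)
        contraction_pos.ne' _ U
    calc (G.count T 1 (n + 1) i U : ℝ≥0∞) * v
      _ = ∑ e, G.count T 1 n (G.target i e) (G.map i e '' U) * v := by
          rw [count, ENNReal.ofNNReal_finsetSum, Finset.sum_mul]
      _ ≤ ∑ e, L ^ n * volume (T (G.target i e) ∩ cthickening (c ^ n * r) (G.map i e '' U)) :=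
          Finset.sum_le_sum fun e _ ↦ ih _ _
      _ = L ^ (n + 1) * ∑ e, volume (G.map i e ⁻¹'
            (T (G.target i e) ∩ cthickening (c ^ n * r) (G.map i e '' U))) := by
          simp only [Finset.mul_sum, pow_succ, mul_assoc, L, ofReal_ratio_mul_volume_preimage]
      _ ≤ L ^ (n + 1) * volume (T i ∩ cthickening (c ^ (n + 1) * r) U) := by
          gcongr
          refine le_trans (Finset.sum_le_sum fun e _ ↦ measure_mono ?_)
            (hT.sum_volume_preimage_inter_le i isClosed_cthickening.measurableSet)
          exact inter_subset_inter_right _ (hpre e)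

theorem exists_count_le (hT : G.IsTiling T) [Finite ι] (hv : ∀ i, volume (T i) ≠ 0) :
    ∃ M : ℝ≥0, ∀ n i U, ediam U ≤ G.contraction ^ n → G.count T 1 n i U ≤ M := by
  set L := ENNReal.ofReal G.ratio
  set c := G.contraction
  have hLc : L * c = 1 := by
    rw [← ENNReal.ofReal_coe_nnreal, coe_contraction, ← ENNReal.ofReal_mul ratio_pos.le,
      mul_inv_cancel₀ ratio_pos.ne', ENNReal.ofReal_one]
  obtain ⟨r, hr⟩ := hT.exists_ediam_le
  obtain ⟨v, hv0, hv⟩ : ∃ v ≠ 0, ∀ i, v ≤ volume (T i) := by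
    cases isEmpty_or_nonempty ι
    · exact ⟨1, one_ne_zero, isEmptyElim⟩
    · obtain ⟨j, hj⟩ := Finite.exists_min fun i ↦ volume (T i)
      exact ⟨_, hv j, hj⟩
  have hbound n i U (hU : ediam U ≤ c ^ n) : G.count T 1 n i U ≤ (1 + 2 * r) / v := by
    refine ENNReal.le_div_iff_mul_le (.inl hv0) (.inr (by finiteness)) |>.2 ?_
    calc G.count T 1 n i U * v
      _ ≤ L ^ n * volume (cthickening ((c ^ n * r : ℝ≥0) : ℝ) U) := by
          grw [hT.count_mul_le hr hv, inter_subset_right]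
          simp [c, L]
      _ ≤ L ^ n * (c ^ n + 2 * (c ^ n * r)) := by
          grw [Real.volume_le_diam, ediam_cthickening_le, hU]
          simp
      _ = (L * c) ^ n * (1 + 2 * r) := by ring
      _ = 1 + 2 * r := by rw [hLc, one_pow, one_mul]
  refine ⟨((1 + 2 * r) / v).toNNReal, fun n i U hU ↦ ?_⟩
  rw [← ENNReal.coe_le_coe, ENNReal.coe_toNNReal (ENNReal.div_ne_top (by finiteness) hv0)]
  exact hbound n i U hU

end IsTiling

end Tiles

end ExpandingGraph

/-! ### Overlaps of tiles -/

/-- A graph-directed system for the overlaps `T (fst α) ∩ (T (snd α) - offset α)` of the tiles of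
`G`. An edge out of `α` comes from a pair `lift` of edges of `G`, and the two tiles at the
end of such a pair may be exchanged. -/
structure OverlapGraph {ι : Type*} (G : ExpandingGraph ι) (κ : Type*) extends
    ExpandingGraph κ where
  ratio_eq : ratio = G.ratio
  fst : κ → ι
  snd : κ → ι
  offset : κ → ℝ
  lift : (α : κ) → Fin (degree α) → Fin (G.degree (fst α)) × Fin (G.degree (snd α))
  lift_injective : ∀ α, Function.Injective (lift α)
  lift_spec : ∀ α e,
    (fst (target α e) = G.target _ (lift α e).1 ∧ snd (target α e) = G.target _ (lift α e).2 ∧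
      ∀ x, toExpandingGraph.map α e x = G.map _ (lift α e).1 x ∧
        toExpandingGraph.map α e x + offset (target α e) = G.map _ (lift α e).2 (x + offset α)) ∨
    (fst (target α e) = G.target _ (lift α e).2 ∧ snd (target α e) = G.target _ (lift α e).1 ∧
      ∀ x, toExpandingGraph.map α e x = G.map _ (lift α e).2 (x + offset α) ∧
        toExpandingGraph.map α e x + offset (target α e) = G.map _ (lift α e).1 x)

namespace OverlapGraph

open ExpandingGraph

variable {ι κ : Type*} {G : ExpandingGraph ι} (H : OverlapGraph G κ) {T : ι → Set ℝ}
  {w : κ → ℝ≥0} {d : ℝ} {s M : ℝ≥0}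

/-- The part of the tile `T (fst α)` covered by the tile `T (snd α)` translated by `-offset α`. -/
def overlap (T : ι → Set ℝ) (α : κ) : Set ℝ :=
  T (H.fst α) ∩ (· + H.offset α) ⁻¹' T (H.snd α)

variable {H}

theorem isCompact_overlap (hT : ∀ i, IsCompact (T i)) (α : κ) : IsCompact (H.overlap T α) :=
  (hT _).inter_right ((hT _).isClosed.preimage (continuous_add_const _))

theorem hutchinson_overlap_subset (hT : ∀ i, G.hutchinson T i ⊆ T i) (α : κ) :
    H.hutchinson (H.overlap T) α ⊆ H.overlap T α := by
  intro x hx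
  obtain ⟨e, hfst, hsnd⟩ := mem_hutchinson.1 hx
  rw [mem_preimage] at hsnd
  obtain ⟨h₁, h₂, h⟩ | ⟨h₁, h₂, h⟩ := H.lift_spec α e <;>
    rw [h₁, (h x).1] at hfst <;> rw [h₂, (h x).2] at hsnd
  · exact ⟨hT _ (mem_hutchinson.2 ⟨_, hfst⟩), hT _ (mem_hutchinson.2 ⟨_, hsnd⟩)⟩
  · exact ⟨hT _ (mem_hutchinson.2 ⟨_, hsnd⟩), hT _ (mem_hutchinson.2 ⟨_, hfst⟩)⟩

theorem preimage_overlap_subset (hT : ∀ i, G.hutchinson T i ⊆ T i) (α : κ)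
    (e : Fin (H.degree α)) : H.map α e ⁻¹' H.overlap T (H.target α e) ⊆ H.overlap T α :=
  fun _ hx ↦ hutchinson_overlap_subset hT α (mem_hutchinson.2 ⟨e, hx⟩)

theorem overlap_nonempty_of_target (hT : ∀ i, G.hutchinson T i ⊆ T i) (α : κ)
    (e : Fin (H.degree α)) (h : (H.overlap T (H.target α e)).Nonempty) :
    (H.overlap T α).Nonempty :=
  (h.preimage (map_surjective α e)).mono (preimage_overlap_subset hT α e)

theorem volume_overlap_target_eq_zero (hT : ∀ i, G.hutchinson T i ⊆ T i) (α : κ)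
    (e : Fin (H.degree α)) (h : volume (H.overlap T α) = 0) :
    volume (H.overlap T (H.target α e)) = 0 := by
  rw [← ofReal_ratio_mul_volume_preimage e,
    measure_mono_null (preimage_overlap_subset hT α e) h, mul_zero]

theorem count_overlap_le (hw : ∀ α, w α ≤ M) (n : ℕ) (α : κ) (U : Set ℝ) :
    H.count (H.overlap T) w n α U ≤
      M * (G.count T 1 n (H.fst α) U * G.count T 1 n (H.snd α) ((· + H.offset α) '' U)) := by
  induction n generalizing α U with
  | zero =>
    simp only [count]
    by_cases h : (H.overlap T α ∩ U).Nonempty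
    · obtain ⟨x, hx, hxU⟩ := h
      rw [if_pos ⟨x, hx, hxU⟩, if_pos ⟨x, hx.1, hxU⟩, if_pos ⟨_, hx.2, mem_image_of_mem _ hxU⟩]
      simpa using hw α
    · rw [if_neg h]
      exact zero_le
  | succ n ih =>
    set f := fun p ↦ G.count T 1 n (G.target _ p) (G.map (H.fst α) p '' U)
    set g := fun q ↦ G.count T 1 n (G.target _ q) (G.map (H.snd α) q '' ((· + H.offset α) '' U))
    have hedge e : H.count (H.overlap T) w n (H.target α e) (H.map α e '' U) ≤
        M * (f (H.lift α e).1 * g (H.lift α e).2) := by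
      refine (ih _ _).trans_eq ?_
      obtain ⟨h₁, h₂, h⟩ | ⟨h₁, h₂, h⟩ := H.lift_spec α e <;>
        simp only [h₁, h₂, f, g, image_image, (h _).2] <;> simp only [(h _).1, mul_comm]
    calc H.count (H.overlap T) w (n + 1) α U
      _ ≤ ∑ e, M * (f (H.lift α e).1 * g (H.lift α e).2) := Finset.sum_le_sum fun e _ ↦ hedge e
      _ = M * ∑ p ∈ Finset.univ.map ⟨H.lift α, H.lift_injective α⟩, f p.1 * g p.2 := by
          rw [Finset.sum_map, Finset.mul_sum, Function.Embedding.coeFn_mk]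
      _ ≤ M * ∑ p : Fin _ × Fin _, f p.1 * g p.2 := by
          gcongr
          exact Finset.subset_univ _
      _ = _ := by rw [Fintype.sum_prod_type, ← Fintype.sum_mul_sum]; rfl

theorem hausdorffMeasure_overlap_ne_zero [Finite ι] [Finite κ] (hT : G.IsTiling T)
    (hv : ∀ i, volume (T i) ≠ 0) (hn : ∀ α, (H.overlap T α).Nonempty) (hs : H.ratio ^ d = s)
    (hd : 0 < d) (hw : ∀ α, w α ≠ 0) (hsum : ∀ α, ∑ e, w (H.target α e) = s * w α) (α : κ) :
    μH[d] (H.overlap T α) ≠ 0 := by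
  obtain ⟨M, hM⟩ := hT.exists_count_le hv
  have : Nonempty κ := ⟨α⟩
  obtain ⟨β, hβ⟩ := Finite.exists_max w
  refine hausdorffMeasure_ne_zero (M := w β * (M * M)) hs hd
    (hutchinson_overlap_subset fun i ↦ (hT.eq i).superset)
    (isCompact_overlap hT.isCompact α) hn (hw α) hsum fun n U hU ↦ ?_
  have hcontr : H.contraction = G.contraction := by rw [contraction, contraction, H.ratio_eq]
  rw [hcontr] at hU
  grw [count_overlap_le hβ, hM _ _ _ hU, hM _ _ _ ?_]
  rwa [(isometry_add_right _).ediam_image]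

theorem dimH_overlap [Finite ι] [Finite κ] (hT : G.IsTiling T)
    (hv : ∀ i, volume (T i) ≠ 0) (hn : ∀ α, (H.overlap T α).Nonempty) (hd : 0 < d)
    (hs : H.ratio ^ d = s) (hw : ∀ α, 1 ≤ w α) (hsum : ∀ α, ∑ e, w (H.target α e) = s * w α)
    {N : κ → Set ℝ} (hN : ∀ α, (N α).Countable)
    (hover : ∀ α, H.overlap T α ⊆ H.hutchinson (H.overlap T) α ∪ N α) (α : κ) :
    dimH (H.overlap T α) = ENNReal.ofReal d := by
  have := Measure.nullSingletonClass_hausdorff ℝ hd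
  lift d to ℝ≥0 using hd.le
  rw [ENNReal.ofReal_coe_nnreal]
  refine dimH_of_hausdorffMeasure_ne_zero_ne_top
    (hausdorffMeasure_overlap_ne_zero hT hv hn hs hd (fun α ↦ (one_pos.trans_le (hw α)).ne') hsum α)
    (hausdorffMeasure_ne_top hd.le hs hover (fun α ↦ (hN α).measure_zero _)
      (fun α ↦ (isCompact_overlap hT.isCompact α).isBounded) hw (fun α ↦ (hsum α).le) α)

end OverlapGraph

section Frontier

theorem frontier_subset_inter_of_union_eq_univ {X : Type*} [TopologicalSpace X] {S C : Set X}
    (hS : IsClosed S) (hC : IsClosed C) (h : S ∪ C = univ) : frontier S ⊆ S ∩ C := by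
  rw [frontier_eq_closure_inter_closure, hS.closure_eq]
  exact inter_subset_inter_right S (closure_minimal (compl_subset_iff_union.2 h) hC)

theorem mem_frontier_of_mem_support_restrict {X : Type*} [AddGroup X] [TopologicalSpace X]
    [IsTopologicalAddGroup X] [MeasurableSpace X] [BorelSpace X] {μ : Measure X}
    [μ.IsAddRightInvariant] {S T : Set X} {x t : X} (hx : x ∈ S)
    (hxt : x + t ∈ (μ.restrict T).support) (h : μ (S ∩ (· + t) ⁻¹' T) = 0) : x ∈ frontier S := by
  refine ⟨subset_closure hx, fun hx_int ↦ ?_⟩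
  have hopen : IsOpen ((· + t) '' interior S) := isOpenMap_add_right t _ isOpen_interior
  have hpos := (Measure.mem_support_iff_forall _).1 hxt _
    (hopen.mem_nhds (mem_image_of_mem (· + t) hx_int))
  rw [Measure.restrict_apply hopen.measurableSet, ← measure_preimage_add_right μ t,
    preimage_inter, preimage_image_eq _ (add_left_injective t)] at hpos
  exact hpos.ne' (measure_mono_null (inter_subset_inter_left _ interior_subset) h)

end Frontier

section Translates

theorem eq_univ_of_dense_stabilizer {X : Type*} [AddGroup X] [TopologicalSpace X]
    [ContinuousAdd X] {S : Set X} (hS : IsClosed S) (hn : S.Nonempty)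
    (hd : Dense (AddAction.stabilizer X S : Set X)) : S = univ := by
  obtain ⟨x, hx⟩ := hn
  have hstab : (· + x) ⁻¹' S = univ := by
    refine eq_univ_of_univ_subset (hd.closure_eq ▸ closure_minimal (fun g hg ↦ ?_)
      (hS.preimage (continuous_add_const x)))
    exact (AddAction.mem_stabilizer_set.1 hg x).2 hx
  refine eq_univ_of_forall fun y ↦ ?_
  simpa using hstab.superset (mem_univ (y - x))

theorem isClosed_add_zsmul_image {K : Set ℝ} (hK : IsCompact K) {p : ℝ} (hp : p ≠ 0) (s : Set ℤ) :
    IsClosed (K + (· • p) '' s) := by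
  refine IsClosed.add_left_of_isCompact ?_ hK
  simp only [zsmul_eq_mul]
  exact ((Homeomorph.mulRight₀ p hp).isClosedEmbedding.comp
    Int.isClosedEmbedding_coe_real).isClosedMap s (isClosed_discrete s)

theorem mem_add_zsmul_image {K : Set ℝ} {p x : ℝ} {s : Set ℤ} :
    x ∈ K + (· • p) '' s ↔ ∃ k ∈ s, x - k * p ∈ K := by
  simp only [Set.mem_add, mem_image, zsmul_eq_mul]
  constructor
  · rintro ⟨y, hy, _, ⟨k, hk, rfl⟩, rfl⟩
    exact ⟨k, hk, by simpa⟩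
  · rintro ⟨k, hk, h⟩
    exact ⟨_, h, _, ⟨k, hk, rfl⟩, sub_add_cancel _ _⟩

end Translates

section Image

variable {R : Type*} [DivisionRing R] {r x : R} {K : Set R}

theorem mem_image_inv_mul (hr : r ≠ 0) : x ∈ (fun y ↦ r⁻¹ * y) '' K ↔ r * x ∈ K := by
  constructor
  · rintro ⟨y, hy, rfl⟩
    rwa [mul_inv_cancel_left₀ hr]
  · exact fun h ↦ ⟨_, h, inv_mul_cancel_left₀ hr x⟩

theorem mem_image_inv_mul_add {c : R} (hr : r ≠ 0) :
    x ∈ (fun y ↦ r⁻¹ * (y + c)) '' K ↔ r * x + -c ∈ K := by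
  rw [← image_image (r⁻¹ * ·) (· + c), mem_image_inv_mul hr, image_add_right, mem_preimage]

end Image

/-! ### The Rauzy fractals -/

/-- The alphabet of the substitution `a ↦ aab, b ↦ ba`. -/
inductive Letter_s11
  | a
  | b

instance inst_s11 : Finite Letter_s11 :=
  .of_surjective ![Letter_s11.a, .b] fun
    | .a => ⟨0, rfl⟩
    | .b => ⟨1, rfl⟩

open ExpandingGraph Real

/-- The internal-space iterated function system of the substitution `a ↦ aab, b ↦ ba`; its
attractor consists of the two Rauzy fractals. -/
noncomputable def rauzyGraph : ExpandingGraph Letter_s11 where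
  ratio := φ ^ 2
  one_lt_ratio := one_lt_pow₀ one_lt_goldenRatio two_ne_zero
  degree
    | .a => 3
    | .b => 2
  target
    | .a => ![.a, .a, .b]
    | .b => ![.a, .b]
  shift
    | .a => ![0, φ, -φ ^ 2]
    | .b => ![2 * φ, 0]

namespace rauzyGraph

variable {T : Letter_s11 → Set ℝ} {x : ℝ}

theorem mem_hutchinson_a : x ∈ rauzyGraph.hutchinson T .a ↔
    φ ^ 2 * x ∈ T .a ∨ φ ^ 2 * x + φ ∈ T .a ∨ φ ^ 2 * x - φ ^ 2 ∈ T .b := by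
  refine mem_hutchinson.trans ?_
  change (∃ e : Fin 3, φ ^ 2 * x + ![0, φ, -φ ^ 2] e ∈ T (![.a, .a, .b] e)) ↔ _
  simp [Fin.exists_fin_succ, sub_eq_add_neg]

theorem mem_hutchinson_b : x ∈ rauzyGraph.hutchinson T .b ↔
    φ ^ 2 * x + 2 * φ ∈ T .a ∨ φ ^ 2 * x ∈ T .b := by
  refine mem_hutchinson.trans ?_
  change (∃ e : Fin 2, φ ^ 2 * x + ![2 * φ, 0] e ∈ T (![.a, .b] e)) ↔ _
  simp [Fin.exists_fin_succ]

theorem isAttractor_of_eq_image_union {A B : Set ℝ} (hcA : IsCompact A) (hcB : IsCompact B)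
    (hA : A.Nonempty) (hB : B.Nonempty)
    (hAeq : A = (fun x : ℝ => (φ ^ 2)⁻¹ * x) '' A ∪ (fun x : ℝ => (φ ^ 2)⁻¹ * (x - φ)) '' A ∪
      (fun x : ℝ => (φ ^ 2)⁻¹ * (x + φ ^ 2)) '' B)
    (hBeq : B = (fun x : ℝ => (φ ^ 2)⁻¹ * (x - 2 * φ)) '' A ∪
      (fun x : ℝ => (φ ^ 2)⁻¹ * x) '' B) :
    rauzyGraph.IsAttractor (Letter_s11.rec A B) where
  isCompact := Letter_s11.rec hcA hcB
  nonempty := Letter_s11.rec hA hB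
  eq := by
    have hφ : φ ^ 2 ≠ 0 := by positivity
    refine Letter_s11.rec (ext fun x ↦ ?_) (ext fun x ↦ ?_)
    · refine (Set.ext_iff.1 hAeq x).trans (.trans ?_ mem_hutchinson_a.symm)
      simp only [mem_union, sub_eq_add_neg, mem_image_inv_mul hφ, mem_image_inv_mul_add hφ, neg_neg,
        or_assoc]
    · refine (Set.ext_iff.1 hBeq x).trans (.trans ?_ mem_hutchinson_b.symm)
      simp only [mem_union, sub_eq_add_neg, mem_image_inv_mul hφ, mem_image_inv_mul_add hφ, neg_neg]

/-- Intervals containing the two Rauzy fractals. -/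
def hull : Letter_s11 → Set ℝ
  | .a => Icc (-1) 1
  | .b => Icc (-φ) 0

theorem hutchinson_hull_subset (i : Letter_s11) : rauzyGraph.hutchinson hull i ⊆ hull i := by
  have hφ := one_lt_goldenRatio
  intro x hx
  cases i
  · simp only [mem_hutchinson_a, hull, mem_Icc, goldenRatio_sq] at hx ⊢
    obtain h | h | h := hx <;> constructor <;> nlinarith
  · simp only [mem_hutchinson_b, hull, mem_Icc, goldenRatio_sq] at hx ⊢
    obtain h | h := hx <;> constructor <;> nlinarith [goldenRatio_sq]

theorem subset_hull (hT : rauzyGraph.IsAttractor T) (i : Letter_s11) : T i ⊆ hull i := by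
  refine hT.subset hutchinson_hull_subset (fun i ↦ ?_) (fun i ↦ ?_) i <;> cases i
  · exact isClosed_Icc
  · exact isClosed_Icc
  · exact nonempty_Icc.2 (by norm_num)
  · exact nonempty_Icc.2 (neg_nonpos.2 goldenRatio_pos.le)

theorem zero_mem (hT : rauzyGraph.IsAttractor T) (i : Letter_s11) : 0 ∈ T i := by
  refine subset_of_hutchinson (P := fun _ ↦ {0}) (fun i ↦ ?_)
    (fun _ ↦ Bornology.isBounded_singleton) (fun i ↦ (hT.eq i).superset)
    (fun i ↦ (hT.isCompact i).isClosed) hT.nonempty i (mem_singleton 0)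
  rintro _ rfl
  cases i
  · exact mem_hutchinson_a.2 (.inl (mul_zero _))
  · exact mem_hutchinson_b.2 (.inr (mul_zero _))

end rauzyGraph

/-- The extension of `rauzyGraph` by a vertex `none` whose tile is the union of the two Rauzy
fractals. -/
noncomputable def windowGraph : ExpandingGraph (Option Letter_s11) where
  ratio := φ ^ 2
  one_lt_ratio := rauzyGraph.one_lt_ratio
  degree
    | some i => rauzyGraph.degree i
    | none => 4
  target
    | some i => some ∘ rauzyGraph.target i
    | none => ![none, some .a, some .a, some .b]
  shift
    | some i => rauzyGraph.shift i
    | none => ![0, φ, 2 * φ, -φ ^ 2]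

namespace windowGraph

variable {T : Letter_s11 → Set ℝ} {U : Set ℝ} {x : ℝ}

theorem mem_hutchinson_none {S : Option Letter_s11 → Set ℝ} : x ∈ windowGraph.hutchinson S none ↔
    φ ^ 2 * x ∈ S none ∨ φ ^ 2 * x + φ ∈ S (some .a) ∨ φ ^ 2 * x + 2 * φ ∈ S (some .a) ∨
      φ ^ 2 * x - φ ^ 2 ∈ S (some .b) := by
  refine mem_hutchinson.trans ?_
  change (∃ e : Fin 4, φ ^ 2 * x + ![0, φ, 2 * φ, -φ ^ 2] e ∈
    S (![none, some .a, some .a, some .b] e)) ↔ _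
  simp [Fin.exists_fin_succ, sub_eq_add_neg]

theorem isAttractor_elim (hT : rauzyGraph.IsAttractor T) (hU : IsCompact U) (hn : U.Nonempty)
    (h : ∀ x, x ∈ U ↔ φ ^ 2 * x ∈ U ∨ φ ^ 2 * x + φ ∈ T .a ∨ φ ^ 2 * x + 2 * φ ∈ T .a ∨
      φ ^ 2 * x - φ ^ 2 ∈ T .b) :
    windowGraph.IsAttractor (·.elim U T) where
  isCompact := Option.rec hU hT.isCompact
  nonempty := Option.rec hn hT.nonempty
  eq := Option.rec (ext fun x ↦ (h x).trans (mem_hutchinson_none (S := (·.elim U T))).symm) hT.eq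

end windowGraph

namespace rauzyGraph

variable {T : Letter_s11 → Set ℝ} {x : ℝ}

/- Both sides solve the equation of the additional tile of `windowGraph`, whose attractor is
unique. -/
theorem mem_union_iff_exchange (hT : rauzyGraph.IsAttractor T) :
    x ∈ T .a ∪ T .b ↔ x + (φ - 1) ∈ T .a ∨ x - 1 ∈ T .b := by
  have hAB : windowGraph.IsAttractor (·.elim (T .a ∪ T .b) T) := by
    refine windowGraph.isAttractor_elim hT ((hT.isCompact _).union (hT.isCompact _))
      (.inl (hT.nonempty _)) fun x ↦ ?_
    rw [mem_union, hT.eq .a, hT.eq .b, mem_hutchinson_a, mem_hutchinson_b, mem_union,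
      ← hT.eq .a, ← hT.eq .b]
    tauto
  have hD : windowGraph.IsAttractor
      (·.elim ((· + (φ - 1)) ⁻¹' T .a ∪ (· - 1) ⁻¹' T .b) T) := by
    refine windowGraph.isAttractor_elim hT ?_ ?_ fun x ↦ ?_
    · exact ((Homeomorph.addRight _).isCompact_preimage.2 (hT.isCompact _)).union
        ((Homeomorph.subRight _).isCompact_preimage.2 (hT.isCompact _))
    · exact ((hT.nonempty _).preimage (add_right_surjective _)).inl
    · have h₁ : φ ^ 2 * (x + (φ - 1)) = φ ^ 2 * x + φ := by grind [goldenRatio_sq]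
      have h₂ : φ ^ 2 * x + φ - φ ^ 2 = φ ^ 2 * x - 1 := by grind [goldenRatio_sq]
      have h₃ : φ ^ 2 * (x - 1) + 2 * φ = φ ^ 2 * x + (φ - 1) := by grind [goldenRatio_sq]
      have h₄ : φ ^ 2 * x + φ + φ = φ ^ 2 * x + 2 * φ := by ring
      simp only [mem_union, mem_preimage]
      rw [hT.eq .a, hT.eq .b, mem_hutchinson_a, mem_hutchinson_b, h₁, h₂, h₃, h₄, mul_sub_one,
        ← hT.eq .a, ← hT.eq .b]
      tauto
  exact Set.ext_iff.1 (congrFun (hAB.unique hD) none) x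

theorem union_add_zsmul_eq_univ (hT : rauzyGraph.IsAttractor T) :
    (T .a ∪ T .b) + (· • φ) '' (univ : Set ℤ) = univ := by
  have hcompact := (hT.isCompact .a).union (hT.isCompact .b)
  refine eq_univ_of_dense_stabilizer
    (isClosed_add_zsmul_image hcompact goldenRatio_ne_zero _) (.add (.inl (hT.nonempty _))
    (range_nonempty _ |>.mono (image_univ.superset))) ?_
  have hirr : Irrational (1 / φ) := by simpa using goldenRatio_irrational.inv
  refine (dense_addSubgroupClosure_pair_iff.2 hirr).mono ?_
  rw [SetLike.coe_subset_coe, AddSubgroup.closure_le]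
  rintro p (rfl | rfl) <;>
    refine AddAction.mem_stabilizer_set.2 fun x ↦ ?_ <;>
    simp only [vadd_eq_add, mem_add_zsmul_image, mem_univ, true_and]
  · constructor
    · rintro ⟨k, hk⟩
      obtain h | h := (mem_union_iff_exchange hT).1 hk
      · exact ⟨k - 1, .inl (by convert h using 1; push_cast; ring)⟩
      · exact ⟨k, .inr (by convert h using 1; ring)⟩
    · rintro ⟨k, hk | hk⟩
      · exact ⟨k + 1, (mem_union_iff_exchange hT).2 (.inl (by convert hk using 1; push_cast; ring))⟩
      · exact ⟨k, (mem_union_iff_exchange hT).2 (.inr (by convert hk using 1; ring))⟩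
  · constructor
    · rintro ⟨k, hk⟩
      exact ⟨k - 1, by convert hk using 1; push_cast; ring⟩
    · rintro ⟨k, hk⟩
      exact ⟨k + 1, by convert hk using 1; push_cast; ring⟩

theorem sum_volume_target_a :
    ∑ e, volume (T (rauzyGraph.target .a e)) = volume (T .a) + volume (T .a) + volume (T .b) :=
  Fin.sum_univ_three _

theorem sum_volume_target_b :
    ∑ e, volume (T (rauzyGraph.target .b e)) = volume (T .a) + volume (T .b) :=
  Fin.sum_univ_two _

/- Pairing the volume inequalities with the left eigenvector `(φ, 1)` of the substitution matrix
leaves no room for a strict inequality. -/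
theorem isTiling (hT : rauzyGraph.IsAttractor T) : rauzyGraph.IsTiling T where
  toIsAttractor := hT
  volume_eq := by
    have hratio : ENNReal.ofReal rauzyGraph.ratio = Real.toNNReal (φ + 1) := by
      rw [← goldenRatio_sq]; rfl
    have hcoe : ((Real.toNNReal (φ + 1) : ℝ≥0) : ℝ) = φ + 1 :=
      Real.coe_toNNReal _ (by linarith [goldenRatio_pos])
    have ha := hT.ofReal_ratio_mul_volume_le .a
    have hb := hT.ofReal_ratio_mul_volume_le .b
    rw [sum_volume_target_a, hratio] at ha
    rw [sum_volume_target_b, hratio] at hb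
    refine Letter_s11.rec ?_ ?_ <;>
      simp only [sum_volume_target_a, sum_volume_target_b, hratio] <;>
      lift volume (T .a) to ℝ≥0 using (hT.isCompact _).measure_ne_top with A <;>
      lift volume (T .b) to ℝ≥0 using (hT.isCompact _).measure_ne_top with B <;>
      norm_cast at ha hb ⊢ <;>
      rw [← NNReal.coe_le_coe] at ha hb <;>
      rw [← NNReal.coe_inj] <;>
      push_cast [hcoe] at ha hb ⊢ <;>
      nlinarith [goldenRatio_sq, goldenRatio_pos]

theorem volume_ne_zero (hT : rauzyGraph.IsAttractor T) (i : Letter_s11) : volume (T i) ≠ 0 := by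
  intro hi
  have hsum := (isTiling hT).volume_eq i
  rw [hi, mul_zero] at hsum
  have hW : volume (T .a ∪ T .b) = 0 := by
    refine measure_union_null_iff.2 ?_
    cases i
    · rw [sum_volume_target_a, eq_comm, add_eq_zero, add_eq_zero] at hsum
      exact ⟨hsum.1.1, hsum.2⟩
    · rwa [sum_volume_target_b, eq_comm, add_eq_zero] at hsum
  have huniv : volume (univ : Set ℝ) = 0 := by
    rw [← union_add_zsmul_eq_univ hT, ← iUnion_add_right_image,
      measure_biUnion_null_iff (countable_univ.image _)]
    intro p _
    rwa [image_add_right, measure_preimage_add_right]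
  simp at huniv

theorem frontier_subset_inter (hT : rauzyGraph.IsAttractor T) {i j : Letter_s11} (hij : i ≠ j) :
    frontier (T i) ⊆ T i ∩ (T j ∪ ((T .a ∪ T .b) + (· • φ) '' {k : ℤ | k ≠ 0})) := by
  have hunion : T .a ∪ T .b ⊆ T i ∪ T j := by
    cases i <;> cases j <;> first | contradiction | exact subset_rfl | exact (union_comm _ _).subset
  have hclosed := isClosed_add_zsmul_image ((hT.isCompact .a).union (hT.isCompact .b))
    goldenRatio_ne_zero {k | k ≠ 0}
  refine frontier_subset_inter_of_union_eq_univ (hT.isCompact i).isClosed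
    ((hT.isCompact j).isClosed.union hclosed) (eq_univ_of_forall fun x ↦ ?_)
  obtain ⟨k, -, hk⟩ :=
    mem_add_zsmul_image.1 ((union_add_zsmul_eq_univ hT).superset (mem_univ x))
  rw [← union_assoc]
  obtain rfl | hk₀ := eq_or_ne k 0
  · exact .inl (hunion (by simpa using hk))
  · exact .inr (mem_add_zsmul_image.2 ⟨k, hk₀, hk⟩)

theorem sub_mem_or_add_mem_of_mem_frontier (hT : rauzyGraph.IsAttractor T) {i j : Letter_s11}
    (hij : i ≠ j) (hx : x ∈ frontier (T i)) :
    x ∈ T j ∨ x - φ ∈ T .a ∪ T .b ∨ x + φ ∈ T .a ∪ T .b := by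
  have hφ := one_lt_goldenRatio
  have hhull y (hy : y ∈ T .a ∪ T .b) : -φ ≤ y ∧ y ≤ 1 := by
    obtain hy | hy := hy
    · obtain ⟨h₁, h₂⟩ := subset_hull hT .a hy
      exact ⟨by linarith, h₂⟩
    · obtain ⟨h₁, h₂⟩ := subset_hull hT .b hy
      exact ⟨h₁, by linarith⟩
  obtain ⟨hxi, hxj | hxk⟩ := frontier_subset_inter hT hij hx
  · exact .inl hxj
  obtain ⟨k, hk₀, hk⟩ := mem_add_zsmul_image.1 hxk
  obtain ⟨hx₁, hx₂⟩ := hhull x (by cases i <;> [exact .inl hxi; exact .inr hxi])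
  obtain ⟨hk₁, hk₂⟩ := hhull _ hk
  have hlt : (k : ℝ) < 2 := by nlinarith
  have hgt : (-2 : ℝ) < k := by nlinarith
  norm_cast at hlt hgt
  obtain rfl | rfl : k = 1 ∨ k = -1 := by
    rw [mem_ofPred_eq] at hk₀
    lia
  · exact .inr (.inl (by simpa using hk))
  · exact .inr (.inr (by simpa using hk))

end rauzyGraph

/-! ### Their boundary -/

/-- The pairs of tiles of `rauzyGraph`, one of them translated, whose overlaps make up the boundary
of the Rauzy fractals. -/
inductive Contact
  | ab
  | abSubPhi
  | aaAddPhi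
  | aaAddOne

instance : Finite Contact :=
  .of_surjective ![Contact.ab, .abSubPhi, .aaAddPhi, .aaAddOne] fun
    | .ab => ⟨0, rfl⟩
    | .abSubPhi => ⟨1, rfl⟩
    | .aaAddPhi => ⟨2, rfl⟩
    | .aaAddOne => ⟨3, rfl⟩

/-- The boundary graph of the Rauzy fractals. -/
noncomputable def contactGraph : OverlapGraph rauzyGraph Contact where
  ratio := φ ^ 2
  one_lt_ratio := rauzyGraph.one_lt_ratio
  ratio_eq := rfl
  fst _ := .a
  snd
    | .ab | .abSubPhi => .b
    | .aaAddPhi | .aaAddOne => .a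
  offset
    | .ab => 0
    | .abSubPhi => -φ
    | .aaAddPhi => φ
    | .aaAddOne => 1
  degree
    | .ab | .aaAddOne => 3
    | .abSubPhi => 2
    | .aaAddPhi => 1
  target
    | .ab => ![.ab, .aaAddPhi, .abSubPhi]
    | .abSubPhi => ![.aaAddOne, .abSubPhi]
    | .aaAddPhi => ![.ab]
    | .aaAddOne => ![.ab, .aaAddOne, .abSubPhi]
  shift
    | .ab | .aaAddOne => ![0, φ, φ]
    | .abSubPhi => ![-1, -1]
    | .aaAddPhi => ![φ]
  lift
    | .ab => (![(0, 1), (1, 0), (1, 1)] : Fin 3 → Fin 3 × Fin 2)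
    | .abSubPhi => (![(0, 0), (2, 0)] : Fin 2 → Fin 3 × Fin 2)
    | .aaAddPhi => (![(1, 2)] : Fin 1 → Fin 3 × Fin 3)
    | .aaAddOne => (![(0, 2), (1, 0), (1, 2)] : Fin 3 → Fin 3 × Fin 3)
  lift_injective α := by cases α <;> decide
  lift_spec α e := by
    cases α <;> fin_cases e <;>
      first
      | refine .inl ⟨rfl, rfl, fun x ↦ ⟨?_, ?_⟩⟩ <;>
          simp [ExpandingGraph.map, rauzyGraph] <;> grind [goldenRatio_sq]
      | refine .inr ⟨rfl, rfl, fun x ↦ ⟨?_, ?_⟩⟩ <;>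
          simp [ExpandingGraph.map, rauzyGraph] <;> grind [goldenRatio_sq]

namespace contactGraph

variable {T : Letter_s11 → Set ℝ} {x : ℝ}

theorem mem_overlap_ab : x ∈ contactGraph.overlap T .ab ↔ x ∈ T .a ∧ x ∈ T .b := by
  change x ∈ T .a ∧ x + 0 ∈ T .b ↔ _
  rw [add_zero]

theorem mem_overlap_abSubPhi :
    x ∈ contactGraph.overlap T .abSubPhi ↔ x ∈ T .a ∧ x - φ ∈ T .b := Iff.rfl

theorem mem_overlap_aaAddPhi :
    x ∈ contactGraph.overlap T .aaAddPhi ↔ x ∈ T .a ∧ x + φ ∈ T .a := Iff.rfl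

theorem mem_overlap_aaAddOne :
    x ∈ contactGraph.overlap T .aaAddOne ↔ x ∈ T .a ∧ x + 1 ∈ T .a := Iff.rfl

theorem overlap_nonempty (hT : rauzyGraph.IsAttractor T) (α : Contact) :
    (contactGraph.overlap T α).Nonempty := by
  have hsub i := (hT.eq i).superset
  have hab : (contactGraph.overlap T .ab).Nonempty :=
    ⟨0, mem_overlap_ab.2 ⟨rauzyGraph.zero_mem hT _, rauzyGraph.zero_mem hT _⟩⟩
  have haa : (contactGraph.overlap T .aaAddOne).Nonempty :=
    contactGraph.overlap_nonempty_of_target hsub .aaAddOne (0 : Fin 3) hab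
  cases α
  · exact hab
  · exact contactGraph.overlap_nonempty_of_target hsub .abSubPhi (0 : Fin 2) haa
  · exact contactGraph.overlap_nonempty_of_target hsub .aaAddPhi (0 : Fin 1) hab
  · exact haa

/- The overlap `aaAddPhi` sits between the first two contracted copies in the tile of `a`, and every
other overlap is reached from it. -/
theorem volume_overlap (hT : rauzyGraph.IsAttractor T) (α : Contact) :
    volume (contactGraph.overlap T α) = 0 := by
  have hsub i := (hT.eq i).superset
  have hPhi : volume (contactGraph.overlap T .aaAddPhi) = 0 := by
    rw [← ofReal_ratio_mul_volume_preimage (G := rauzyGraph) (i := .a) (0 : Fin 3)]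
    refine mul_eq_zero_of_right _ (measure_mono_null (fun x hx ↦ ?_)
      ((rauzyGraph.isTiling hT).volume_preimage_inter_eq_zero (i := .a)
        (show (0 : Fin 3) ≠ 1 by decide)))
    refine ⟨hx.1, ?_⟩
    have hmap : rauzyGraph.map .a (1 : Fin 3) x = rauzyGraph.map .a (0 : Fin 3) x + φ := by
      simp [ExpandingGraph.map, rauzyGraph]
    rw [mem_preimage, hmap]
    exact hx.2
  have hab : volume (contactGraph.overlap T .ab) = 0 :=
    contactGraph.volume_overlap_target_eq_zero hsub .aaAddPhi (0 : Fin 1) hPhi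
  have hSub : volume (contactGraph.overlap T .abSubPhi) = 0 :=
    contactGraph.volume_overlap_target_eq_zero hsub .ab (2 : Fin 3) hab
  cases α
  · exact hab
  · exact hSub
  · exact hPhi
  · exact contactGraph.volume_overlap_target_eq_zero hsub .abSubPhi (0 : Fin 2) hSub

theorem mem_hutchinson_ab {S : Contact → Set ℝ} : x ∈ contactGraph.hutchinson S .ab ↔
    φ ^ 2 * x ∈ S .ab ∨ φ ^ 2 * x + φ ∈ S .aaAddPhi ∨ φ ^ 2 * x + φ ∈ S .abSubPhi := by
  refine mem_hutchinson.trans ?_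
  change (∃ e : Fin 3, φ ^ 2 * x + ![0, φ, φ] e ∈ S (![.ab, .aaAddPhi, .abSubPhi] e)) ↔ _
  simp [Fin.exists_fin_succ]

theorem mem_hutchinson_abSubPhi {S : Contact → Set ℝ} :
    x ∈ contactGraph.hutchinson S .abSubPhi ↔
      φ ^ 2 * x - 1 ∈ S .aaAddOne ∨ φ ^ 2 * x - 1 ∈ S .abSubPhi := by
  refine mem_hutchinson.trans ?_
  change (∃ e : Fin 2, φ ^ 2 * x + ![-1, -1] e ∈ S (![.aaAddOne, .abSubPhi] e)) ↔ _
  simp [Fin.exists_fin_succ, sub_eq_add_neg]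

theorem mem_hutchinson_aaAddPhi {S : Contact → Set ℝ} :
    x ∈ contactGraph.hutchinson S .aaAddPhi ↔ φ ^ 2 * x + φ ∈ S .ab := by
  refine mem_hutchinson.trans ?_
  change (∃ e : Fin 1, φ ^ 2 * x + ![φ] e ∈ S (![.ab] e)) ↔ _
  simp

theorem mem_hutchinson_aaAddOne {S : Contact → Set ℝ} :
    x ∈ contactGraph.hutchinson S .aaAddOne ↔
      φ ^ 2 * x ∈ S .ab ∨ φ ^ 2 * x + φ ∈ S .aaAddOne ∨ φ ^ 2 * x + φ ∈ S .abSubPhi := by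
  refine mem_hutchinson.trans ?_
  change (∃ e : Fin 3, φ ^ 2 * x + ![0, φ, φ] e ∈ S (![.ab, .aaAddOne, .abSubPhi] e)) ↔ _
  simp [Fin.exists_fin_succ]

theorem overlap_subset (hT : rauzyGraph.IsAttractor T) (α : Contact) :
    contactGraph.overlap T α ⊆
      contactGraph.hutchinson (contactGraph.overlap T) α ∪ {1} := by
  have hφ := one_lt_goldenRatio
  have hsq := goldenRatio_sq
  have ha y (hy : y ∈ T .a) : -1 ≤ y ∧ y ≤ 1 := rauzyGraph.subset_hull hT .a hy
  have hb y (hy : y ∈ T .b) : -φ ≤ y ∧ y ≤ 0 := rauzyGraph.subset_hull hT .b hy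
  have hcover_a {y} (hy : y ∈ T .a) := rauzyGraph.mem_hutchinson_a.1 ((hT.eq .a).subset hy)
  have hcover_b {y} (hy : y ∈ T .b) := rauzyGraph.mem_hutchinson_b.1 ((hT.eq .b).subset hy)
  intro x hx
  have h_fst := hcover_a hx.1
  have h_ab := hcover_b (y := x)
  have h_abSubPhi := hcover_b (y := x - φ)
  have h_aaAddPhi := hcover_a (y := x + φ)
  have h_aaAddOne := hcover_a (y := x + 1)
  have h_one (h : φ ^ 2 * x = φ + 1) : x = 1 := by
    rwa [← hsq, mul_eq_left₀ (by positivity)] at h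
  rw [show φ ^ 2 * (x - φ) = φ ^ 2 * x - 2 * φ - 1 by grind] at h_abSubPhi
  rw [show φ ^ 2 * (x + φ) = φ ^ 2 * x + 2 * φ + 1 by grind] at h_aaAddPhi
  rw [show φ ^ 2 * (x + 1) = φ ^ 2 * x + φ + 1 by grind] at h_aaAddOne
  rw [union_singleton, mem_insert_iff]
  clear hcover_a hcover_b
  cases α <;>
    simp only [mem_overlap_ab, mem_overlap_abSubPhi, mem_overlap_aaAddPhi, mem_overlap_aaAddOne,
      mem_hutchinson_ab, mem_hutchinson_abSubPhi, mem_hutchinson_aaAddPhi,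
      mem_hutchinson_aaAddOne] at hx ⊢
  all_goals
    generalize φ ^ 2 * x = y at *
    rw [hsq] at *
    clear hsq
    generalize φ = p at *
    grind

/-- The positive eigenvector of the boundary graph, for the eigenvalue `1 + √2`. -/
noncomputable def weight : Contact → ℝ≥0
  | .ab => 1 + NNReal.sqrt 2
  | .abSubPhi => 1 + NNReal.sqrt 2
  | .aaAddPhi => 1
  | .aaAddOne => 2 + NNReal.sqrt 2

theorem one_le_weight (α : Contact) : 1 ≤ weight α := by
  cases α
  · exact le_self_add
  · exact le_self_add
  · exact le_rfl
  · exact one_le_two.trans le_self_add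

theorem sum_weight_target (α : Contact) :
    ∑ e, weight (contactGraph.target α e) = (1 + NNReal.sqrt 2) * weight α := by
  have hsq : NNReal.sqrt 2 * NNReal.sqrt 2 = 2 := NNReal.mul_self_sqrt 2
  cases α
  · refine (Fin.sum_univ_three _).trans ?_
    simp only [contactGraph, weight, Matrix.cons_val]
    linear_combination hsq.symm
  · refine (Fin.sum_univ_two _).trans ?_
    simp only [contactGraph, weight, Matrix.cons_val]
    linear_combination hsq.symm
  · refine (Fin.sum_univ_one _).trans ?_
    simp only [contactGraph, weight, Matrix.cons_val, mul_one]
  · refine (Fin.sum_univ_three _).trans ?_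
    simp only [contactGraph, weight, Matrix.cons_val]
    linear_combination hsq.symm

theorem ratio_rpow :
    contactGraph.ratio ^ (log (1 + √2) / (2 * log φ)) = (1 + NNReal.sqrt 2 : ℝ≥0) := by
  have hlog : log φ ≠ 0 := (log_pos one_lt_goldenRatio).ne'
  change (φ ^ 2) ^ (log (1 + √2) / (2 * log φ)) = _
  rw [rpow_def_of_pos (by positivity), log_pow, Nat.cast_ofNat, mul_div_cancel₀ _ (by positivity),
    exp_log (by positivity)]
  simp

theorem dimH_overlap (hT : rauzyGraph.IsAttractor T) (α : Contact) :
    dimH (contactGraph.overlap T α) = ENNReal.ofReal (log (1 + √2) / (2 * log φ)) := by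
  refine OverlapGraph.dimH_overlap (rauzyGraph.isTiling hT) (rauzyGraph.volume_ne_zero hT)
    (overlap_nonempty hT) ?_ ratio_rpow one_le_weight sum_weight_target
    (fun _ ↦ countable_singleton 1) (overlap_subset hT) α
  have := log_pos one_lt_goldenRatio
  have := log_pos (lt_add_of_pos_right 1 (sqrt_pos.2 two_pos))
  positivity

theorem frontier_subset (hT : rauzyGraph.IsAttractor T) (i : Letter_s11) :
    frontier (T i) ⊆ (⋃ α, contactGraph.overlap T α ∪
      (· + contactGraph.offset α) '' contactGraph.overlap T α) ∪ {0, -φ} := by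
  have hφ := one_lt_goldenRatio
  intro x hx
  have hxi : x ∈ T i := (hT.isCompact i).isClosed.frontier_subset hx
  cases i
  · obtain ⟨hx₁, -⟩ := rauzyGraph.subset_hull hT .a hxi
    refine .inl (mem_iUnion.2 ?_)
    obtain h | (h | h) | h | h :=
      rauzyGraph.sub_mem_or_add_mem_of_mem_frontier hT (i := .a) (j := .b) nofun hx
    · exact ⟨.ab, .inl (mem_overlap_ab.2 ⟨hxi, h⟩)⟩
    · exact ⟨.aaAddPhi, .inr ⟨x - φ, mem_overlap_aaAddPhi.2 ⟨h, by simpa⟩, sub_add_cancel x φ⟩⟩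
    · exact ⟨.abSubPhi, .inl (mem_overlap_abSubPhi.2 ⟨hxi, h⟩)⟩
    · exact ⟨.aaAddPhi, .inl (mem_overlap_aaAddPhi.2 ⟨hxi, h⟩)⟩
    · linarith [(rauzyGraph.subset_hull hT .b h).2]
  · obtain ⟨hx₁, hx₂⟩ := rauzyGraph.subset_hull hT .b hxi
    obtain h | (h | h) | h | h :=
      rauzyGraph.sub_mem_or_add_mem_of_mem_frontier hT (i := .b) (j := .a) nofun hx
    · exact .inl (mem_iUnion.2 ⟨.ab, .inl (mem_overlap_ab.2 ⟨h, hxi⟩)⟩)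
    · linarith [(rauzyGraph.subset_hull hT .a h).1]
    · exact .inr (.inl (by linarith [(rauzyGraph.subset_hull hT .b h).1]))
    · exact .inl (mem_iUnion.2
        ⟨.abSubPhi, .inr ⟨x + φ, mem_overlap_abSubPhi.2 ⟨h, by simpa⟩, add_neg_cancel_right x φ⟩⟩)
    · exact .inr (.inr (mem_singleton_iff.2 (by linarith [(rauzyGraph.subset_hull hT .b h).2])))

theorem dimH_frontier_le (hT : rauzyGraph.IsAttractor T) (i : Letter_s11) :
    dimH (frontier (T i)) ≤ ENNReal.ofReal (log (1 + √2) / (2 * log φ)) := by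
  refine (dimH_mono (frontier_subset hT i)).trans ?_
  rw [dimH_union, dimH_iUnion, dimH_countable (toFinite _).countable]
  refine sup_le (iSup_le fun α ↦ ?_) zero_le
  rw [dimH_union, (isometry_add_right _).dimH_image, sup_idem, dimH_overlap hT]

theorem overlap_subset_frontier (hT : rauzyGraph.IsAttractor T) (i : Letter_s11) :
    contactGraph.overlap T .ab ⊆ frontier (T i) := by
  have hnull := volume_overlap hT .ab
  intro x hx
  obtain ⟨hxa, hxb⟩ := mem_overlap_ab.1 hx
  have hsupp {i} := hT.subset_support (rauzyGraph.volume_ne_zero hT) i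
  have hnull : volume (T .a ∩ T .b) = 0 := measure_mono_null (fun _ ↦ mem_overlap_ab.2) hnull
  cases i
  · exact mem_frontier_of_mem_support_restrict (t := 0) hxa (by simpa using hsupp hxb) (by simpa)
  · exact mem_frontier_of_mem_support_restrict (t := 0) hxb (by simpa using hsupp hxa)
      (by simpa [inter_comm])

theorem overlap_subset_frontier_union (hT : rauzyGraph.IsAttractor T) :
    contactGraph.overlap T .aaAddPhi ⊆ frontier (T .a ∪ T .b) := by
  intro x hx
  obtain ⟨hxa, hxφ⟩ := mem_overlap_aaAddPhi.1 hx
  refine mem_frontier_of_mem_support_restrict (.inl hxa)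
    (hT.subset_support (rauzyGraph.volume_ne_zero hT) .a hxφ) ?_
  rw [union_inter_distrib_right, measure_union_null_iff]
  refine ⟨volume_overlap hT .aaAddPhi, ?_⟩
  rw [← measure_preimage_add_right volume (-φ)]
  refine measure_mono_null (fun y hy ↦ ?_) (volume_overlap hT .abSubPhi)
  exact mem_overlap_abSubPhi.2 ⟨by simpa using hy.2, hy.1⟩

end contactGraph

namespace rauzyGraph

variable {T : Letter_s11 → Set ℝ}

theorem dimH_frontier (hT : rauzyGraph.IsAttractor T) (i : Letter_s11) :
    dimH (frontier (T i)) = ENNReal.ofReal (log (1 + √2) / (2 * log φ)) :=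
  (contactGraph.dimH_frontier_le hT i).antisymm <|
    contactGraph.dimH_overlap hT .ab ▸ dimH_mono (contactGraph.overlap_subset_frontier hT i)

theorem dimH_frontier_union (hT : rauzyGraph.IsAttractor T) :
    dimH (frontier (T .a ∪ T .b)) = ENNReal.ofReal (log (1 + √2) / (2 * log φ)) := by
  refine le_antisymm ?_ (contactGraph.dimH_overlap hT .aaAddPhi ▸
    dimH_mono (contactGraph.overlap_subset_frontier_union hT))
  refine (dimH_mono ((frontier_union_subset _ _).trans
    (union_subset_union inter_subset_left inter_subset_right))).trans ?_
  rw [dimH_union, dimH_frontier hT, dimH_frontier hT, sup_idem]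

end rauzyGraph

/-- The Hausdorff dimension of the boundary of the window $W = W_a ∪ W_b$ of
ρ̃ = (a ↦ aab, b ↦ ba) equals $\log(1+\sqrt 2)/(2\log τ)$, and the boundaries
of $W_a$ and $W_b$ have the same Hausdorff dimension. -/
theorem rho_tilde_boundary_dimH (τ : ℝ) (hτ : τ = (1 + Real.sqrt 5) / 2)
    (Wa Wb : Set ℝ) (hWa : Wa.Nonempty) (hWb : Wb.Nonempty)
    (hca : IsCompact Wa) (hcb : IsCompact Wb)
    (h1 : Wa = (fun x : ℝ => (τ ^ 2)⁻¹ * x) '' Wa ∪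
               (fun x : ℝ => (τ ^ 2)⁻¹ * (x - τ)) '' Wa ∪
               (fun x : ℝ => (τ ^ 2)⁻¹ * (x + τ ^ 2)) '' Wb)
    (h2 : Wb = (fun x : ℝ => (τ ^ 2)⁻¹ * (x - 2 * τ)) '' Wa ∪
               (fun x : ℝ => (τ ^ 2)⁻¹ * x) '' Wb) :
    dimH (frontier (Wa ∪ Wb)) =
      ENNReal.ofReal (Real.log (1 + Real.sqrt 2) / (2 * Real.log τ)) ∧
    dimH (frontier Wa) = dimH (frontier (Wa ∪ Wb)) ∧
    dimH (frontier Wb) = dimH (frontier (Wa ∪ Wb)) := by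
  obtain rfl : τ = φ := hτ
  have hT := rauzyGraph.isAttractor_of_eq_image_union hca hcb hWa hWb h1 h2
  have hW : dimH (frontier (Wa ∪ Wb)) = _ := rauzyGraph.dimH_frontier_union hT
  have ha : dimH (frontier Wa) = _ := rauzyGraph.dimH_frontier hT .a
  have hb : dimH (frontier Wb) = _ := rauzyGraph.dimH_frontier hT .b
  exact ⟨hW, ha.trans hW.symm, hb.trans hW.symm⟩
end
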